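/- arXiv:1603.04344 — 4 statements merged into one kernel-verified Lean document; each statement's English description precedes it below -/
import Mathlib

section
/- Let conditions A, B, C and D₁ hold, with v_ε = p_ε^{−1} and ν*_ε = p_ε ν_ε. Then the pair (ν*_ε, κ_ε(·)) converges jointly in distribution as ε → 0 to (ν₀, θ₀(·)), where ν₀ is exponentially distributed with parameter 1, θ₀(t) is a nonnegative Lévy process with E e^{−sθ₀(t)} = e^{−tA(s)}, and ν₀ and θ₀(·) are independent; explicitly, for any t ≥ 0, any 0 = t₀ ≤ t₁ ≤ … ≤ t_n < ∞ and any s₁, …, s_n > 0: E 1(ν*_ε > t) exp{−Σ_{r=1}^n s_r(κ_ε(t_r) − κ_ε(t_{r−1}))} → e^{−t} exp{−Σ_{r=1}^n A(s_r)(t_r − t_{r−1})} as ε → 0. -/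
open MeasureTheory Filter Set
open scoped Topology ENNReal

noncomputable section

/-- Condition B: there exists a ring chain of states `c 0, c 1, …, c N = c 0`
containing all states of the phase space, with
`liminf_{ε→0+} p ε (c (k-1)) (c k) > 0` for `k = 1, …, N`. -/
def CondB {m : ℕ} (p : ℝ → Fin m → Fin m → ℝ) : Prop :=
  ∃ N : ℕ, 0 < N ∧ ∃ c : ℕ → Fin m, c N = c 0 ∧
    (∀ i : Fin m, ∃ k ≤ N, c k = i) ∧
    ∀ k < N, 0 < Filter.liminf (fun ε => p ε (c k) (c (k + 1))) (𝓝[>] (0 : ℝ))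

/-- `π` is a stationary distribution of the transition matrix `p`. -/
def IsStationaryDist {m : ℕ} (p : Fin m → Fin m → ℝ) (π : Fin m → ℝ) : Prop :=
  (∀ i, 0 ≤ π i) ∧ (∑ i, π i = 1) ∧ ∀ j, π j = ∑ i, π i * p i j

/-- `p_{ε,i} = P_i(ζ_{ε,1} = 1)`, the probability of occurrence of the rare event during
one transition step, starting from state `i`. -/
def rareP {m : ℕ} {Ω : Type} [MeasurableSpace Ω]
    (Pstart : ℝ → Fin m → Measure Ω) (ζ : ℝ → ℕ → Ω → Bool) (ε : ℝ) (i : Fin m) : ℝ :=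
  (Pstart ε i {ω | ζ ε 1 ω = true}).toReal

/-- `p_ε = Σ_i π_{ε,i} p_{ε,i}`, the stationary average of the rare-event probabilities. -/
def avgRare {m : ℕ} {Ω : Type} [MeasurableSpace Ω]
    (Pstart : ℝ → Fin m → Measure Ω) (ζ : ℝ → ℕ → Ω → Bool) (π : ℝ → Fin m → ℝ)
    (ε : ℝ) : ℝ :=
  ∑ i, π ε i * rareP Pstart ζ ε i

/-- `φ_ε(s) = Σ_i π_{ε,i} E_i e^{−sκ_{ε,1}}`, the stationary average of the Laplace
transforms of the sojourn times. -/
def lapPhi {m : ℕ} {Ω : Type} [MeasurableSpace Ω]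
    (Pstart : ℝ → Fin m → Measure Ω) (κ : ℝ → ℕ → Ω → ℝ) (π : ℝ → Fin m → ℝ)
    (ε s : ℝ) : ℝ :=
  ∑ i, π ε i * ∫ ω, Real.exp (-(s * κ ε 1 ω)) ∂(Pstart ε i)

/-- `ν_ε = min{n ≥ 1 : ζ_{ε,n} = 1}`, the number of steps until the first rare event. -/
def nuRE {Ω : Type} (ζ : ℝ → ℕ → Ω → Bool) (ε : ℝ) (ω : Ω) : ℕ :=
  sInf {n : ℕ | 1 ≤ n ∧ ζ ε n ω = true}

/-- `ξ_ε = Σ_{n=1}^{ν_ε} κ_{ε,n}`, the first-rare-event time. -/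
def xiRE {Ω : Type} (κ : ℝ → ℕ → Ω → ℝ) (ζ : ℝ → ℕ → Ω → Bool) (ε : ℝ) (ω : Ω) : ℝ :=
  ∑ n ∈ Finset.Icc 1 (nuRE ζ ε ω), κ ε n ω

/-- The step-sum reward process `κ_ε(t) = Σ_{n=1}^{[t v_ε]} κ_{ε,n}` with `v_ε = p_ε⁻¹`. -/
def stepSumRE {m : ℕ} {Ω : Type} [MeasurableSpace Ω]
    (Pstart : ℝ → Fin m → Measure Ω) (κ : ℝ → ℕ → Ω → ℝ) (ζ : ℝ → ℕ → Ω → Bool)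
    (π : ℝ → Fin m → ℝ) (ε t : ℝ) (ω : Ω) : ℝ :=
  ∑ n ∈ Finset.Icc 1 (Nat.floor (t * (avgRare Pstart ζ π ε)⁻¹)), κ ε n ω

/-- A ring chain with edge weights at least `b` lets us travel from any state. -/
theorem ring_walk {m : ℕ} (p : Fin m → Fin m → ℝ) (N : ℕ) (hN : 0 < N) (c : ℕ → Fin m)
    (hc : c N = c 0) (hcov : ∀ i, ∃ k ≤ N, c k = i) (b : ℝ)
    (hb : ∀ k < N, b ≤ p (c k) (c (k + 1))) (i : Fin m) :
    ∃ d : ℕ → Fin m, d 0 = i ∧ (∀ k, b ≤ p (d k) (d (k + 1))) ∧ ∀ j, ∃ k ≤ N, d k = j := by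
  have hcov' : ∀ i, ∃ k < N, c k = i := by
    intro i
    obtain ⟨k, hk, rfl⟩ := hcov i
    rcases hk.lt_or_eq with h | h
    · exact ⟨k, h, rfl⟩
    · exact ⟨0, hN, by rw [h, hc]⟩
  obtain ⟨k0, hk0, rfl⟩ := hcov' i
  refine ⟨fun k => c ((k0 + k) % N), ?_, ?_, ?_⟩
  · simp [Nat.mod_eq_of_lt hk0]
  · intro k
    have h1 := Nat.mod_lt (k0 + k) hN
    have h2 := hb _ h1
    have h3 : c ((k0 + k) % N + 1) = c ((k0 + (k + 1)) % N) := by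
      rw [← add_assoc, Nat.add_mod (k0 + k) 1 N]
      by_cases hlt : (k0 + k) % N + 1 < N
      · have : 1 < N := by omega
        rw [Nat.mod_eq_of_lt this, Nat.mod_eq_of_lt hlt]
      · have h4 : (k0 + k) % N + 1 = N := by omega
        rw [Nat.add_mod_mod, h4, Nat.mod_self, hc]
    rw [h3] at h2
    exact h2
  · intro j
    obtain ⟨k, hk, rfl⟩ := hcov' j
    by_cases h : k0 ≤ k
    · refine ⟨k - k0, by omega, ?_⟩
      have : k0 + (k - k0) = k := by omega
      simp [this, Nat.mod_eq_of_lt hk]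
    · refine ⟨N + k - k0, by omega, ?_⟩
      have : k0 + (N + k - k0) = N + k := by omega
      simp [this, Nat.mod_eq_of_lt hk]

theorem pi_lower {m : ℕ} (hm : 0 < m) (p : Fin m → Fin m → ℝ) (hp0 : ∀ i j, 0 ≤ p i j)
    (N : ℕ) (hN : 0 < N) (c : ℕ → Fin m)
    (hc : c N = c 0) (hcov : ∀ i, ∃ k ≤ N, c k = i) (b : ℝ) (hb0 : 0 < b) (hb1 : b ≤ 1)
    (hb : ∀ k < N, b ≤ p (c k) (c (k + 1))) (π : Fin m → ℝ) (hπ : IsStationaryDist p π)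
    (i : Fin m) : b ^ N / m ≤ π i := by
  obtain ⟨h0, h1, h2⟩ := hπ
  have hmR : (0:ℝ) < m := by exact_mod_cast hm
  have : ∃ i0, 1 / (m:ℝ) ≤ π i0 := by
    by_contra! hcon
    have : ∑ i, π i < ∑ i : Fin m, 1 / (m:ℝ) := by
      apply Finset.sum_lt_sum_of_nonempty
      · exact ⟨⟨0, hm⟩, Finset.mem_univ _⟩
      · intro i _; exact hcon i
    rw [h1] at this
    simp [hmR.ne'] at this
  obtain ⟨i0, hi0⟩ := this
  obtain ⟨d, hd0, hd1, hd2⟩ := ring_walk p N hN c hc hcov b hb i0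
  have key : ∀ k, b ^ k / m ≤ π (d k) := by
    intro k
    induction k with
    | zero => simpa [hd0] using hi0
    | succ k ih =>
      rw [h2 (d (k+1))]
      calc b ^ (k+1) / m = (b ^ k / m) * b := by ring
        _ ≤ π (d k) * p (d k) (d (k+1)) := by
            apply mul_le_mul ih (hd1 k) hb0.le (h0 _)
        _ ≤ _ := Finset.single_le_sum (f := fun i => π i * p i (d (k+1)))
            (fun i _ => mul_nonneg (h0 i) (hp0 _ _)) (Finset.mem_univ (d k))
  obtain ⟨k, hk, rfl⟩ := hd2 i
  refine le_trans ?_ (key k)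
  gcongr ?_ / _
  exact pow_le_pow_of_le_one hb0.le hb1 hk

theorem poisson_bound {m : ℕ} (hm : 0 < m) (p : Fin m → Fin m → ℝ) (hp0 : ∀ i j, 0 ≤ p i j)
    (hp1 : ∀ i, ∑ j, p i j = 1)
    (N : ℕ) (hN : 0 < N) (c : ℕ → Fin m)
    (hc : c N = c 0) (hcov : ∀ i, ∃ k ≤ N, c k = i) (b : ℝ) (hb0 : 0 < b) (hb1 : b ≤ 1)
    (hb : ∀ k < N, b ≤ p (c k) (c (k + 1))) (h f : Fin m → ℝ) (F : ℝ) (hF : 0 ≤ F)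
    (hf : ∀ i, |f i| ≤ F) (hh : ∀ i, h i - ∑ j, p i j * h j = f i) :
    ∃ i0, ∀ i, 0 ≤ h i - h i0 ∧ h i - h i0 ≤ N * F / b ^ N := by
  have : Nonempty (Fin m) := ⟨⟨0, hm⟩⟩
  obtain ⟨i0, hi0⟩ := Finite.exists_min h
  refine ⟨i0, fun i => ⟨by linarith [hi0 i], ?_⟩⟩
  obtain ⟨d, hd0, hd1, hd2⟩ := ring_walk p N hN c hc hcov b hb i0
  have step : ∀ i j, p i j * (h j - h i0) ≤ (h i - h i0) + F := by
    intro i j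
    have e : ∑ j, p i j * (h j - h i0) = (h i - h i0) - f i := by
      simp only [mul_sub, Finset.sum_sub_distrib, ← Finset.sum_mul, hp1]
      linarith [hh i]
    have := Finset.single_le_sum (f := fun j => p i j * (h j - h i0))
            (fun i _ => mul_nonneg (hp0 _ _) (by linarith [hi0 i])) (Finset.mem_univ j)
    have h3 := (abs_le.1 (hf i)).1
    linarith
  have key : ∀ k : ℕ, h (d k) - h i0 ≤ k * F / b ^ k := by
    intro k
    induction k with
    | zero => simp [hd0]
    | succ k ih =>
      have s := step (d k) (d (k+1))
      have s2 : b * (h (d (k+1)) - h i0) ≤ p (d k) (d (k+1)) * (h (d (k+1)) - h i0) :=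
        mul_le_mul_of_nonneg_right (hd1 k) (by linarith [hi0 (d (k+1))])
      have hbk : (0:ℝ) < b ^ k := by positivity
      have hF2 : F ≤ F / b ^ k := by
        rw [le_div_iff₀ hbk]
        exact mul_le_of_le_one_right hF (pow_le_one₀ hb0.le hb1)
      have : b * (h (d (k+1)) - h i0) ≤ (k+1) * F / b ^ k := by
        have : (k+1) * F / b ^ k = k * F / b ^ k + F / b ^ k := by ring
        linarith
      rw [pow_succ, le_div_iff₀ (by positivity)]
      rw [le_div_iff₀ hbk] at this
      push_cast
      linarith
  obtain ⟨k, hk, rfl⟩ := hd2 i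
  refine le_trans (key k) ?_
  have h1 : b ^ N ≤ b ^ k := pow_le_pow_of_le_one hb0.le hb1 hk
  have h2 : (0:ℝ) < b ^ N := by positivity
  have h3 : (k:ℝ) ≤ N := by exact_mod_cast hk
  gcongr

theorem poisson_exists {m : ℕ} (hm : 0 < m) (p : Fin m → Fin m → ℝ) (hp0 : ∀ i j, 0 ≤ p i j)
    (hp1 : ∀ i, ∑ j, p i j = 1)
    (N : ℕ) (hN : 0 < N) (c : ℕ → Fin m)
    (hc : c N = c 0) (hcov : ∀ i, ∃ k ≤ N, c k = i) (b : ℝ) (hb0 : 0 < b) (hb1 : b ≤ 1)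
    (hb : ∀ k < N, b ≤ p (c k) (c (k + 1))) (π : Fin m → ℝ) (hπ : IsStationaryDist p π)
    (g : Fin m → ℝ) (G : ℝ) (hg0 : ∀ i, 0 ≤ g i) (hgG : ∀ i, g i ≤ G) :
    ∃ h : Fin m → ℝ, (∀ i, ∑ j, p i j * h j = h i + g i - ∑ j, π j * g j) ∧
      ∀ i, |h i| ≤ N * G / b ^ N := by
  obtain ⟨h0, h1, h2⟩ := hπ
  have hG : 0 ≤ G := (hg0 ⟨0, hm⟩).trans (hgG _)
  -- π (p x) = π x
  have hst : ∀ x : Fin m → ℝ, ∑ i, π i * ∑ j, p i j * x j = ∑ j, π j * x j := by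
    intro x
    simp only [Finset.mul_sum]
    rw [Finset.sum_comm]
    refine Finset.sum_congr rfl fun j _ => ?_
    conv_rhs => rw [h2 j, Finset.sum_mul]
    exact Finset.sum_congr rfl fun i _ => by ring
  let T : (Fin m → ℝ) →ₗ[ℝ] (Fin m → ℝ) :=
    { toFun := fun x i => x i - ∑ j, p i j * x j + ∑ j, π j * x j
      map_add' := by
        intro x y; funext i
        simp only [Pi.add_apply, mul_add, Finset.sum_add_distrib]; ring
      map_smul' := by
        intro a x; funext i
        simp only [Pi.smul_apply, smul_eq_mul, RingHom.id_apply, mul_add, mul_sub, Finset.mul_sum]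
        simp only [mul_left_comm] }
  have hT : ∀ x i, T x i = x i - ∑ j, p i j * x j + ∑ j, π j * x j := fun x i => rfl
  have hπT : ∀ x, ∑ i, π i * T x i = ∑ j, π j * x j := by
    intro x
    simp only [hT, mul_add, mul_sub, Finset.sum_add_distrib, Finset.sum_sub_distrib, hst,
      ← Finset.sum_mul, h1]
    ring
  have hinj : Function.Injective T := by
    rw [injective_iff_map_eq_zero]
    intro x hx
    have e1 : ∑ j, π j * x j = 0 := by rw [← hπT]; simp [hx]
    have e2 : ∀ i, x i - ∑ j, p i j * x j = (0 : Fin m → ℝ) i := by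
      intro i
      have := congrFun hx i
      rw [hT, e1] at this
      simpa using this
    obtain ⟨i0, hi0⟩ := poisson_bound hm p hp0 hp1 N hN c hc hcov b hb0 hb1 hb x 0 0 le_rfl
      (by simp) e2
    have e3 : ∀ i, x i = x i0 := by
      intro i
      have := hi0 i
      simp at this
      linarith
    have e4 : x i0 = 0 := by
      have : ∑ j, π j * x j = x i0 := by
        rw [Finset.sum_congr rfl (fun j _ => by rw [e3 j]), ← Finset.sum_mul, h1, one_mul]
      linarith
    funext i
    rw [e3 i, e4]; rfl
  obtain ⟨x, hx⟩ := (LinearMap.injective_iff_surjective.1 hinj)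
    (fun i => (∑ j, π j * g j) - g i)
  have e1 : ∑ j, π j * x j = 0 := by
    rw [← hπT, hx]
    simp only [mul_sub, Finset.sum_sub_distrib, ← Finset.sum_mul, h1]
    ring
  have e2 : ∀ i, x i - ∑ j, p i j * x j = (∑ j, π j * g j) - g i := by
    intro i
    have := congrFun hx i
    rw [hT, e1] at this
    simpa using this
  have hα0 : 0 ≤ ∑ j, π j * g j := Finset.sum_nonneg fun j _ => mul_nonneg (h0 j) (hg0 j)
  have hα1 : ∑ j, π j * g j ≤ G := by
    calc ∑ j, π j * g j ≤ ∑ j, π j * G :=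
          Finset.sum_le_sum fun j _ => mul_le_mul_of_nonneg_left (hgG j) (h0 j)
      _ = G := by rw [← Finset.sum_mul, h1, one_mul]
  obtain ⟨i0, hi0⟩ := poisson_bound hm p hp0 hp1 N hN c hc hcov b hb0 hb1 hb x _ G hG
      (by
        intro i
        rw [abs_le]
        constructor <;> linarith [hg0 i, hgG i]) e2
  refine ⟨fun i => x i - x i0, ?_, ?_⟩
  · intro i
    simp only [mul_sub, Finset.sum_sub_distrib, ← Finset.sum_mul, hp1]
    linarith [e2 i]
  · intro i
    rw [abs_of_nonneg (hi0 i).1]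
    exact (hi0 i).2

/-- Iterated action of matrices `M k, M (k+1), …` (`l` of them) on the unit vector. -/
def iterVec {m : ℕ} (M : ℕ → Fin m → Fin m → ℝ) : ℕ → ℕ → Fin m → ℝ
  | 0, _, _ => 1
  | l + 1, k, i => ∑ j, M k i j * iterVec M l (k + 1) j

theorem iter_bound {m : ℕ} (M : ℕ → Fin m → Fin m → ℝ) (w : ℕ → Fin m → ℝ) (lam δ : ℕ → ℝ)
    (e D : ℝ)
    (hM0 : ∀ k i j, 0 ≤ M k i j) (hM1 : ∀ k i, ∑ j, M k i j ≤ 1)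
    (hl0 : ∀ k, 0 ≤ lam k) (hl1 : ∀ k, lam k ≤ 1)
    (hw : ∀ k i, |∑ j, M k i j * w k j - lam k * w k i| ≤ e)
    (hD : ∀ k i, |1 - w k i| ≤ D)
    (hδ : ∀ k i, |w (k + 1) i - w k i| ≤ δ k) (l : ℕ) :
    ∀ k i, |iterVec M l k i - (∏ x ∈ Finset.range l, lam (k + x)) * w k i|
      ≤ D + l * e + ∑ x ∈ Finset.range l, δ (k + x) := by
  induction l with
  | zero => intro k i; simpa [iterVec] using hD k i
  | succ l ih =>
    intro k i
    set cc := ∏ x ∈ Finset.range l, lam (k + 1 + x) with hcc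
    have hcc0 : 0 ≤ cc := Finset.prod_nonneg fun _ _ => hl0 _
    have hcc1 : cc ≤ 1 := Finset.prod_le_one (fun _ _ => hl0 _) (fun _ _ => hl1 _)
    set B := D + l * e + ∑ x ∈ Finset.range l, δ (k + 1 + x) with hB
    have hprod : ∏ x ∈ Finset.range (l+1), lam (k + x) = cc * lam k := by
      rw [Finset.prod_range_succ', hcc]
      simp [add_assoc, add_comm 1]
    have hsum : ∑ x ∈ Finset.range (l+1), δ (k + x)
        = ∑ x ∈ Finset.range l, δ (k + 1 + x) + δ k := by
      rw [Finset.sum_range_succ']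
      simp [add_assoc, add_comm 1]
    rw [hprod, hsum]
    have hdec : iterVec M (l+1) k i - cc * lam k * w k i
        = (∑ j, M k i j * ((iterVec M l (k+1) j - cc * w (k+1) j)
            + cc * (w (k+1) j - w k j)))
          + cc * (∑ j, M k i j * w k j - lam k * w k i) := by
      simp only [iterVec, mul_add, mul_sub, Finset.sum_add_distrib, Finset.sum_sub_distrib,
        Finset.mul_sum]
      simp only [mul_left_comm cc]
      ring
    rw [hdec]
    have hδ0 : 0 ≤ B + δ k := by
      have h1 := (abs_nonneg _).trans (ih (k+1) i)
      have h2 := (abs_nonneg _).trans (hδ k i)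
      linarith
    have b1 : |∑ j, M k i j * ((iterVec M l (k+1) j - cc * w (k+1) j)
            + cc * (w (k+1) j - w k j))| ≤ B + δ k := by
      calc _ ≤ ∑ j, |M k i j * ((iterVec M l (k+1) j - cc * w (k+1) j)
            + cc * (w (k+1) j - w k j))| := Finset.abs_sum_le_sum_abs _ _
        _ ≤ ∑ j, M k i j * (B + δ k) := by
            refine Finset.sum_le_sum fun j _ => ?_
            rw [abs_mul, abs_of_nonneg (hM0 k i j)]
            refine mul_le_mul_of_nonneg_left ?_ (hM0 k i j)
            refine (abs_add_le _ _).trans (add_le_add (ih (k+1) j) ?_)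
            rw [abs_mul, abs_of_nonneg hcc0]
            calc cc * |w (k+1) j - w k j| ≤ 1 * |w (k+1) j - w k j| :=
                  mul_le_mul_of_nonneg_right hcc1 (abs_nonneg _)
              _ ≤ δ k := by rw [one_mul]; exact hδ k j
        _ ≤ B + δ k := by
            rw [← Finset.sum_mul]
            exact mul_le_of_le_one_left hδ0 (hM1 k i)
    have b2 : |cc * (∑ j, M k i j * w k j - lam k * w k i)| ≤ e := by
      rw [abs_mul, abs_of_nonneg hcc0]
      calc _ ≤ 1 * |∑ j, M k i j * w k j - lam k * w k i| :=
            mul_le_mul_of_nonneg_right hcc1 (abs_nonneg _)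
        _ ≤ e := by rw [one_mul]; exact hw k i
    refine (abs_add_le _ _).trans ((add_le_add b1 b2).trans (le_of_eq ?_))
    rw [hB]; push_cast; ring

/-- Indicator of the integer interval `(a, b]`. -/
def chi (a b k : ℕ) : ℝ := if a < k ∧ k ≤ b then 1 else 0

theorem chi_nonneg (a b k : ℕ) : 0 ≤ chi a b k := by
  unfold chi; split_ifs <;> norm_num

theorem chi_le_one (a b k : ℕ) : chi a b k ≤ 1 := by
  unfold chi; split_ifs <;> norm_num

theorem chi_var (a b k : ℕ) :
    |chi a b (k + 1) - chi a b k| ≤ (if k = a then 1 else 0) + (if k = b then 1 else 0) := by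
  unfold chi
  split_ifs <;> first | omega | norm_num

theorem chi_var_sum (a b l : ℕ) :
    ∑ y ∈ Finset.range l, |chi a b (1 + y + 1) - chi a b (1 + y)| ≤ 2 := by
  have h1 : ∀ c : ℕ, ∑ y ∈ Finset.range l, (if 1 + y = c then (1:ℝ) else 0) ≤ 1 := by
    intro c
    rw [Finset.sum_ite]
    simp only [Finset.sum_const, nsmul_eq_mul, mul_one, smul_zero, add_zero]
    have : (Finset.filter (fun y => 1 + y = c) (Finset.range l)).card ≤ 1 := by
      rw [Finset.card_le_one]
      intro y hy z hz
      simp at hy hz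
      omega
    exact_mod_cast this
  calc _ ≤ ∑ y ∈ Finset.range l, ((if 1 + y = a then (1:ℝ) else 0)
        + (if 1 + y = b then 1 else 0)) := Finset.sum_le_sum fun y _ => chi_var a b (1 + y)
    _ ≤ 2 := by
      rw [Finset.sum_add_distrib]
      linarith [h1 a, h1 b]

theorem chi_sum (a b l : ℕ) (hab : a ≤ b) (hbl : b ≤ l) :
    ∑ y ∈ Finset.range l, chi a b (1 + y) = (b:ℝ) - a := by
  unfold chi
  rw [Finset.sum_ite]
  simp only [Finset.sum_const, nsmul_eq_mul, mul_one, smul_zero, add_zero]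
  have : Finset.filter (fun y => a < 1 + y ∧ 1 + y ≤ b) (Finset.range l) = Finset.Ico a b := by
    ext y; simp; omega
  rw [this, Nat.card_Ico, Nat.cast_sub hab]

theorem exp_quad (y : ℝ) (hy : 0 ≤ y) : |1 - y - Real.exp (-y)| ≤ y ^ 2 := by
  have h1 := Real.add_one_le_exp (-y)
  have h2 := Real.add_one_le_exp y
  have h3 : Real.exp (-y) * Real.exp y = 1 := by rw [← Real.exp_add]; simp
  rw [abs_le]
  refine ⟨?_, by nlinarith⟩
  have h4 : Real.exp (-y) * (1 + y) ≤ 1 := by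
    rw [← h3]
    exact mul_le_mul_of_nonneg_left (by linarith) (Real.exp_pos _).le
  have : Real.exp (-y) ≤ 1 - y + y ^ 2 := by
    have h5 : (1 - y + y^2) * (1 + y) = 1 + y ^ 3 := by ring
    have h6 : 0 ≤ y ^ 3 := by positivity
    by_contra! hcon
    nlinarith
  linarith

theorem det_bound {m : ℕ} (M : ℕ → Fin m → Fin m → ℝ) (P : Fin m → Fin m → ℝ)
    (hP1 : ∀ i, ∑ j, P i j = 1)
    (hM0 : ∀ k i j, 0 ≤ M k i j) (hMP : ∀ k i j, M k i j ≤ P i j)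
    (R : ℕ) (a b : ℕ → ℕ) (g h : ℕ → Fin m → ℝ) (α : ℕ → ℝ) (G C x ρ : ℝ)
    (hg1 : ∀ r < R, ∀ i, g r i ≤ G)
    (hα0 : ∀ r < R, 0 ≤ α r) (hα1 : ∀ r < R, α r ≤ G)
    (hG : 0 ≤ G) (hC : 0 ≤ C)
    (hh : ∀ r < R, ∀ i, |h r i| ≤ C)
    (hpo : ∀ r < R, ∀ i, ∑ j, P i j * h r j = h r i + g r i - α r)
    (hx : 0 ≤ x)
    (hS0 : ∀ k i, 0 ≤ ∑ j, M k i j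
      - (1 - x * ∑ r ∈ Finset.range R, chi (a r) (b r) k * g r i))
    (hS1 : ∀ k i, ∑ j, M k i j
      - (1 - x * ∑ r ∈ Finset.range R, chi (a r) (b r) k * g r i) ≤ x * ρ)
    (l : ℕ) (hab : ∀ r < R, a r ≤ b r) (hbl : ∀ r < R, b r ≤ l) (i : Fin m) :
    |iterVec M l 1 i - Real.exp (-(x * ∑ r ∈ Finset.range R, α r * ((b r : ℝ) - a r)))|
      ≤ 4 * x * R * C + (l * x) * (ρ + x * (2 * R ^ 2 * C * G + R ^ 2 * G ^ 2)) := by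
  have hsumle : ∀ (k : ℕ) (f : ℕ → ℝ) (B : ℝ), 0 ≤ B → (∀ r < R, |f r| ≤ B) →
      |∑ r ∈ Finset.range R, chi (a r) (b r) k * f r| ≤ R * B := by
    intro k f B hB hf
    calc _ ≤ ∑ r ∈ Finset.range R, |chi (a r) (b r) k * f r| := Finset.abs_sum_le_sum_abs _ _
      _ ≤ ∑ r ∈ Finset.range R, B := by
          refine Finset.sum_le_sum fun r hr => ?_
          rw [abs_mul, abs_of_nonneg (chi_nonneg _ _ _)]
          calc _ ≤ 1 * |f r| := mul_le_mul_of_nonneg_right (chi_le_one _ _ _) (abs_nonneg _)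
            _ ≤ B := by rw [one_mul]; exact hf r (Finset.mem_range.1 hr)
      _ = R * B := by simp
  set H : ℕ → Fin m → ℝ := fun k i => ∑ r ∈ Finset.range R, chi (a r) (b r) k * h r i with hH
  set A : ℕ → ℝ := fun k => ∑ r ∈ Finset.range R, chi (a r) (b r) k * α r with hA
  set w : ℕ → Fin m → ℝ := fun k i => 1 + x * H k i with hw
  have hRC : 0 ≤ R * C := by positivity
  have hHb : ∀ k i, |H k i| ≤ R * C := fun k i => hsumle k _ C hC (fun r hr => hh r hr i)
  have hA0 : ∀ k, 0 ≤ A k := fun k => Finset.sum_nonneg fun r hr =>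
    mul_nonneg (chi_nonneg _ _ _) (hα0 r (Finset.mem_range.1 hr))
  have hAb : ∀ k, A k ≤ R * G := fun k => (le_abs_self _).trans
    (hsumle k _ G hG (fun r hr => by rw [abs_of_nonneg (hα0 r hr)]; exact hα1 r hr))
  have hGk : ∀ k i, ∑ r ∈ Finset.range R, chi (a r) (b r) k * g r i ≤ R * G := by
    intro k i
    calc _ ≤ ∑ r ∈ Finset.range R, G := by
          refine Finset.sum_le_sum fun r hr => ?_
          have h1 := hg1 r (Finset.mem_range.1 hr) i
          have h2 := chi_nonneg (a r) (b r) k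
          have h3 := chi_le_one (a r) (b r) k
          nlinarith
      _ = R * G := by simp
  have hPH : ∀ k i, ∑ j, P i j * H k j
      = H k i + ∑ r ∈ Finset.range R, chi (a r) (b r) k * g r i - A k := by
    intro k i
    simp only [hH, hA, Finset.mul_sum]
    rw [Finset.sum_comm, ← Finset.sum_add_distrib, ← Finset.sum_sub_distrib]
    refine Finset.sum_congr rfl fun r hr => ?_
    have := hpo r (Finset.mem_range.1 hr) i
    rw [← mul_add, ← mul_sub, ← this, Finset.mul_sum]
    exact Finset.sum_congr rfl fun j _ => by ring
  set E := x * ρ + x ^ 2 * (2 * R ^ 2 * C * G + R ^ 2 * G ^ 2) with hE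
  have hwb : ∀ k i, |∑ j, M k i j * w k j - Real.exp (-(x * A k)) * w k i| ≤ E := by
    intro k i
    set S := ∑ j, M k i j with hS
    set gk := ∑ r ∈ Finset.range R, chi (a r) (b r) k * g r i with hgk
    set F := ∑ j, (P i j - M k i j) * H k j with hF
    have e1 : ∑ j, M k i j * w k j = S + x * (H k i + gk - A k) - x * F := by
      rw [← hPH, hF]
      simp only [hw, mul_add, mul_one, Finset.sum_add_distrib, sub_mul, Finset.sum_sub_distrib,
        mul_sub, ← hS]
      simp only [mul_left_comm _ x, ← Finset.mul_sum]
      ring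
    have hFb : |F| ≤ (R * C) * (x * (R * G)) := by
      calc |F| ≤ ∑ j, |(P i j - M k i j) * H k j| := Finset.abs_sum_le_sum_abs _ _
        _ ≤ ∑ j, (P i j - M k i j) * (R * C) := by
            refine Finset.sum_le_sum fun j _ => ?_
            rw [abs_mul, abs_of_nonneg (sub_nonneg.2 (hMP k i j))]
            exact mul_le_mul_of_nonneg_left (hHb k j) (sub_nonneg.2 (hMP k i j))
        _ = (1 - S) * (R * C) := by
            rw [← Finset.sum_mul, Finset.sum_sub_distrib, hP1]
        _ ≤ (x * (R * G)) * (R * C) := by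
            refine mul_le_mul_of_nonneg_right ?_ hRC
            have := hS0 k i
            have h2 := mul_le_mul_of_nonneg_left (hGk k i) hx
            linarith
        _ = _ := by ring
    have hxA : 0 ≤ x * A k := mul_nonneg hx (hA0 k)
    have hxA2 : x * A k ≤ x * (R * G) := mul_le_mul_of_nonneg_left (hAb k) hx
    have t1 : |S - (1 - x * gk)| ≤ x * ρ := by
      rw [abs_of_nonneg (hS0 k i)]; exact hS1 k i
    have t2 : |x * F| ≤ x * ((R * C) * (x * (R * G))) := by
      rw [abs_mul, abs_of_nonneg hx]; exact mul_le_mul_of_nonneg_left hFb hx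
    have t3 : |1 - x * A k - Real.exp (-(x * A k))| ≤ (x * (R * G)) ^ 2 :=
      (exp_quad _ hxA).trans (pow_le_pow_left₀ hxA hxA2 2)
    have t4 : |x * H k i * (1 - Real.exp (-(x * A k)))| ≤ x * (R * C) * (x * (R * G)) := by
      rw [abs_mul, abs_mul, abs_of_nonneg hx]
      refine mul_le_mul (mul_le_mul_of_nonneg_left (hHb k i) hx) ?_ (abs_nonneg _) (by positivity)
      have u1 : Real.exp (-(x * A k)) ≤ 1 := Real.exp_le_one_iff.2 (by linarith)
      rw [abs_of_nonneg (by linarith)]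
      have u2 := Real.add_one_le_exp (-(x * A k))
      linarith
    have e2 : ∑ j, M k i j * w k j - Real.exp (-(x * A k)) * w k i
        = (S - (1 - x * gk)) - x * F + (1 - x * A k - Real.exp (-(x * A k)))
          + x * H k i * (1 - Real.exp (-(x * A k))) := by
      rw [e1, hw]; ring
    rw [e2]
    have f1 := abs_add_le ((S - (1 - x * gk)) - x * F + (1 - x * A k - Real.exp (-(x * A k))))
      (x * H k i * (1 - Real.exp (-(x * A k))))
    have f2 := abs_add_le ((S - (1 - x * gk)) - x * F) (1 - x * A k - Real.exp (-(x * A k)))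
    have f3 := abs_sub (S - (1 - x * gk)) (x * F)
    have : E = x * ρ + x * ((R * C) * (x * (R * G))) + (x * (R * G)) ^ 2
        + x * (R * C) * (x * (R * G)) := by rw [hE]; ring
    rw [this]
    linarith
  set δ : ℕ → ℝ := fun k => x * ∑ r ∈ Finset.range R,
    |chi (a r) (b r) (k + 1) - chi (a r) (b r) k| * C with hδ
  have hδb : ∀ k i, |w (k + 1) i - w k i| ≤ δ k := by
    intro k i
    have : w (k + 1) i - w k i = x * ∑ r ∈ Finset.range R,
        (chi (a r) (b r) (k + 1) - chi (a r) (b r) k) * h r i := by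
      simp only [hw, hH, sub_mul, Finset.sum_sub_distrib]; ring
    rw [this, abs_mul, abs_of_nonneg hx]
    refine mul_le_mul_of_nonneg_left ?_ hx
    refine (Finset.abs_sum_le_sum_abs _ _).trans (Finset.sum_le_sum fun r hr => ?_)
    rw [abs_mul]
    exact mul_le_mul_of_nonneg_left (hh r (Finset.mem_range.1 hr) i) (abs_nonneg _)
  have hDb : ∀ k i, |1 - w k i| ≤ x * (R * C) := by
    intro k i
    have : 1 - w k i = -(x * H k i) := by rw [hw]; ring
    rw [this, abs_neg, abs_mul, abs_of_nonneg hx]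
    exact mul_le_mul_of_nonneg_left (hHb k i) hx
  have hM1 : ∀ k i, ∑ j, M k i j ≤ 1 := fun k i => by
    rw [← hP1 i]; exact Finset.sum_le_sum fun j _ => hMP k i j
  have main := iter_bound M w (fun k => Real.exp (-(x * A k))) δ E (x * (R * C)) hM0 hM1
    (fun k => (Real.exp_pos _).le)
    (fun k => Real.exp_le_one_iff.2 (by have := mul_nonneg hx (hA0 k); linarith))
    hwb hDb hδb l 1 i
  have hprod : ∏ y ∈ Finset.range l, Real.exp (-(x * A (1 + y)))
      = Real.exp (-(x * ∑ r ∈ Finset.range R, α r * ((b r : ℝ) - a r))) := by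
    rw [← Real.exp_sum, Finset.sum_neg_distrib, ← Finset.mul_sum]
    congr 3
    simp only [hA]
    rw [Finset.sum_comm]
    refine Finset.sum_congr rfl fun r hr => ?_
    have hr' := Finset.mem_range.1 hr
    rw [← chi_sum (a r) (b r) l (hab r hr') (hbl r hr'), Finset.mul_sum]
    exact Finset.sum_congr rfl fun _ _ => mul_comm _ _
  have hδs : ∑ y ∈ Finset.range l, δ (1 + y) ≤ x * (R * (2 * C)) := by
    simp only [hδ]
    rw [← Finset.mul_sum, Finset.sum_comm]
    refine mul_le_mul_of_nonneg_left ?_ hx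
    calc _ ≤ ∑ r ∈ Finset.range R, 2 * C := by
          refine Finset.sum_le_sum fun r _ => ?_
          rw [← Finset.sum_mul]
          exact mul_le_mul_of_nonneg_right (chi_var_sum _ _ _) hC
      _ = _ := by simp
  rw [hprod] at main
  set L := Real.exp (-(x * ∑ r ∈ Finset.range R, α r * ((b r : ℝ) - a r))) with hL
  have hL1 : L ≤ 1 := by
    rw [hL]
    refine Real.exp_le_one_iff.2 ?_
    have : 0 ≤ ∑ r ∈ Finset.range R, α r * ((b r : ℝ) - a r) :=
      Finset.sum_nonneg fun r hr => by
        have hr' := Finset.mem_range.1 hr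
        have : (a r : ℝ) ≤ b r := by exact_mod_cast hab r hr'
        exact mul_nonneg (hα0 r hr') (by linarith)
    have := mul_nonneg hx this
    linarith
  have last : |L * w 1 i - L| ≤ x * (R * C) := by
    have : L * w 1 i - L = -(L * (1 - w 1 i)) := by ring
    rw [this, abs_neg, abs_mul, abs_of_nonneg (Real.exp_pos _).le]
    calc _ ≤ 1 * |1 - w 1 i| := mul_le_mul_of_nonneg_right hL1 (abs_nonneg _)
      _ ≤ _ := by rw [one_mul]; exact hDb 1 i
  have tri := abs_sub_le (iterVec M l 1 i) (L * w 1 i) L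
  calc _ ≤ _ := tri
    _ ≤ x * (R * C) + l * E + x * (R * (2 * C)) + x * (R * C) := by linarith
    _ = _ := by rw [hE]; ring

theorem cyl_prob {m : ℕ} {Ω : Type} [MeasurableSpace Ω]
    (η : ℕ → Ω → Fin m) (κ : ℕ → Ω → ℝ) (ζ : ℕ → Ω → Bool)
    (P : Fin m → Measure Ω) (hprob : ∀ i, IsProbabilityMeasure (P i))
    (hmeas : ∀ n, Measurable (η n) ∧ Measurable (κ n) ∧ Measurable (ζ n))
    (Q : Fin m → Fin m → ℝ → Bool → ℝ)
    (hMRP : ∀ n : ℕ, ∀ I : ℕ → Fin m, ∀ T : ℕ → ℝ, ∀ Z : ℕ → Bool,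
      P (I 0) {ω | ∀ k ≤ n, (η k ω = I k ∧ (1 ≤ k → (κ k ω ≤ T k ∧ ζ k ω = Z k)))}
        = ENNReal.ofReal (∏ k ∈ Finset.Icc 1 n, Q (I (k - 1)) (I k) (T k) (Z k)))
    (n : ℕ) (I : ℕ → Fin m) (T : ℕ → ℝ) (Z : ℕ → Bool) :
    P (I 0) {ω | ∀ k, 1 ≤ k → k ≤ n → (η k ω = I k ∧ κ k ω ≤ T k ∧ ζ k ω = Z k)}
      = ∏ k ∈ Finset.range n,
        P (I k) {ω | η 1 ω = I (k + 1) ∧ κ 1 ω ≤ T (k + 1) ∧ ζ 1 ω = Z (k + 1)} := by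
  have h0 : ∀ i, ∀ᵐ ω ∂(P i), η 0 ω = i := by
    intro i
    have := hMRP 0 (fun _ => i) (fun _ => 0) (fun _ => true)
    have hset : {ω | ∀ k ≤ 0, (η k ω = i ∧ (1 ≤ k → (κ k ω ≤ 0 ∧ ζ k ω = true)))}
        = {ω | η 0 ω = i} := by
      ext ω; simp
    rw [hset] at this
    exact (mem_ae_iff_prob_eq_one
      (measurableSet_eq_fun (hmeas 0).1 measurable_const)).2 (by simpa using this)
  have hcyl : ∀ n (I : ℕ → Fin m),
      P (I 0) {ω | ∀ k, 1 ≤ k → k ≤ n → (η k ω = I k ∧ κ k ω ≤ T k ∧ ζ k ω = Z k)}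
      = ENNReal.ofReal (∏ k ∈ Finset.range n, Q (I k) (I (k + 1)) (T (k + 1)) (Z (k + 1))) := by
    intro n I
    have h1 : ∏ k ∈ Finset.range n, Q (I k) (I (k + 1)) (T (k + 1)) (Z (k + 1))
        = ∏ k ∈ Finset.Icc 1 n, Q (I (k - 1)) (I k) (T k) (Z k) := by
      rw [← Finset.Ico_succ_right_eq_Icc, Finset.prod_Ico_eq_prod_range]
      simp [add_comm 1]
    rw [h1, ← hMRP n I T Z]
    refine measure_congr ?_
    filter_upwards [h0 (I 0)] with ω hω
    refine propext ⟨?_, ?_⟩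
    · intro h k hk
      rcases Nat.eq_zero_or_pos k with rfl | hk0
      · exact ⟨hω, by simp⟩
      · exact ⟨(h k hk0 hk).1, fun _ => (h k hk0 hk).2⟩
    · intro h k hk0 hk
      exact ⟨(h k hk).1, (h k hk).2 hk0⟩
  have hone : ∀ k, P (I k) {ω | η 1 ω = I (k + 1) ∧ κ 1 ω ≤ T (k + 1) ∧ ζ 1 ω = Z (k + 1)}
      = ENNReal.ofReal (Q (I k) (I (k + 1)) (T (k + 1)) (Z (k + 1))) := by
    intro k
    have := hMRP 1 (fun l => I (k + l)) (fun l => T (k + l)) (fun l => Z (k + l))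
    simp only [Finset.Icc_self, Finset.prod_singleton, add_zero, tsub_self] at this
    rw [← this]
    refine measure_congr ?_
    filter_upwards [h0 (I k)] with ω hω
    refine propext ⟨?_, ?_⟩
    · intro h l hl
      rcases Nat.le_one_iff_eq_zero_or_eq_one.1 hl with rfl | rfl
      · exact ⟨hω, by simp⟩
      · exact ⟨h.1, fun _ => h.2⟩
    · intro h
      exact ⟨(h 1 le_rfl).1, (h 1 le_rfl).2 le_rfl⟩
  simp only [hone]
  induction n with
  | zero => rw [hcyl]; simp
  | succ n ih =>
    rw [Finset.prod_range_succ, ← ih]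
    by_cases hz : P (I 0)
        {ω | ∀ k, 1 ≤ k → k ≤ n → (η k ω = I k ∧ κ k ω ≤ T k ∧ ζ k ω = Z k)} = 0
    · rw [hz, zero_mul]
      refine measure_mono_null ?_ hz
      intro ω h k hk0 hk
      exact h k hk0 (by omega)
    · rw [hcyl] at hz ⊢
      have hpos : 0 ≤ ∏ k ∈ Finset.range n, Q (I k) (I (k + 1)) (T (k + 1)) (Z (k + 1)) := by
        by_contra! hneg
        exact hz (ENNReal.ofReal_of_nonpos hneg.le)
      rw [hcyl, Finset.prod_range_succ, ENNReal.ofReal_mul hpos]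

theorem path_int {m : ℕ} {Ω : Type} [MeasurableSpace Ω]
    (η : ℕ → Ω → Fin m) (κ : ℕ → Ω → ℝ) (ζ : ℕ → Ω → Bool)
    (P : Fin m → Measure Ω) (hprob : ∀ i, IsProbabilityMeasure (P i))
    (hmeas : ∀ n, Measurable (η n) ∧ Measurable (κ n) ∧ Measurable (ζ n))
    (n : ℕ) (I : ℕ → Fin m)
    (hcyl : ∀ (T : ℕ → ℝ) (Z : ℕ → Bool),
      P (I 0) {ω | ∀ k, 1 ≤ k → k ≤ n → (η k ω = I k ∧ κ k ω ≤ T k ∧ ζ k ω = Z k)}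
      = ∏ k ∈ Finset.range n,
        P (I k) {ω | η 1 ω = I (k + 1) ∧ κ 1 ω ≤ T (k + 1) ∧ ζ 1 ω = Z (k + 1)})
    (f : ℕ → ℝ × Bool → ℝ) (hf : ∀ k, Measurable (f k)) :
    ∫ ω in {ω | ∀ k, 1 ≤ k → k ≤ n → η k ω = I k},
        ∏ k ∈ Finset.range n, f (k + 1) (κ (k + 1) ω, ζ (k + 1) ω) ∂(P (I 0))
      = ∏ k ∈ Finset.range n,
        ∫ ω in {ω | η 1 ω = I (k + 1)}, f (k + 1) (κ 1 ω, ζ 1 ω) ∂(P (I k)) := by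
  set S : Set Ω := {ω | ∀ k, 1 ≤ k → k ≤ n → η k ω = I k} with hS
  have hSm : MeasurableSet S := by
    have : S = ⋂ k, ⋂ (_ : 1 ≤ k), ⋂ (_ : k ≤ n), {ω | η k ω = I k} := by
      ext ω; simp [hS]
    rw [this]
    exact MeasurableSet.iInter fun k => MeasurableSet.iInter fun _ => MeasurableSet.iInter fun _ =>
      measurableSet_eq_fun (hmeas k).1 measurable_const
  have hX : ∀ k, Measurable (fun ω => (κ k ω, ζ k ω)) := fun k =>
    (hmeas k).2.1.prodMk (hmeas k).2.2
  have hY : Measurable (fun ω (k : Fin n) => (κ (k + 1) ω, ζ (k + 1) ω)) :=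
    measurable_pi_lambda _ fun k => hX _
  have hE : ∀ k, MeasurableSet {ω | η 1 ω = I (k + 1)} := fun k =>
    measurableSet_eq_fun (hmeas 1).1 measurable_const
  set μν : Measure (Fin n → ℝ × Bool) :=
    ((P (I 0)).restrict S).map (fun ω (k : Fin n) => (κ (k + 1) ω, ζ (k + 1) ω)) with hμν
  set μ : Fin n → Measure (ℝ × Bool) := fun k =>
    ((P (I k)).restrict {ω | η 1 ω = I (k + 1)}).map (fun ω => (κ 1 ω, ζ 1 ω)) with hμ
  have hfin : ∀ k, IsFiniteMeasure (μ k) := fun k => by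
    have := hprob (I k)
    exact Measure.isFiniteMeasure_map _ _
  have hcs1 : IsCountablySpanning (range (Iic : ℝ → Set ℝ)) := by
    refine ⟨fun n : ℕ => Iic (n : ℝ), fun n => ⟨_, rfl⟩, ?_⟩
    ext x
    simpa using exists_nat_ge x
  have hcs2 : IsCountablySpanning (range (fun b : Bool => ({b} : Set Bool))) := by
    refine ⟨fun n : ℕ => if n = 0 then {true} else {false}, fun n => ?_, ?_⟩
    · by_cases h : n = 0 <;> simp [h]
    · ext b
      simp only [mem_iUnion, mem_univ, iff_true]
      cases b
      · exact ⟨1, by simp⟩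
      · exact ⟨0, by simp⟩
  have hg1 : MeasurableSpace.generateFrom (range (Iic : ℝ → Set ℝ)) = borel ℝ :=
    (borel_eq_generateFrom_Iic ℝ).symm
  have hg2 : MeasurableSpace.generateFrom (range (fun b : Bool => ({b} : Set Bool)))
      = (inferInstance : MeasurableSpace Bool) := by
    refine le_antisymm ?_ ?_
    · refine MeasurableSpace.generateFrom_le ?_
      rintro _ ⟨b, rfl⟩
      exact measurableSet_singleton b
    · intro s _
      have : s = ⋃ b ∈ s, {b} := by simp
      rw [this]
      exact @MeasurableSet.biUnion _ _ (_) _ _ (to_countable s) fun b _ =>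
        MeasurableSpace.measurableSet_generateFrom ⟨b, rfl⟩
  set Cc : Set (Set (ℝ × Bool)) := image2 (· ×ˢ ·) (range (Iic : ℝ → Set ℝ))
    (range (fun b : Bool => ({b} : Set Bool))) with hCc
  have hgen : MeasurableSpace.generateFrom Cc = Prod.instMeasurableSpace := by
    refine generateFrom_eq_prod ?_ hg2 hcs1 hcs2
    rw [hg1]; exact (BorelSpace.measurable_eq (α := ℝ)).symm
  have hpi : IsPiSystem Cc := by
    refine IsPiSystem.prod ?_ ?_
    · have := isPiSystem_image_Iic (univ : Set ℝ)
      rwa [image_univ] at this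
    · rintro _ ⟨b, rfl⟩ _ ⟨b', rfl⟩ h
      obtain ⟨x, hx1, hx2⟩ := h
      simp at hx1 hx2
      subst hx1; subst hx2
      exact ⟨x, by simp⟩
  have hspan := IsCountablySpanning.prod hcs1 hcs2
  have hpiμ : Measure.pi μ = μν := by
    obtain ⟨sq, hsq1, hsq2⟩ := hspan
    refine Measure.pi_eq_generateFrom (C := fun _ => Cc) (fun _ => hgen) (fun _ => hpi)
      (fun k => ⟨sq, hsq1, fun l => measure_lt_top _ _, hsq2⟩) ?_
    intro s hs
    have hs' : ∀ k, ∃ T : ℝ, ∃ z : Bool, s k = Iic T ×ˢ {z} := by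
      intro k
      obtain ⟨_, ⟨T, rfl⟩, _, ⟨z, rfl⟩, h⟩ := hs k
      exact ⟨T, z, h.symm⟩
    choose T Z hTZ using hs'
    have hsm : ∀ k, MeasurableSet (s k) := fun k => by
      rw [hTZ]; exact measurableSet_Iic.prod (measurableSet_singleton _)
    have hc := hcyl (fun k => if h : k - 1 < n then T ⟨k - 1, h⟩ else 0)
      (fun k => if h : k - 1 < n then Z ⟨k - 1, h⟩ else true)
    rw [hμν, Measure.map_apply hY (MeasurableSet.univ_pi hsm),
      Measure.restrict_apply (hY (MeasurableSet.univ_pi hsm))]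
    have hset : (fun ω (k : Fin n) => (κ (k + 1) ω, ζ (k + 1) ω)) ⁻¹' univ.pi s ∩ S
      = {ω | ∀ k, 1 ≤ k → k ≤ n → (η k ω = I k
        ∧ κ k ω ≤ (if h : k - 1 < n then T ⟨k - 1, h⟩ else 0)
        ∧ ζ k ω = (if h : k - 1 < n then Z ⟨k - 1, h⟩ else true))} := by
      ext ω
      simp only [mem_inter_iff, mem_preimage, mem_univ_pi, hTZ, mem_prod, mem_Iic,
        mem_singleton_iff, hS, mem_ofPred_eq]
      constructor
      · rintro ⟨h1, h2⟩ k hk0 hk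
        have hlt : k - 1 < n := by omega
        have := h1 ⟨k - 1, hlt⟩
        simp only [Nat.sub_add_cancel hk0] at this
        simp only [hlt, dite_true]
        exact ⟨h2 k hk0 hk, this⟩
      · intro h
        refine ⟨fun k => ?_, fun k hk0 hk => (h k hk0 hk).1⟩
        have := (h (k + 1) (by omega) (by omega)).2
        simpa using this
    rw [hset, hc, Finset.prod_range]
    refine Finset.prod_congr rfl fun k _ => ?_
    rw [hμ]
    simp only
    rw [Measure.map_apply (hX 1) (hsm k), Measure.restrict_apply ((hX 1) (hsm k))]
    congr 1
    ext ω
    simp [hTZ, and_comm]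
  have h1 := integral_fintype_prod_eq_prod (𝕜 := ℝ) (fun (k : Fin n) => f (k + 1)) (μ := μ)
  rw [hpiμ, hμν, integral_map hY.aemeasurable] at h1
  · rw [Finset.prod_range]
    simp only [Finset.prod_range]
    rw [h1]
    refine Finset.prod_congr rfl fun k _ => ?_
    rw [hμ]
    simp only
    rw [integral_map (hX 1).aemeasurable (hf _).aestronglyMeasurable]
  · exact (Finset.measurable_fun_prod _ fun k _ => (hf _).comp (measurable_pi_apply k)).aestronglyMeasurable

theorem iter_int {m : ℕ} {Ω : Type} [MeasurableSpace Ω]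
    (η : ℕ → Ω → Fin m) (κ : ℕ → Ω → ℝ) (ζ : ℕ → Ω → Bool)
    (P : Fin m → Measure Ω) (hprob : ∀ i, IsProbabilityMeasure (P i))
    (hmeas : ∀ n, Measurable (η n) ∧ Measurable (κ n) ∧ Measurable (ζ n))
    (Q : Fin m → Fin m → ℝ → Bool → ℝ)
    (hMRP : ∀ n : ℕ, ∀ I : ℕ → Fin m, ∀ T : ℕ → ℝ, ∀ Z : ℕ → Bool,
      P (I 0) {ω | ∀ k ≤ n, (η k ω = I k ∧ (1 ≤ k → (κ k ω ≤ T k ∧ ζ k ω = Z k)))}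
        = ENNReal.ofReal (∏ k ∈ Finset.Icc 1 n, Q (I (k - 1)) (I k) (T k) (Z k)))
    (f : ℕ → ℝ × Bool → ℝ) (hf : ∀ k, Measurable (f k))
    (hfb : ∀ k n ω, |f k (κ n ω, ζ n ω)| ≤ 1) (n : ℕ) (i : Fin m) :
    ∫ ω, ∏ k ∈ Finset.range n, f (k + 1) (κ (k + 1) ω, ζ (k + 1) ω) ∂(P i)
      = iterVec (fun k i j => ∫ ω in {ω | η 1 ω = j}, f k (κ 1 ω, ζ 1 ω) ∂(P i)) n 1 i := by
  set M : ℕ → Fin m → Fin m → ℝ :=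
    fun k i j => ∫ ω in {ω | η 1 ω = j}, f k (κ 1 ω, ζ 1 ω) ∂(P i) with hM
  have hSm : ∀ (r : ℕ) (I : ℕ → Fin m),
      MeasurableSet {ω | ∀ k, 1 ≤ k → k ≤ r → η k ω = I k} := by
    intro r I
    have : {ω | ∀ k, 1 ≤ k → k ≤ r → η k ω = I k}
        = ⋂ k, ⋂ (_ : 1 ≤ k), ⋂ (_ : k ≤ r), {ω | η k ω = I k} := by
      ext ω; simp
    rw [this]
    exact MeasurableSet.iInter fun k => MeasurableSet.iInter fun _ => MeasurableSet.iInter fun _ =>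
      measurableSet_eq_fun (hmeas k).1 measurable_const
  have hint : ∀ i, Integrable
      (fun ω => ∏ k ∈ Finset.range n, f (k + 1) (κ (k + 1) ω, ζ (k + 1) ω)) (P i) := by
    intro i
    have := hprob i
    refine Integrable.of_bound (C := 1) ?_ ?_
    · exact (Finset.measurable_fun_prod _ fun k _ =>
        (hf _).comp ((hmeas (k+1)).2.1.prodMk (hmeas (k+1)).2.2)).aestronglyMeasurable
    · refine Eventually.of_forall fun ω => ?_
      rw [Real.norm_eq_abs, Finset.abs_prod]
      exact Finset.prod_le_one (fun _ _ => abs_nonneg _) (fun _ _ => hfb _ _ _)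
  have key : ∀ d r, r + d = n → ∀ I : ℕ → Fin m,
      ∫ ω in {ω | ∀ k, 1 ≤ k → k ≤ r → η k ω = I k},
        ∏ k ∈ Finset.range n, f (k + 1) (κ (k + 1) ω, ζ (k + 1) ω) ∂(P (I 0))
      = (∏ k ∈ Finset.range r, M (k + 1) (I k) (I (k + 1))) * iterVec M d (r + 1) (I r) := by
    intro d
    induction d with
    | zero =>
      intro r hr I
      have : r = n := by omega
      subst this
      rw [path_int η κ ζ P hprob hmeas r I
        (fun T Z => cyl_prob η κ ζ P hprob hmeas Q hMRP r I T Z) f hf]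
      simp [iterVec, hM]
    | succ d ih =>
      intro r hr I
      have hun : {ω | ∀ k, 1 ≤ k → k ≤ r → η k ω = I k}
          = ⋃ j, {ω | ∀ k, 1 ≤ k → k ≤ r + 1 → η k ω = Function.update I (r + 1) j k} := by
        ext ω
        simp only [mem_ofPred_eq, mem_iUnion]
        constructor
        · intro h
          refine ⟨η (r + 1) ω, fun k hk0 hk => ?_⟩
          by_cases hkr : k = r + 1
          · subst hkr; simp
          · rw [Function.update_of_ne hkr]; exact h k hk0 (by omega)
        · rintro ⟨j, h⟩ k hk0 hk
          have := h k hk0 (by omega)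
          rwa [Function.update_of_ne (by omega)] at this
      rw [hun, integral_iUnion_fintype (fun j => hSm _ _) ?_ (fun j => (hint _).integrableOn)]
      · simp only [iterVec, Finset.mul_sum]
        refine Finset.sum_congr rfl fun j _ => ?_
        have h0 : Function.update I (r + 1) j 0 = I 0 :=
          Function.update_of_ne (by omega) _ _
        have := ih (r + 1) (by omega) (Function.update I (r + 1) j)
        rw [h0] at this
        rw [this, Finset.prod_range_succ]
        have h1 : Function.update I (r + 1) j r = I r :=
          Function.update_of_ne (by omega) _ _
        have h2 : ∏ k ∈ Finset.range r, M (k + 1) (Function.update I (r + 1) j k)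
            (Function.update I (r + 1) j (k + 1))
            = ∏ k ∈ Finset.range r, M (k + 1) (I k) (I (k + 1)) := by
          refine Finset.prod_congr rfl fun k hk => ?_
          have := Finset.mem_range.1 hk
          rw [Function.update_of_ne (by omega), Function.update_of_ne (by omega)]
        rw [h1, h2, Function.update_self]
        ring
      · intro j j' hjj
        refine Set.disjoint_left.2 fun ω h1 h2 => hjj ?_
        have e1 := h1 (r + 1) (by omega) le_rfl
        have e2 := h2 (r + 1) (by omega) le_rfl
        simp only [Function.update_self] at e1 e2
        rw [← e1, ← e2]
  have := key n 0 (by omega) (fun _ => i)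
  have hu : {ω | ∀ k, 1 ≤ k → k ≤ 0 → η k ω = i} = univ := by
    ext ω
    simp only [mem_ofPred_eq, mem_univ, iff_true]
    intro k h1 h2
    omega
  rw [hu] at this
  simpa using this

/-- Real-valued indicator of `true`. -/
def zi (z : Bool) : ℝ := if z = true then 1 else 0

theorem zi_nonneg (z : Bool) : 0 ≤ zi z := by unfold zi; split_ifs <;> norm_num
theorem zi_le_one (z : Bool) : zi z ≤ 1 := by unfold zi; split_ifs <;> norm_num
theorem zi_meas : Measurable zi := measurable_of_finite zi

/-- Rate of the exponent at step `k`. -/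
def sig (n : ℕ) (N : ℕ → ℕ) (s : ℕ → ℝ) (k : ℕ) : ℝ :=
  ∑ r ∈ Finset.range n, s (r + 1) * chi (N r) (N (r + 1)) k

/-- One-step functional at step `k`. -/
def fstep (n : ℕ) (N : ℕ → ℕ) (s : ℕ → ℝ) (Ku k : ℕ) (y : ℝ × Bool) : ℝ :=
  Real.exp (-(sig n N s k * y.1)) * (1 - chi 0 Ku k * zi y.2)

theorem fstep_meas (n : ℕ) (N : ℕ → ℕ) (s : ℕ → ℝ) (Ku k : ℕ) :
    Measurable (fstep n N s Ku k) := by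
  unfold fstep
  have := zi_meas
  fun_prop

theorem sig_exp (n : ℕ) (N : ℕ → ℕ) (s : ℕ → ℝ)
    (hN : ∀ r r', r ≤ r' → r' ≤ n → N r ≤ N r') (k : ℕ) (y : ℝ) :
    1 - Real.exp (-(sig n N s k * y))
      = ∑ r ∈ Finset.range n, chi (N r) (N (r + 1)) k * (1 - Real.exp (-(s (r + 1) * y))) := by
  unfold sig
  by_cases h : ∃ r < n, N r < k ∧ k ≤ N (r + 1)
  · obtain ⟨r, hr, h1, h2⟩ := h
    have hz : ∀ r' ∈ Finset.range n, r' ≠ r → chi (N r') (N (r' + 1)) k = 0 := by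
      intro r' hr' hne
      have hr'' := Finset.mem_range.1 hr'
      unfold chi
      rw [if_neg]
      rintro ⟨h3, h4⟩
      rcases lt_or_gt_of_ne hne with hlt | hlt
      · have := hN (r' + 1) r (by omega) (by omega)
        omega
      · have := hN (r + 1) r' (by omega) (by omega)
        omega
    have h1' : chi (N r) (N (r + 1)) k = 1 := by unfold chi; rw [if_pos ⟨h1, h2⟩]
    rw [Finset.sum_eq_single r, Finset.sum_eq_single r, h1']
    · ring_nf
    · intro r' hr' hne; rw [hz r' hr' hne]; ring
    · intro hh; exact absurd (Finset.mem_range.2 hr) hh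
    · intro r' hr' hne; rw [hz r' hr' hne]; ring
    · intro hh; exact absurd (Finset.mem_range.2 hr) hh
  · push Not at h
    have hz : ∀ r ∈ Finset.range n, chi (N r) (N (r + 1)) k = 0 := by
      intro r hr
      unfold chi
      rw [if_neg]
      rintro ⟨h3, h4⟩
      have := h r (Finset.mem_range.1 hr) h3
      omega
    rw [Finset.sum_eq_zero, Finset.sum_eq_zero]
    · simp
    · intro r hr; rw [hz r hr]; ring
    · intro r hr; rw [hz r hr]; ring

theorem sig_nonneg (n : ℕ) (N : ℕ → ℕ) (s : ℕ → ℝ) (hs : ∀ r < n, 0 < s (r + 1)) (k : ℕ) :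
    0 ≤ sig n N s k :=
  Finset.sum_nonneg fun r hr => mul_nonneg (hs r (Finset.mem_range.1 hr)).le (chi_nonneg _ _ _)

theorem fstep_nonneg (n : ℕ) (N : ℕ → ℕ) (s : ℕ → ℝ) (Ku k : ℕ) (y : ℝ × Bool) :
    0 ≤ fstep n N s Ku k y := by
  refine mul_nonneg (Real.exp_pos _).le ?_
  have h1 := chi_nonneg 0 Ku k
  have h2 := chi_le_one 0 Ku k
  have h3 := zi_nonneg y.2
  have h4 := zi_le_one y.2
  nlinarith

theorem fstep_le_one (n : ℕ) (N : ℕ → ℕ) (s : ℕ → ℝ) (hs : ∀ r < n, 0 < s (r + 1))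
    (Ku k : ℕ) (y : ℝ × Bool) (hy : 0 ≤ y.1) :
    fstep n N s Ku k y ≤ 1 := by
  have h1 := chi_nonneg 0 Ku k
  have h2 := chi_le_one 0 Ku k
  have h3 := zi_nonneg y.2
  have h4 := zi_le_one y.2
  refine mul_le_one₀ (Real.exp_le_one_iff.2 ?_) (by nlinarith) (by nlinarith)
  have := mul_nonneg (sig_nonneg n N s hs k) hy
  linarith

open Classical in
/-- The product of the one-step functionals is the integrand of the theorem. -/
theorem prod_fstep (n : ℕ) (N : ℕ → ℕ) (s : ℕ → ℝ)
    (hN : ∀ r r', r ≤ r' → r' ≤ n → N r ≤ N r') (Ku l : ℕ) (hl : N n ≤ l) (hK : Ku ≤ l)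
    (κ : ℕ → ℝ) (ζ : ℕ → Bool) :
    ∏ k ∈ Finset.range l, fstep n N s Ku (k + 1) (κ (k + 1), ζ (k + 1))
      = (if ∀ n', 1 ≤ n' → n' ≤ Ku → ζ n' = false then 1 else 0) *
        Real.exp (-(∑ r ∈ Finset.range n, s (r + 1) *
          ((∑ k ∈ Finset.Icc 1 (N (r + 1)), κ k) - ∑ k ∈ Finset.Icc 1 (N r), κ k))) := by
  unfold fstep
  rw [Finset.prod_mul_distrib, mul_comm]
  congr 1
  · split_ifs with h
    · refine Finset.prod_eq_one fun k _ => ?_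
      by_cases hk : k + 1 ≤ Ku
      · simp [zi, h (k + 1) (by omega) hk]
      · have : chi 0 Ku (k + 1) = 0 := by unfold chi; rw [if_neg]; omega
        simp [this]
    · push Not at h
      obtain ⟨k, h1, h2, h3⟩ := h
      refine Finset.prod_eq_zero (i := k - 1) (by simp; omega) ?_
      rw [Nat.sub_add_cancel h1]
      have h4 : ζ k = true := by simpa using h3
      have : chi 0 Ku k = 1 := by unfold chi; rw [if_pos]; omega
      simp [h4, this, zi]
  · rw [← Real.exp_sum, Finset.sum_neg_distrib]
    congr 2
    simp only [sig, Finset.sum_mul]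
    rw [Finset.sum_comm]
    refine Finset.sum_congr rfl fun r hr => ?_
    have hr' := Finset.mem_range.1 hr
    simp only [mul_assoc]
    rw [← Finset.mul_sum]
    congr 1
    have hle : N r ≤ N (r + 1) := hN r (r + 1) (by omega) (by omega)
    have hle2 : N (r + 1) ≤ l := (hN (r + 1) n (by omega) le_rfl).trans hl
    have hconv : ∀ c : ℕ, ∑ k ∈ Finset.Icc 1 c, κ k = ∑ k ∈ Finset.range c, κ (k + 1) := by
      intro c
      rw [← Finset.Ico_succ_right_eq_Icc, Finset.sum_Ico_eq_sum_range]
      simp [add_comm 1]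
    rw [hconv, hconv, ← Finset.sum_Ico_eq_sub _ hle]
    simp only [chi, ite_mul, one_mul, zero_mul]
    rw [← Finset.sum_filter]
    refine Finset.sum_congr ?_ fun _ _ => rfl
    ext k
    simp
    omega

theorem eps_bound {m : ℕ} (hm : 0 < m) {Ω : Type} [MeasurableSpace Ω]
    (η : ℕ → Ω → Fin m) (κ : ℕ → Ω → ℝ) (ζ : ℕ → Ω → Bool)
    (P : Fin m → Measure Ω) (hprob : ∀ i, IsProbabilityMeasure (P i))
    (hmeas : ∀ n, Measurable (η n) ∧ Measurable (κ n) ∧ Measurable (ζ n))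
    (hκnn : ∀ n ω, 0 ≤ κ n ω)
    (Q : Fin m → Fin m → ℝ → Bool → ℝ)
    (hMRP : ∀ n : ℕ, ∀ I : ℕ → Fin m, ∀ T : ℕ → ℝ, ∀ Z : ℕ → Bool,
      P (I 0) {ω | ∀ k ≤ n, (η k ω = I k ∧ (1 ≤ k → (κ k ω ≤ T k ∧ ζ k ω = Z k)))}
        = ENNReal.ofReal (∏ k ∈ Finset.Icc 1 n, Q (I (k - 1)) (I k) (T k) (Z k)))
    (p : Fin m → Fin m → ℝ)
    (hp : ∀ i j, p i j = (P i {ω | η 1 ω = j}).toReal)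
    (Nc : ℕ) (hNc : 0 < Nc) (c : ℕ → Fin m)
    (hc : c Nc = c 0) (hcov : ∀ i, ∃ k ≤ Nc, c k = i) (b : ℝ) (hb0 : 0 < b) (hb1 : b ≤ 1)
    (hb : ∀ k < Nc, b ≤ p (c k) (c (k + 1))) (π : Fin m → ℝ) (hπ : IsStationaryDist p π)
    (x : ℝ) (hx : 0 < x) (hxdef : ∑ i, π i * (P i {ω | ζ 1 ω = true}).toReal = x)
    (n : ℕ) (N : ℕ → ℕ) (hN : ∀ r r', r ≤ r' → r' ≤ n → N r ≤ N r') (Ku : ℕ)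
    (s : ℕ → ℝ) (hs : ∀ r < n, 0 < s (r + 1)) (G0 ρ : ℝ) (hG0 : 1 ≤ G0)
    (hα : ∀ r < n, x⁻¹ * (1 - ∑ i, π i * ∫ ω, Real.exp (-(s (r + 1) * κ 1 ω)) ∂(P i)) ≤ G0)
    (hρ : ∀ i, ∑ r ∈ Finset.range n,
      ∫ ω, zi (ζ 1 ω) * (1 - Real.exp (-(s (r + 1) * κ 1 ω))) ∂(P i) ≤ x * ρ)
    (G C : ℝ) (hG : G = G0 / (b ^ Nc / m)) (hC : C = Nc * G / b ^ Nc)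
    (l : ℕ) (hl : l = Ku + N n) (i : Fin m) :
    |∫ ω in {ω | ∀ n' : ℕ, 1 ≤ n' → n' ≤ Ku → ζ n' ω = false},
        Real.exp (-(∑ r ∈ Finset.range n, s (r + 1) *
          ((∑ k ∈ Finset.Icc 1 (N (r + 1)), κ k ω) - ∑ k ∈ Finset.Icc 1 (N r), κ k ω))) ∂(P i)
      - Real.exp (-(x * (∑ r ∈ Finset.range n,
          (x⁻¹ * (1 - ∑ i, π i * ∫ ω, Real.exp (-(s (r + 1) * κ 1 ω)) ∂(P i)))
            * ((N (r + 1) : ℝ) - N r) + Ku)))|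
      ≤ 4 * x * (n + 1 : ℕ) * C + (l * x) * (ρ + x * (2 * (n + 1 : ℕ) ^ 2 * C * G
          + (n + 1 : ℕ) ^ 2 * G ^ 2)) := by
  have hmR : (0:ℝ) < m := by exact_mod_cast hm
  set c0 := b ^ Nc / (m:ℝ) with hc0
  have hc0pos : 0 < c0 := by positivity
  have hc01 : c0 ≤ 1 := by
    rw [hc0, div_le_one hmR]
    have : (1:ℝ) ≤ m := by exact_mod_cast hm
    exact (pow_le_one₀ hb0.le hb1).trans this
  have hp0 : ∀ i j, 0 ≤ p i j := fun i j => by rw [hp]; exact ENNReal.toReal_nonneg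
  have hEm : ∀ j, MeasurableSet {ω | η 1 ω = j} := fun j =>
    measurableSet_eq_fun (hmeas 1).1 measurable_const
  have hEu : ⋃ j, {ω | η 1 ω = j} = univ := by ext ω; simp
  have hEd : Pairwise (Function.onFun Disjoint fun j => {ω | η 1 ω = j}) := by
    intro j j' hjj
    refine Set.disjoint_left.2 fun ω h1 h2 => hjj ?_
    exact (show η 1 ω = j from h1).symm.trans h2
  have hpint : ∀ i j, p i j = ∫ ω in {ω | η 1 ω = j}, (1:ℝ) ∂(P i) := by
    intro i j
    rw [hp]; simp [Measure.real]
  have hpart : ∀ i (F : Ω → ℝ), Integrable F (P i) →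
      ∑ j, ∫ ω in {ω | η 1 ω = j}, F ω ∂(P i) = ∫ ω, F ω ∂(P i) := by
    intro i F hF
    rw [← integral_iUnion_fintype hEm hEd (fun j => hF.integrableOn), hEu]
    simp
  have hp1 : ∀ i, ∑ j, p i j = 1 := by
    intro i
    simp only [hpint]
    rw [hpart i _ (integrable_const _)]
    simp
  have hπlow := pi_lower hm p hp0 Nc hNc c hc hcov b hb0 hb1 hb π hπ
  -- integrability facts
  have hm1 := (hmeas 1).2.1
  have hm2 : Measurable (fun ω => zi (ζ 1 ω)) := zi_meas.comp (hmeas 1).2.2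
  have hexp1 : ∀ s y : ℝ, 0 ≤ s → 0 ≤ y → Real.exp (-(s * y)) ≤ 1 := fun s y h1 h2 =>
    Real.exp_le_one_iff.2 (by have := mul_nonneg h1 h2; linarith)
  have hiexp : ∀ (s : ℝ), 0 ≤ s → ∀ i, Integrable (fun ω => Real.exp (-(s * κ 1 ω))) (P i) := by
    intro s hs i
    refine Integrable.of_bound (C := 1) (by fun_prop) (Eventually.of_forall fun ω => ?_)
    rw [Real.norm_eq_abs, abs_of_nonneg (Real.exp_pos _).le]
    exact hexp1 _ _ hs (hκnn 1 ω)
  have hizi : ∀ i, Integrable (fun ω => zi (ζ 1 ω)) (P i) := by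
    intro i
    refine Integrable.of_bound (C := 1) hm2.aestronglyMeasurable (Eventually.of_forall fun ω => ?_)
    rw [Real.norm_eq_abs, abs_of_nonneg (zi_nonneg _)]
    exact zi_le_one _
  have hicr : ∀ (s : ℝ), 0 ≤ s → ∀ i,
      Integrable (fun ω => zi (ζ 1 ω) * (1 - Real.exp (-(s * κ 1 ω)))) (P i) := by
    intro s hs i
    refine Integrable.of_bound (C := 1) (by fun_prop) (Eventually.of_forall fun ω => ?_)
    have h1 := hexp1 _ _ hs (hκnn 1 ω)
    have h2 := Real.exp_pos (-(s * κ 1 ω))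
    have h3 := zi_nonneg (ζ 1 ω)
    have h4 := zi_le_one (ζ 1 ω)
    rw [Real.norm_eq_abs, abs_of_nonneg (mul_nonneg h3 (by linarith))]
    nlinarith
  have hrare : ∀ i, (P i {ω | ζ 1 ω = true}).toReal = ∫ ω, zi (ζ 1 ω) ∂(P i) := by
    intro i
    have hset : MeasurableSet {ω | ζ 1 ω = true} :=
      measurableSet_eq_fun (hmeas 1).2.2 measurable_const
    have : (fun ω => zi (ζ 1 ω)) = {ω | ζ 1 ω = true}.indicator (fun _ => (1:ℝ)) := by
      funext ω
      simp [zi, Set.indicator]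
    rw [this, integral_indicator hset]
    simp [Measure.real]
  have hifs : ∀ k i, Integrable (fun ω => fstep n N s Ku k (κ 1 ω, ζ 1 ω)) (P i) := by
    intro k i
    refine Integrable.of_bound (C := 1) ?_ (Eventually.of_forall fun ω => ?_)
    · exact ((fstep_meas n N s Ku k).comp (hm1.prodMk (hmeas 1).2.2)).aestronglyMeasurable
    · rw [Real.norm_eq_abs, abs_of_nonneg (fstep_nonneg _ _ _ _ _ _)]
      exact fstep_le_one n N s hs Ku k _ (hκnn 1 ω)
  -- the data for the deterministic bound
  set φ : ℕ → Fin m → ℝ := fun r i => ∫ ω, Real.exp (-(s (r + 1) * κ 1 ω)) ∂(P i) with hφ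
  set rar : Fin m → ℝ := fun i => (P i {ω | ζ 1 ω = true}).toReal with hrar
  set g : ℕ → Fin m → ℝ := fun r i => match r with
    | 0 => x⁻¹ * rar i
    | r + 1 => x⁻¹ * (1 - φ r i) with hg
  set α : ℕ → ℝ := fun r => ∑ i, π i * g r i with hαd
  obtain ⟨hπ0, hπ1, hπ2⟩ := hπ
  have hαzero : α 0 = 1 := by
    simp only [hαd, hg, mul_left_comm _ x⁻¹, ← Finset.mul_sum]
    rw [hxdef, inv_mul_cancel₀ hx.ne']
  have hαr : ∀ r, α (r + 1) = x⁻¹ * (1 - ∑ i, π i * φ r i) := by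
    intro r
    simp only [hαd, hg, mul_left_comm _ x⁻¹, ← Finset.mul_sum]
    congr 1
    simp only [mul_sub, mul_one, Finset.sum_sub_distrib, hπ1]
  have hφ1 : ∀ r < n, ∀ i, φ r i ≤ 1 := by
    intro r hr i
    calc φ r i ≤ ∫ ω, (1:ℝ) ∂(P i) :=
          integral_mono (hiexp _ (hs r hr).le i) (integrable_const _)
            (fun ω => hexp1 _ _ (hs r hr).le (hκnn 1 ω))
      _ = 1 := by simp
  have hg0 : ∀ r < n + 1, ∀ i, 0 ≤ g r i := by
    intro r hr i
    cases r with
    | zero => exact mul_nonneg (inv_pos.2 hx).le ENNReal.toReal_nonneg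
    | succ r =>
      exact mul_nonneg (inv_pos.2 hx).le (by have := hφ1 r (by omega) i; linarith)
  have hαG0 : ∀ r < n + 1, α r ≤ G0 := by
    intro r hr
    cases r with
    | zero => rw [hαzero]; exact hG0
    | succ r => rw [hαr]; exact hα r (by omega)
  have hα0 : ∀ r < n + 1, 0 ≤ α r := fun r hr =>
    Finset.sum_nonneg fun i _ => mul_nonneg (hπ0 i) (hg0 r hr i)
  have hgG : ∀ r < n + 1, ∀ i, g r i ≤ G := by
    intro r hr i
    rw [hG, le_div_iff₀ hc0pos]
    calc g r i * c0 ≤ g r i * π i := mul_le_mul_of_nonneg_left (hπlow i) (hg0 r hr i)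
      _ = π i * g r i := mul_comm _ _
      _ ≤ α r := Finset.single_le_sum (f := fun i => π i * g r i)
          (fun i _ => mul_nonneg (hπ0 i) (hg0 r hr i)) (Finset.mem_univ i)
      _ ≤ G0 := hαG0 r hr
  have hG0G : G0 ≤ G := by
    rw [hG, le_div_iff₀ hc0pos]
    exact mul_le_of_le_one_right (by linarith) hc01
  have hGnn : 0 ≤ G := by linarith
  have hCnn : 0 ≤ C := by rw [hC]; positivity
  have hex : ∀ r, ∃ h : Fin m → ℝ, r < n + 1 →
      (∀ i, ∑ j, p i j * h j = h i + g r i - ∑ j, π j * g r j) ∧ ∀ i, |h i| ≤ C := by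
    intro r
    by_cases hr : r < n + 1
    · obtain ⟨h, h1, h2⟩ := poisson_exists hm p hp0 hp1 Nc hNc c hc hcov b hb0 hb1 hb π
        ⟨hπ0, hπ1, hπ2⟩ (g r) G (hg0 r hr) (hgG r hr)
      exact ⟨h, fun _ => ⟨h1, by rw [hC]; exact h2⟩⟩
    · exact ⟨0, fun h => absurd h hr⟩
  choose h hh using hex
  set M : ℕ → Fin m → Fin m → ℝ := fun k i j =>
    ∫ ω in {ω | η 1 ω = j}, fstep n N s Ku k (κ 1 ω, ζ 1 ω) ∂(P i) with hM
  have hM0 : ∀ k i j, 0 ≤ M k i j := fun k i j =>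
    integral_nonneg fun ω => fstep_nonneg _ _ _ _ _ _
  have hMP : ∀ k i j, M k i j ≤ p i j := by
    intro k i j
    rw [hpint]
    exact integral_mono (hifs k i).integrableOn (integrable_const _)
      (fun ω => fstep_le_one n N s hs Ku k _ (hκnn 1 ω))
  set a : ℕ → ℕ := fun r => match r with
    | 0 => 0
    | r + 1 => N r with ha
  set bb : ℕ → ℕ := fun r => match r with
    | 0 => Ku
    | r + 1 => N (r + 1) with hbb
  have hSeq : ∀ k i, ∑ j, M k i j
      - (1 - x * ∑ r ∈ Finset.range (n + 1), chi (a r) (bb r) k * g r i)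
      = ∫ ω, chi 0 Ku k * (zi (ζ 1 ω) * (1 - Real.exp (-(sig n N s k * κ 1 ω)))) ∂(P i) := by
    intro k i
    have e1 : ∑ j, M k i j = ∫ ω, fstep n N s Ku k (κ 1 ω, ζ 1 ω) ∂(P i) :=
      hpart i _ (hifs k i)
    have e2 : ∀ ω, fstep n N s Ku k (κ 1 ω, ζ 1 ω)
        = (1 - ∑ r ∈ Finset.range n, chi (N r) (N (r + 1)) k
            * (1 - Real.exp (-(s (r + 1) * κ 1 ω))) - chi 0 Ku k * zi (ζ 1 ω))
          + chi 0 Ku k * (zi (ζ 1 ω) * (1 - Real.exp (-(sig n N s k * κ 1 ω)))) := by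
      intro ω
      rw [← sig_exp n N s hN k (κ 1 ω)]
      unfold fstep
      ring
    have i1 : ∀ r ∈ Finset.range n, Integrable (fun ω => chi (N r) (N (r + 1)) k
            * (1 - Real.exp (-(s (r + 1) * κ 1 ω)))) (P i) := fun r hr =>
      ((integrable_const _).sub (hiexp _ (hs r (Finset.mem_range.1 hr)).le i)).const_mul _
    have i2 : Integrable (fun ω => ∑ r ∈ Finset.range n, chi (N r) (N (r + 1)) k
            * (1 - Real.exp (-(s (r + 1) * κ 1 ω)))) (P i) := integrable_finsetSum _ i1
    have i3 : Integrable (fun ω => chi 0 Ku k * zi (ζ 1 ω)) (P i) := (hizi i).const_mul _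
    have i4 : Integrable (fun ω => chi 0 Ku k
        * (zi (ζ 1 ω) * (1 - Real.exp (-(sig n N s k * κ 1 ω))))) (P i) :=
      (hicr _ (sig_nonneg n N s hs k) i).const_mul _
    have i5 : Integrable (fun _ : Ω => (1:ℝ)) (P i) := integrable_const _
    have i6 : Integrable (fun ω => 1 - ∑ r ∈ Finset.range n, chi (N r) (N (r + 1)) k
            * (1 - Real.exp (-(s (r + 1) * κ 1 ω)))) (P i) := i5.sub i2
    have i7 : Integrable (fun ω => 1 - ∑ r ∈ Finset.range n, chi (N r) (N (r + 1)) k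
            * (1 - Real.exp (-(s (r + 1) * κ 1 ω))) - chi 0 Ku k * zi (ζ 1 ω)) (P i) := i6.sub i3
    rw [e1, integral_congr_ae (Eventually.of_forall e2), integral_add i7 i4,
      integral_sub i6 i3, integral_sub i5 i2, integral_finsetSum _ i1,
      integral_const_mul, ← hrare]
    rw [Finset.sum_range_succ']
    have e3 : ∑ r ∈ Finset.range n, ∫ ω, chi (N r) (N (r + 1)) k
            * (1 - Real.exp (-(s (r + 1) * κ 1 ω))) ∂(P i)
        = ∑ r ∈ Finset.range n, chi (N r) (N (r + 1)) k * (1 - φ r i) := by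
      refine Finset.sum_congr rfl fun r hr => ?_
      rw [integral_const_mul, integral_sub i5 (hiexp _ (hs r (Finset.mem_range.1 hr)).le i)]
      simp [hφ]
    have e4 : x * (∑ r ∈ Finset.range n, chi (a (r + 1)) (bb (r + 1)) k * g (r + 1) i
          + chi (a 0) (bb 0) k * g 0 i)
        = ∑ r ∈ Finset.range n, chi (N r) (N (r + 1)) k * (1 - φ r i)
          + chi 0 Ku k * rar i := by
      rw [mul_add, Finset.mul_sum]
      congr 1
      · refine Finset.sum_congr rfl fun r _ => ?_
        simp only [ha, hbb, hg]
        field_simp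
      · simp only [ha, hbb, hg]
        field_simp
    rw [e3, e4]
    simp only [integral_const, probReal_univ, smul_eq_mul, mul_one]
    ring
  have hpn : ∀ k ω, 0 ≤ zi (ζ 1 ω) * (1 - Real.exp (-(sig n N s k * κ 1 ω))) := fun k ω =>
    mul_nonneg (zi_nonneg _)
      (by have := hexp1 _ _ (sig_nonneg n N s hs k) (hκnn 1 ω); linarith)
  have hS0 : ∀ k i, 0 ≤ ∑ j, M k i j
      - (1 - x * ∑ r ∈ Finset.range (n + 1), chi (a r) (bb r) k * g r i) := by
    intro k i
    rw [hSeq]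
    exact integral_nonneg fun ω => mul_nonneg (chi_nonneg _ _ _) (hpn k ω)
  have hS1 : ∀ k i, ∑ j, M k i j
      - (1 - x * ∑ r ∈ Finset.range (n + 1), chi (a r) (bb r) k * g r i) ≤ x * ρ := by
    intro k i
    rw [hSeq]
    refine le_trans ?_ (hρ i)
    have i1 : ∀ r ∈ Finset.range n, Integrable (fun ω =>
      zi (ζ 1 ω) * (1 - Real.exp (-(s (r + 1) * κ 1 ω)))) (P i) := fun r hr =>
        hicr _ (hs r (Finset.mem_range.1 hr)).le i
    rw [← integral_finsetSum _ i1]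
    refine integral_mono ((hicr _ (sig_nonneg n N s hs k) i).const_mul _)
      (integrable_finsetSum _ i1) fun ω => ?_
    simp only
    calc chi 0 Ku k * (zi (ζ 1 ω) * (1 - Real.exp (-(sig n N s k * κ 1 ω))))
        ≤ 1 * (zi (ζ 1 ω) * (1 - Real.exp (-(sig n N s k * κ 1 ω)))) :=
          mul_le_mul_of_nonneg_right (chi_le_one _ _ _) (hpn k ω)
      _ = zi (ζ 1 ω) * (1 - Real.exp (-(sig n N s k * κ 1 ω))) := one_mul _
      _ = ∑ r ∈ Finset.range n, zi (ζ 1 ω) * (chi (N r) (N (r + 1)) k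
            * (1 - Real.exp (-(s (r + 1) * κ 1 ω)))) := by
          rw [sig_exp n N s hN k (κ 1 ω), Finset.mul_sum]
      _ ≤ _ := by
          refine Finset.sum_le_sum fun r hr => mul_le_mul_of_nonneg_left ?_ (zi_nonneg _)
          refine mul_le_of_le_one_left ?_ (chi_le_one _ _ _)
          have := hexp1 _ _ (hs r (Finset.mem_range.1 hr)).le (hκnn 1 ω)
          linarith
  have hab : ∀ r < n + 1, a r ≤ bb r := by
    intro r hr
    cases r with
    | zero => exact Nat.zero_le _
    | succ r => exact hN r (r + 1) (by omega) (by omega)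
  have hbl : ∀ r < n + 1, bb r ≤ l := by
    intro r hr
    cases r with
    | zero => simp only [hbb]; omega
    | succ r =>
      have := hN (r + 1) n (by omega) le_rfl
      simp only [hbb]; omega
  have main := det_bound M p hp1 hM0 hMP (n + 1) a bb g h α G C x ρ hgG hα0
    (fun r hr => (hαG0 r hr).trans hG0G) hGnn hCnn (fun r hr => (hh r hr).2)
    (fun r hr => (hh r hr).1) hx.le hS0 hS1 l hab hbl i
  have hit := iter_int η κ ζ P hprob hmeas Q hMRP (fstep n N s Ku) (fstep_meas n N s Ku)
    (fun k n' ω => by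
      rw [abs_of_nonneg (fstep_nonneg _ _ _ _ _ _)]
      exact fstep_le_one n N s hs Ku k _ (hκnn n' ω)) l i
  have hSm : MeasurableSet {ω | ∀ n' : ℕ, 1 ≤ n' → n' ≤ Ku → ζ n' ω = false} := by
    have : {ω | ∀ n' : ℕ, 1 ≤ n' → n' ≤ Ku → ζ n' ω = false}
        = ⋂ k, ⋂ (_ : 1 ≤ k), ⋂ (_ : k ≤ Ku), {ω | ζ k ω = false} := by
      ext ω; simp
    rw [this]
    exact MeasurableSet.iInter fun k => MeasurableSet.iInter fun _ => MeasurableSet.iInter fun _ =>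
      measurableSet_eq_fun (hmeas k).2.2 measurable_const
  have hint : ∫ ω in {ω | ∀ n' : ℕ, 1 ≤ n' → n' ≤ Ku → ζ n' ω = false},
        Real.exp (-(∑ r ∈ Finset.range n, s (r + 1) *
          ((∑ k ∈ Finset.Icc 1 (N (r + 1)), κ k ω) - ∑ k ∈ Finset.Icc 1 (N r), κ k ω))) ∂(P i)
      = iterVec M l 1 i := by
    rw [← hit, ← integral_indicator hSm]
    refine integral_congr_ae (Eventually.of_forall fun ω => ?_)
    simp only
    rw [prod_fstep n N s hN Ku l (by omega) (by omega) (fun k => κ k ω) (fun k => ζ k ω)]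
    simp [Set.indicator]
  rw [hint]
  rw [Finset.sum_range_succ', hαzero] at main
  simp only [hαr] at main
  simpa [ha, hbb, hφ] using main


theorem condB_ev {m : ℕ} (p : ℝ → Fin m → Fin m → ℝ)
    (hp0 : ∀ᶠ ε in 𝓝[>] (0:ℝ), ∀ i j, 0 ≤ p ε i j) (hB : CondB p) :
    ∃ N : ℕ, 0 < N ∧ ∃ c : ℕ → Fin m, c N = c 0 ∧ (∀ i : Fin m, ∃ k ≤ N, c k = i) ∧
      ∃ b : ℝ, 0 < b ∧ b ≤ 1 ∧ ∀ᶠ ε in 𝓝[>] (0:ℝ), ∀ k < N, b ≤ p ε (c k) (c (k + 1)) := by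
  obtain ⟨N, hN, c, hc, hcov, hl⟩ := hB
  refine ⟨N, hN, c, hc, hcov, ?_⟩
  have key : ∀ K ≤ N, ∃ b : ℝ, 0 < b ∧ b ≤ 1 ∧
      ∀ᶠ ε in 𝓝[>] (0:ℝ), ∀ k < K, b ≤ p ε (c k) (c (k + 1)) := by
    intro K
    induction K with
    | zero => intro _; exact ⟨1, one_pos, le_rfl, Eventually.of_forall fun ε k hk => by omega⟩
    | succ K ih =>
      intro hK
      obtain ⟨b, hb0, hb1, hb⟩ := ih (by omega)
      have hlK := hl K (by omega)
      set L := Filter.liminf (fun ε => p ε (c K) (c (K + 1))) (𝓝[>] (0 : ℝ)) with hL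
      have hbd : IsBoundedUnder (· ≥ ·) (𝓝[>] (0:ℝ)) (fun ε => p ε (c K) (c (K + 1))) :=
        ⟨0, by
          rw [eventually_map]
          filter_upwards [hp0] with ε h using h _ _⟩
      have h2 : L / 2 < Filter.liminf (fun ε => p ε (c K) (c (K + 1))) (𝓝[>] (0 : ℝ)) := by
        rw [← hL]; linarith
      have := eventually_lt_of_lt_liminf h2 hbd
      refine ⟨min b (L / 2), lt_min hb0 (by linarith), (min_le_left _ _).trans hb1, ?_⟩
      filter_upwards [hb, this] with ε h3 h4 k hk
      rcases Nat.lt_succ_iff_lt_or_eq.1 hk with h | rfl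
      · exact (min_le_left _ _).trans (h3 k h)
      · exact (min_le_right _ _).trans h4.le
  exact key N le_rfl

/-- Pointwise bound on the cross term. -/
theorem cross_le {Ω : Type} [MeasurableSpace Ω] (P : Measure Ω) [IsProbabilityMeasure P]
    (κ : Ω → ℝ) (ζ : Ω → Bool) (hκ : Measurable κ) (hζ : Measurable ζ) (hκnn : ∀ ω, 0 ≤ κ ω)
    (s δ : ℝ) (hs : 0 < s) (hδ : 0 < δ) :
    0 ≤ ∫ ω, zi (ζ ω) * (1 - Real.exp (-(s * κ ω))) ∂P ∧
    ∫ ω, zi (ζ ω) * (1 - Real.exp (-(s * κ ω))) ∂P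
      ≤ (s * δ + (P {ω | δ < κ ω ∧ ζ ω = true}).toReal / (P {ω | ζ ω = true}).toReal)
        * (P {ω | ζ ω = true}).toReal := by
  have hb : ∀ ω, 0 ≤ 1 - Real.exp (-(s * κ ω)) ∧ 1 - Real.exp (-(s * κ ω)) ≤ 1 ∧
      1 - Real.exp (-(s * κ ω)) ≤ s * κ ω := by
    intro ω
    have h1 := mul_nonneg hs.le (hκnn ω)
    have h2 : Real.exp (-(s * κ ω)) ≤ 1 := Real.exp_le_one_iff.2 (by linarith)
    have h3 := Real.exp_pos (-(s * κ ω))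
    have h4 := Real.add_one_le_exp (-(s * κ ω))
    refine ⟨?_, ?_, ?_⟩ <;> linarith
  refine ⟨integral_nonneg fun ω => mul_nonneg (zi_nonneg _) (hb ω).1, ?_⟩
  have m1 : MeasurableSet {ω | ζ ω = true} := measurableSet_eq_fun hζ measurable_const
  have m2 : MeasurableSet {ω | δ < κ ω ∧ ζ ω = true} :=
    (measurableSet_lt measurable_const hκ).inter m1
  have hz : Measurable fun ω => zi (ζ ω) := zi_meas.comp hζ
  have hle : ∫ ω, zi (ζ ω) * (1 - Real.exp (-(s * κ ω))) ∂P
      ≤ ∫ ω, ((s * δ) * {ω | ζ ω = true}.indicator (fun _ => (1:ℝ)) ω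
        + {ω | δ < κ ω ∧ ζ ω = true}.indicator (fun _ => (1:ℝ)) ω) ∂P := by
    refine integral_mono ?_ ?_ ?_
    · refine Integrable.of_bound (C := 1) (by fun_prop) (Eventually.of_forall fun ω => ?_)
      rw [Real.norm_eq_abs, abs_of_nonneg (mul_nonneg (zi_nonneg _) (hb ω).1)]
      exact mul_le_one₀ (zi_le_one _) (hb ω).1 (hb ω).2.1
    · exact (((integrable_const _).indicator m1).const_mul _).add
        ((integrable_const _).indicator m2)
    · intro ω
      obtain ⟨h1, h2, h3⟩ := hb ω
      have hsd := mul_pos hs hδ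
      by_cases hz : ζ ω = true
      · by_cases hd : δ < κ ω
        · simp [zi, hz, hd, Set.indicator]
          have := Real.exp_pos (-(s * κ ω))
          linarith
        · simp [zi, hz, hd, Set.indicator]
          push Not at hd
          have := mul_le_mul_of_nonneg_left hd hs.le
          linarith
      · simp [zi, hz, Set.indicator]
  refine hle.trans ?_
  rw [integral_add (((integrable_const _).indicator m1).const_mul _)
        ((integrable_const _).indicator m2), integral_const_mul, integral_indicator m1,
        integral_indicator m2]
  simp only [integral_const, smul_eq_mul, mul_one, Measure.real, Measure.restrict_apply_univ]
  rw [add_mul]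
  refine add_le_add le_rfl ?_
  by_cases h0 : (P {ω | ζ ω = true}).toReal = 0
  · rw [h0, mul_zero, ← h0]
    exact ENNReal.toReal_mono (measure_ne_top _ _) (measure_mono fun ω h => h.2)
  · rw [div_mul_cancel₀ _ h0]

theorem floor_lim (x : ℝ → ℝ) (hx0 : ∀ᶠ ε in 𝓝[>] (0:ℝ), 0 < x ε)
    (hx : Tendsto x (𝓝[>] (0:ℝ)) (𝓝 0)) (τ : ℝ) (hτ : 0 ≤ τ) :
    Tendsto (fun ε => x ε * (Nat.floor (τ * (x ε)⁻¹) : ℝ)) (𝓝[>] (0:ℝ)) (𝓝 τ) := by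
  have h1 : Tendsto (fun ε => τ - x ε) (𝓝[>] (0:ℝ)) (𝓝 τ) := by
    simpa using (tendsto_const_nhds (x := τ)).sub hx
  refine tendsto_of_tendsto_of_tendsto_of_le_of_le' h1 tendsto_const_nhds ?_ ?_
  · filter_upwards [hx0] with ε h
    have h2 := (Nat.lt_floor_add_one (τ * (x ε)⁻¹)).le
    have h3 := mul_le_mul_of_nonneg_left h2 h.le
    have h4 : x ε * (τ * (x ε)⁻¹) = τ := by field_simp
    rw [h4] at h3
    linarith
  · filter_upwards [hx0] with ε h
    have h2 := Nat.floor_le (a := τ * (x ε)⁻¹) (by positivity)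
    have h3 := mul_le_mul_of_nonneg_left h2 h.le
    have h4 : x ε * (τ * (x ε)⁻¹) = τ := by field_simp
    rwa [h4] at h3

/-- Integral against a mixture of finitely many measures. -/
theorem mix_bound {m : ℕ} {Ω : Type} [MeasurableSpace Ω] (P : Fin m → Measure Ω)
    (hprob : ∀ i, IsProbabilityMeasure (P i)) (q : Fin m → ℝ) (hq : ∀ i, 0 ≤ q i)
    (hq1 : ∑ i, q i = 1) (S : Set Ω) (F : Ω → ℝ) (hF : Measurable F)
    (hFb : ∀ ω, |F ω| ≤ 1) (L B : ℝ) (hB : ∀ i, |∫ ω in S, F ω ∂(P i) - L| ≤ B) :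
    |∫ ω in S, F ω ∂(∑ i, ENNReal.ofReal (q i) • P i) - L| ≤ B := by
  have hi : ∀ i, Integrable F ((P i).restrict S) := fun i =>
    Integrable.of_bound (C := 1) hF.aestronglyMeasurable (Eventually.of_forall hFb)
  have e : ∫ ω in S, F ω ∂(∑ i, ENNReal.ofReal (q i) • P i)
      = ∑ i, q i * ∫ ω in S, F ω ∂(P i) := by
    rw [← Measure.sum_fintype, Measure.restrict_sum_of_countable, Measure.sum_fintype,
      integral_finsetSum_measure]
    · refine Finset.sum_congr rfl fun i _ => ?_
      rw [Measure.restrict_smul, integral_smul_measure, ENNReal.toReal_ofReal (hq i), smul_eq_mul]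
    · intro i _
      rw [Measure.restrict_smul]
      exact (hi i).smul_measure ENNReal.ofReal_ne_top
  rw [e]
  have e2 : L = ∑ i, q i * L := by rw [← Finset.sum_mul, hq1, one_mul]
  rw [e2, ← Finset.sum_sub_distrib]
  calc |∑ i, (q i * ∫ ω in S, F ω ∂(P i) - q i * L)|
      ≤ ∑ i, |q i * ∫ ω in S, F ω ∂(P i) - q i * L| := Finset.abs_sum_le_sum_abs _ _
    _ ≤ ∑ i, q i * B := by
        refine Finset.sum_le_sum fun i _ => ?_
        rw [← mul_sub, abs_mul, abs_of_nonneg (hq i)]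
        exact mul_le_mul_of_nonneg_left (hB i) (hq i)
    _ = B := by rw [← Finset.sum_mul, hq1, one_mul]

/-- Lemma 9: under conditions A, B, C and D₁, the pair
`(ν*_ε, κ_ε(·))` converges jointly in distribution to `(ν₀, θ₀(·))`, where `ν₀` is
exponential with parameter 1, `θ₀(·)` is a nonnegative Lévy process with
`E e^{−sθ₀(t)} = e^{−tA(s)}`, and `ν₀` and `θ₀(·)` are independent.  Here the event
`{ν*_ε > u}` is the event that no rare event occurs among the steps `n ≥ 1` with
`p_ε n ≤ u`. -/
theorem stmt16 {m : ℕ} (hm : 0 < m) (ε₀ : ℝ) (hε₀ : 0 < ε₀)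
    {Ω : Type} [MeasurableSpace Ω]
    (η : ℝ → ℕ → Ω → Fin m) (κ : ℝ → ℕ → Ω → ℝ) (ζ : ℝ → ℕ → Ω → Bool)
    (Pstart : ℝ → Fin m → Measure Ω)
    (hprob : ∀ ε i, IsProbabilityMeasure (Pstart ε i))
    (hmeas : ∀ ε n, Measurable (η ε n) ∧ Measurable (κ ε n) ∧ Measurable (ζ ε n))
    (hκnn : ∀ ε n ω, 0 ≤ κ ε n ω)
    (Q : ℝ → Fin m → Fin m → ℝ → Bool → ℝ)
    (hMRP : ∀ ε ∈ Ioc (0:ℝ) ε₀, ∀ n : ℕ, ∀ I : ℕ → Fin m, ∀ T : ℕ → ℝ, ∀ Z : ℕ → Bool,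
      Pstart ε (I 0)
          {ω | ∀ k ≤ n, (η ε k ω = I k ∧ (1 ≤ k → (κ ε k ω ≤ T k ∧ ζ ε k ω = Z k)))}
        = ENNReal.ofReal (∏ k ∈ Finset.Icc 1 n, Q ε (I (k - 1)) (I k) (T k) (Z k)))
    (p : ℝ → Fin m → Fin m → ℝ)
    (hp : ∀ ε ∈ Ioc (0:ℝ) ε₀, ∀ i j, p ε i j = (Pstart ε i {ω | η ε 1 ω = j}).toReal)
    (hB : CondB p)
    (π : ℝ → Fin m → ℝ)
    (hπ : ∀ᶠ ε in 𝓝[>] (0:ℝ), IsStationaryDist (fun i j => p ε i j) (π ε))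
    -- condition A
    (hA1 : ∀ ε ∈ Ioc (0:ℝ) ε₀, ∃ i, 0 < rareP Pstart ζ ε i)
    (hA2 : ∀ i, Tendsto (fun ε => rareP Pstart ζ ε i) (𝓝[>] (0:ℝ)) (𝓝 0))
    -- condition C
    (hC : ∀ i : Fin m, ∀ δ > 0, Tendsto
      (fun ε => (Pstart ε i {ω | δ < κ ε 1 ω ∧ ζ ε 1 ω = true}).toReal / rareP Pstart ζ ε i)
      (𝓝[>] (0:ℝ)) (𝓝 0))
    -- condition D₁, with v_ε = p_ε⁻¹
    (A : ℝ → ℝ)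
    (hD : ∀ s > 0, Tendsto
      (fun ε => (avgRare Pstart ζ π ε)⁻¹ * (1 - lapPhi Pstart κ π ε s))
      (𝓝[>] (0:ℝ)) (𝓝 (A s)))
    (hApos : ∀ s > 0, 0 < A s)
    (hA0 : Tendsto A (𝓝[>] (0:ℝ)) (𝓝 0))
    -- arbitrary family of initial distributions
    (q : ℝ → Fin m → ℝ) (Pq : ℝ → Measure Ω)
    (hq : ∀ ε ∈ Ioc (0:ℝ) ε₀, (∀ i, 0 ≤ q ε i) ∧ ∑ i, q ε i = 1)
    (hmix : ∀ ε ∈ Ioc (0:ℝ) ε₀, Pq ε = ∑ i, ENNReal.ofReal (q ε i) • Pstart ε i) :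
    ∀ u : ℝ, 0 ≤ u → ∀ n : ℕ, ∀ t : ℕ → ℝ, t 0 = 0 → (∀ r < n, t r ≤ t (r + 1)) →
    ∀ s : ℕ → ℝ, (∀ r, 1 ≤ r → r ≤ n → 0 < s r) →
    Tendsto
      (fun ε => ∫ ω in {ω | ∀ n' : ℕ, 1 ≤ n' →
          avgRare Pstart ζ π ε * (n' : ℝ) ≤ u → ζ ε n' ω = false},
        Real.exp (-(∑ r ∈ Finset.Icc 1 n,
          s r * (stepSumRE Pstart κ ζ π ε (t r) ω - stepSumRE Pstart κ ζ π ε (t (r - 1)) ω)))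
        ∂(Pq ε))
      (𝓝[>] (0:ℝ))
      (𝓝 (Real.exp (-u) * Real.exp (-(∑ r ∈ Finset.Icc 1 n, A (s r) * (t r - t (r - 1)))))) := by
  intro u hu n t ht0 htm s hs
  set x : ℝ → ℝ := avgRare Pstart ζ π with hxd
  have hIoc : ∀ᶠ ε in 𝓝[>] (0:ℝ), ε ∈ Ioc (0:ℝ) ε₀ := Ioc_mem_nhdsGT hε₀
  have hp0 : ∀ᶠ ε in 𝓝[>] (0:ℝ), ∀ i j, 0 ≤ p ε i j := by
    filter_upwards [hIoc] with ε hε i j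
    rw [hp ε hε]; exact ENNReal.toReal_nonneg
  obtain ⟨Nc, hNc, c, hc, hcov, b, hb0, hb1, hb⟩ := condB_ev p hp0 hB
  have hmR : (0:ℝ) < m := by exact_mod_cast hm
  set c0 : ℝ := b ^ Nc / m with hc0d
  have hc0 : 0 < c0 := by positivity
  have hπlow : ∀ᶠ ε in 𝓝[>] (0:ℝ), ∀ i, c0 ≤ π ε i := by
    filter_upwards [hp0, hb, hπ] with ε h1 h2 h3
    exact pi_lower hm (p ε) h1 Nc hNc c hc hcov b hb0 hb1 h2 (π ε) h3
  have hrnn : ∀ ε i, 0 ≤ rareP Pstart ζ ε i := fun ε i => ENNReal.toReal_nonneg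
  have hxlow : ∀ᶠ ε in 𝓝[>] (0:ℝ), ∀ i, c0 * rareP Pstart ζ ε i ≤ x ε := by
    filter_upwards [hπlow, hπ] with ε h1 h2 i
    calc c0 * rareP Pstart ζ ε i ≤ π ε i * rareP Pstart ζ ε i :=
          mul_le_mul_of_nonneg_right (h1 i) (hrnn ε i)
      _ ≤ x ε := Finset.single_le_sum (f := fun i => π ε i * rareP Pstart ζ ε i)
          (fun i _ => mul_nonneg (h2.1 i) (hrnn ε i)) (Finset.mem_univ i)
  have hxpos : ∀ᶠ ε in 𝓝[>] (0:ℝ), 0 < x ε := by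
    filter_upwards [hxlow, hIoc] with ε h1 h2
    obtain ⟨i, hi⟩ := hA1 ε h2
    exact (mul_pos hc0 hi).trans_le (h1 i)
  have hx0 : Tendsto x (𝓝[>] (0:ℝ)) (𝓝 0) := by
    have h1 : Tendsto (fun ε => ∑ i, rareP Pstart ζ ε i) (𝓝[>] (0:ℝ)) (𝓝 0) := by
      simpa using tendsto_finsetSum (f := fun i ε => rareP Pstart ζ ε i) (a := fun _ => (0:ℝ))
        Finset.univ (fun i _ => hA2 i)
    refine tendsto_of_tendsto_of_tendsto_of_le_of_le' tendsto_const_nhds h1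
      (hxpos.mono fun ε h => h.le) ?_
    filter_upwards [hπ] with ε h
    refine Finset.sum_le_sum fun i _ => mul_le_of_le_one_left (hrnn ε i) ?_
    rw [← h.2.1]
    exact Finset.single_le_sum (f := π ε) (fun i _ => h.1 i) (Finset.mem_univ i)
  have hs' : ∀ r < n, 0 < s (r + 1) := fun r hr => hs (r + 1) (by omega) (by omega)
  -- monotonicity of the times
  have htmono : ∀ r r', r ≤ r' → r' ≤ n → t r ≤ t r' := by
    intro r r' hrr
    induction r', hrr using Nat.le_induction with
    | base => intro _; exact le_rfl
    | succ k hk ih => intro hkn; exact (ih (by omega)).trans (htm k (by omega))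
  have htnn : ∀ r ≤ n, 0 ≤ t r := fun r hr => by
    rw [← ht0]; exact htmono 0 r (Nat.zero_le _) hr
  -- the rates
  set α : ℕ → ℝ → ℝ := fun r ε => (x ε)⁻¹ * (1 - lapPhi Pstart κ π ε (s (r + 1))) with hαd
  have hαlim : ∀ r < n, Tendsto (α r) (𝓝[>] (0:ℝ)) (𝓝 (A (s (r + 1)))) := fun r hr =>
    hD _ (hs' r hr)
  set G0 : ℝ := 1 + ∑ r ∈ Finset.range n, (|A (s (r + 1))| + 1) with hG0d
  have hG0 : 1 ≤ G0 := by
    have : 0 ≤ ∑ r ∈ Finset.range n, (|A (s (r + 1))| + 1) :=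
      Finset.sum_nonneg fun r _ => by positivity
    linarith
  have hαG : ∀ᶠ ε in 𝓝[>] (0:ℝ), ∀ r ∈ Finset.range n, α r ε ≤ G0 := by
    rw [Filter.eventually_all_finset]
    intro r hr
    have h1 : A (s (r + 1)) < G0 := by
      have h2 : |A (s (r + 1))| + 1 ≤ ∑ r ∈ Finset.range n, (|A (s (r + 1))| + 1) :=
        Finset.single_le_sum (f := fun r => |A (s (r + 1))| + 1)
          (fun r _ => by positivity) hr
      have h3 := le_abs_self (A (s (r + 1)))
      linarith
    exact ((hαlim r (Finset.mem_range.1 hr)).eventually_lt_const h1).mono fun ε h => h.le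
  -- the cross terms
  set cr : Fin m → ℕ → ℝ → ℝ := fun i r ε =>
    ∫ ω, zi (ζ ε 1 ω) * (1 - Real.exp (-(s (r + 1) * κ ε 1 ω))) ∂(Pstart ε i) with hcrd
  have hcr0 : ∀ i, ∀ r < n, ∀ ε, 0 ≤ cr i r ε := fun i r hr ε =>
    (cross_le (Pstart ε i) (κ ε 1) (ζ ε 1) (hmeas ε 1).2.1 (hmeas ε 1).2.2 (hκnn ε 1)
      (s (r + 1)) 1 (hs' r hr) one_pos).1
  have hcrlim : ∀ i, ∀ r < n, Tendsto (fun ε => cr i r ε / x ε) (𝓝[>] (0:ℝ)) (𝓝 0) := by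
    intro i r hr
    rw [tendsto_order]
    constructor
    · intro a ha
      filter_upwards [hxpos] with ε h
      exact ha.trans_le (div_nonneg (hcr0 i r hr ε) h.le)
    · intro e he
      have hsr := hs' r hr
      have hδ : 0 < e * c0 / (3 * s (r + 1)) := by positivity
      have h1 := (hC i _ hδ).eventually_lt_const (show (0:ℝ) < e * c0 / 3 by positivity)
      filter_upwards [h1, hxpos, hxlow] with ε h2 h3 h4
      have h5 := (cross_le (Pstart ε i) (κ ε 1) (ζ ε 1) (hmeas ε 1).2.1 (hmeas ε 1).2.2
        (hκnn ε 1) (s (r + 1)) _ hsr hδ).2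
      have h6 : s (r + 1) * (e * c0 / (3 * s (r + 1))) = e * c0 / 3 := by
        field_simp
      rw [h6] at h5
      have h7 : cr i r ε ≤ (e * c0 / 3 + e * c0 / 3) * rareP Pstart ζ ε i :=
        h5.trans (mul_le_mul_of_nonneg_right (add_le_add le_rfl h2.le) (hrnn ε i))
      rw [div_lt_iff₀ h3]
      have h8 := mul_le_mul_of_nonneg_left (h4 i) he.le
      have h9 := mul_pos he h3
      nlinarith
  set ρ : ℝ → ℝ := fun ε => ∑ i, ∑ r ∈ Finset.range n, cr i r ε / x ε with hρd
  have hρlim : Tendsto ρ (𝓝[>] (0:ℝ)) (𝓝 0) := by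
    have := tendsto_finsetSum (f := fun i ε => ∑ r ∈ Finset.range n, cr i r ε / x ε)
      (a := fun _ => (0:ℝ)) (x := 𝓝[>] (0:ℝ)) Finset.univ (fun i _ => by
        have := tendsto_finsetSum (f := fun r ε => cr i r ε / x ε) (a := fun _ => (0:ℝ))
          (x := 𝓝[>] (0:ℝ)) (Finset.range n) (fun r hr => hcrlim i r (Finset.mem_range.1 hr))
        simpa using this)
    simpa using this
  set G : ℝ := G0 / (b ^ Nc / m) with hGd
  set C : ℝ := Nc * G / b ^ Nc with hCd
  set Nf : ℝ → ℕ → ℕ := fun ε r => Nat.floor (t r * (x ε)⁻¹) with hNfd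
  set Kf : ℝ → ℕ := fun ε => Nat.floor (u * (x ε)⁻¹) with hKfd
  have hNlim : ∀ r ≤ n, Tendsto (fun ε => x ε * (Nf ε r : ℝ)) (𝓝[>] (0:ℝ)) (𝓝 (t r)) :=
    fun r hr => floor_lim x hxpos hx0 (t r) (htnn r hr)
  have hKlim : Tendsto (fun ε => x ε * (Kf ε : ℝ)) (𝓝[>] (0:ℝ)) (𝓝 u) :=
    floor_lim x hxpos hx0 u hu
  set Λ : ℝ → ℝ := fun ε => Real.exp (-(x ε * (∑ r ∈ Finset.range n,
    α r ε * ((Nf ε (r + 1) : ℝ) - Nf ε r) + Kf ε))) with hΛd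
  have hsumconv : ∀ f : ℕ → ℕ → ℝ, ∑ r ∈ Finset.Icc 1 n, f r (r - 1)
      = ∑ r ∈ Finset.range n, f (r + 1) r := by
    intro f
    rw [← Finset.Ico_succ_right_eq_Icc, Finset.sum_Ico_eq_sum_range]
    simp [add_comm 1]
  have hΛlim : Tendsto Λ (𝓝[>] (0:ℝ)) (𝓝 (Real.exp (-u) *
      Real.exp (-(∑ r ∈ Finset.Icc 1 n, A (s r) * (t r - t (r - 1)))))) := by
    rw [hsumconv fun a b => A (s a) * (t a - t b), ← Real.exp_add]
    refine (Real.continuous_exp.tendsto _).comp ?_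
    have h1 : Tendsto (fun ε => ∑ r ∈ Finset.range n,
        α r ε * (x ε * (Nf ε (r + 1) : ℝ) - x ε * Nf ε r)) (𝓝[>] (0:ℝ))
        (𝓝 (∑ r ∈ Finset.range n, A (s (r + 1)) * (t (r + 1) - t r))) :=
      tendsto_finsetSum _ fun r hr => by
        have hr' := Finset.mem_range.1 hr
        exact (hαlim r hr').mul ((hNlim (r + 1) (by omega)).sub (hNlim r (by omega)))
    have h2 := (hKlim.neg).add h1.neg
    refine h2.congr fun ε => ?_
    rw [mul_add, Finset.mul_sum, neg_add_rev]
    congr 2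
    refine Finset.sum_congr rfl fun r _ => ?_
    ring
  set Bd : ℝ → ℝ := fun ε => 4 * x ε * (n + 1 : ℕ) * C
    + (((Kf ε + Nf ε n : ℕ) : ℝ) * x ε) * (ρ ε + x ε * (2 * (n + 1 : ℕ) ^ 2 * C * G
          + (n + 1 : ℕ) ^ 2 * G ^ 2)) with hBd
  have hBlim : Tendsto Bd (𝓝[>] (0:ℝ)) (𝓝 0) := by
    have h1 : Tendsto (fun ε => ((Kf ε + Nf ε n : ℕ) : ℝ) * x ε) (𝓝[>] (0:ℝ)) (𝓝 (u + t n)) := by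
      refine (hKlim.add (hNlim n le_rfl)).congr fun ε => ?_
      push_cast; ring
    have h2 := ((((hx0.const_mul 4).mul_const ((n + 1 : ℕ) : ℝ)).mul_const C).add
      (h1.mul (hρlim.add (hx0.mul_const (2 * ((n + 1 : ℕ) : ℝ) ^ 2 * C * G
          + ((n + 1 : ℕ) : ℝ) ^ 2 * G ^ 2)))))
    have h3 : (4 * 0 * ((n + 1 : ℕ) : ℝ) * C + (u + t n) * (0 + 0 * (2 * ((n + 1 : ℕ) : ℝ) ^ 2 * C * G
          + ((n + 1 : ℕ) : ℝ) ^ 2 * G ^ 2))) = 0 := by ring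
    rw [h3] at h2
    exact h2
  have hdiff : ∀ᶠ ε in 𝓝[>] (0:ℝ), |(∫ ω in {ω | ∀ n' : ℕ, 1 ≤ n' →
          x ε * (n' : ℝ) ≤ u → ζ ε n' ω = false},
        Real.exp (-(∑ r ∈ Finset.Icc 1 n,
          s r * (stepSumRE Pstart κ ζ π ε (t r) ω - stepSumRE Pstart κ ζ π ε (t (r - 1)) ω)))
        ∂(Pq ε)) - Λ ε| ≤ Bd ε := by
    filter_upwards [hIoc, hb, hπ, hxpos, hαG] with ε hε hbε hπε hxε hαε
    have hNmono : ∀ r r', r ≤ r' → r' ≤ n → Nf ε r ≤ Nf ε r' := fun r r' h1 h2 =>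
      Nat.floor_le_floor (mul_le_mul_of_nonneg_right (htmono r r' h1 h2) (inv_pos.2 hxε).le)
    have hset : {ω | ∀ n' : ℕ, 1 ≤ n' → x ε * (n' : ℝ) ≤ u → ζ ε n' ω = false}
        = {ω | ∀ n' : ℕ, 1 ≤ n' → n' ≤ Kf ε → ζ ε n' ω = false} := by
      have : ∀ n' : ℕ, x ε * (n' : ℝ) ≤ u ↔ n' ≤ Kf ε := by
        intro n'
        rw [hKfd, Nat.le_floor_iff (mul_nonneg hu (inv_pos.2 hxε).le), ← div_eq_mul_inv,
          le_div_iff₀ hxε, mul_comm]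
      simp only [this]
    have hfun : ∀ ω, (∑ r ∈ Finset.Icc 1 n,
          s r * (stepSumRE Pstart κ ζ π ε (t r) ω - stepSumRE Pstart κ ζ π ε (t (r - 1)) ω))
        = ∑ r ∈ Finset.range n, s (r + 1) *
          ((∑ k ∈ Finset.Icc 1 (Nf ε (r + 1)), κ ε k ω) - ∑ k ∈ Finset.Icc 1 (Nf ε r), κ ε k ω) := by
      intro ω
      exact hsumconv fun a b =>
        s a * (stepSumRE Pstart κ ζ π ε (t a) ω - stepSumRE Pstart κ ζ π ε (t b) ω)
    simp only [hfun]
    rw [hset, hmix ε hε]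
    refine mix_bound (Pstart ε) (hprob ε) (q ε) (hq ε hε).1 (hq ε hε).2 _ _ ?_ ?_ _ _ ?_
    · have : ∀ k, Measurable (κ ε k) := fun k => (hmeas ε k).2.1
      fun_prop
    · intro ω
      rw [abs_of_pos (Real.exp_pos _), Real.exp_le_one_iff]
      refine neg_nonpos.2 (Finset.sum_nonneg fun r hr => ?_)
      have hr' := Finset.mem_range.1 hr
      refine mul_nonneg (hs' r hr').le (sub_nonneg.2 ?_)
      exact Finset.sum_le_sum_of_subset_of_nonneg
        (Finset.Icc_subset_Icc_right (hNmono r (r + 1) (by omega) (by omega)))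
        (fun k _ _ => hκnn ε k ω)
    · intro i
      refine eps_bound hm (η ε) (κ ε) (ζ ε) (Pstart ε) (hprob ε) (hmeas ε) (hκnn ε) (Q ε)
        (hMRP ε hε) (p ε) (hp ε hε) Nc hNc c hc hcov b hb0 hb1 hbε (π ε) hπε (x ε) hxε rfl
        n (Nf ε) hNmono (Kf ε) s hs' G0 (ρ ε) hG0 ?_ ?_ G C hGd hCd _ rfl i
      · intro r hr
        exact hαε r (Finset.mem_range.2 hr)
      · intro i
        have h1 : ∑ r ∈ Finset.range n, cr i r ε / x ε ≤ ρ ε :=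
          Finset.single_le_sum (f := fun i => ∑ r ∈ Finset.range n, cr i r ε / x ε)
            (fun i _ => Finset.sum_nonneg fun r hr =>
              div_nonneg (hcr0 i r (Finset.mem_range.1 hr) ε) hxε.le) (Finset.mem_univ i)
        rw [← Finset.sum_div, div_le_iff₀ hxε] at h1
        rw [mul_comm]
        exact h1
  have h0 := squeeze_zero_norm' (hdiff.mono fun ε h => (Real.norm_eq_abs _).le.trans h) hBlim
  have h1 := h0.add hΛlim
  rw [zero_add] at h1
  exact h1.congr fun ε => sub_add_cancel _ _
end
end

section
/- Suppose condition B holds with ring chain i₀, i₁, …, i_N = i₀. Then there exist p ∈ (0,1) and ε_p ∈ (0, ε₀] such that for all ε ∈ (0, ε_p], all states i, j ∈ X and all integers k ≥ 1: P_i(α_{ε,j} > kN) ≤ (1 − p)^k, where α_{ε,j} = min{n ≥ 1 : η_{ε,n} = j} is the first hitting time of state j. Consequently, there exists K_p < ∞ such that max_{i,j∈X} E_i α_{ε,j}² ≤ K_p for all ε ∈ (0, ε_p]. -/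
open MeasureTheory Filter Set
open scoped Topology ENNReal

noncomputable section

/-- Probability of avoiding `j` during the first `n` steps, by first-step analysis. -/
def avoidProb {m : ℕ} (P : Fin m → Fin m → ℝ) (j : Fin m) : ℕ → Fin m → ℝ
  | 0, _ => 1
  | n + 1, i => ∑ l, P i l * (if l = j then 0 else avoidProb P j n l)

section avoid
variable {m : ℕ} {P : Fin m → Fin m → ℝ} {j : Fin m}

lemma avoidProb_nonneg (h0 : ∀ i l, 0 ≤ P i l) (n : ℕ) : ∀ i, 0 ≤ avoidProb P j n i := by
  induction n with
  | zero => intro i; simp [avoidProb]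
  | succ n ih =>
    intro i
    rw [avoidProb]
    refine Finset.sum_nonneg fun l _ => mul_nonneg (h0 i l) ?_
    split_ifs
    · exact le_rfl
    · exact ih l

lemma avoidProb_succ_le (h0 : ∀ i l, 0 ≤ P i l) (h1 : ∀ i, ∑ l, P i l = 1) (n : ℕ) :
    ∀ i, avoidProb P j (n + 1) i ≤ avoidProb P j n i := by
  induction n with
  | zero =>
    intro i
    calc avoidProb P j 1 i = ∑ l, P i l * (if l = j then 0 else 1) := by simp [avoidProb]
      _ ≤ ∑ l, P i l := by
        refine Finset.sum_le_sum fun l _ => ?_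
        split_ifs
        · simpa using h0 i l
        · simp
      _ = avoidProb P j 0 i := by rw [h1]; simp [avoidProb]
  | succ n ih =>
    intro i
    rw [avoidProb, avoidProb]
    refine Finset.sum_le_sum fun l _ => mul_le_mul_of_nonneg_left ?_ (h0 i l)
    split_ifs
    · exact le_rfl
    · exact ih l

lemma avoidProb_anti (h0 : ∀ i l, 0 ≤ P i l) (h1 : ∀ i, ∑ l, P i l = 1) (i : Fin m) :
    Antitone (fun n => avoidProb P j n i) :=
  antitone_nat_of_succ_le fun n => avoidProb_succ_le h0 h1 n i

lemma avoidProb_le_one (h0 : ∀ i l, 0 ≤ P i l) (h1 : ∀ i, ∑ l, P i l = 1) (n : ℕ) (i : Fin m) :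
    avoidProb P j n i ≤ 1 := by
  have := avoidProb_anti (j := j) h0 h1 i (Nat.zero_le n)
  simpa [avoidProb] using this

lemma avoidProb_add_le (h0 : ∀ i l, 0 ≤ P i l) {N : ℕ} {r : ℝ}
    (hr : ∀ i, avoidProb P j N i ≤ r) (n : ℕ) :
    ∀ i, avoidProb P j (n + N) i ≤ r * avoidProb P j n i := by
  induction n with
  | zero => intro i; simpa [avoidProb] using hr i
  | succ n ih =>
    intro i
    rw [show n + 1 + N = (n + N) + 1 by ring, avoidProb, avoidProb, Finset.mul_sum]
    refine Finset.sum_le_sum fun l _ => ?_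
    rw [mul_left_comm]
    refine mul_le_mul_of_nonneg_left ?_ (h0 i l)
    split_ifs
    · simp
    · exact ih l

lemma avoidProb_mul_le (h0 : ∀ i l, 0 ≤ P i l) {N : ℕ} {r : ℝ} (hr0 : 0 ≤ r)
    (hr : ∀ i, avoidProb P j N i ≤ r) (k : ℕ) (i : Fin m) :
    avoidProb P j (k * N) i ≤ r ^ k := by
  induction k with
  | zero => simp [avoidProb]
  | succ k ih =>
    rw [Nat.succ_mul, pow_succ']
    exact (avoidProb_add_le h0 hr _ i).trans (mul_le_mul_of_nonneg_left ih hr0)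

lemma avoidProb_path (h0 : ∀ i l, 0 ≤ P i l) (h1 : ∀ i, ∑ l, P i l = 1)
    {δ : ℝ} (hδ : 0 ≤ δ) {d : ℕ → Fin m} (hd : ∀ t, δ ≤ P (d t) (d (t + 1))) (t : ℕ) :
    ∀ a, d (a + (t + 1)) = j → avoidProb P j (t + 1) (d a) ≤ 1 - δ ^ (t + 1) := by
  induction t with
  | zero =>
    intro a ha
    have key : avoidProb P j 1 (d a) + P (d a) j = 1 := by
      rw [← h1 (d a)]
      rw [avoidProb, ← Finset.sum_erase_add _ _ (Finset.mem_univ j),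
        ← Finset.sum_erase_add _ (fun l => P (d a) l) (Finset.mem_univ j)]
      simp only [if_true, mul_zero, add_zero]
      congr 1
      refine Finset.sum_congr rfl fun l hl => ?_
      simp [(Finset.mem_erase.1 hl).1, avoidProb]
    have := hd a
    simp only [zero_add] at ha ⊢
    rw [ha] at this
    rw [pow_one]
    linarith
  | succ t ih =>
    intro a ha
    have ih' := ih (a + 1) (by rw [← ha]; congr 1; ring)
    set f : Fin m → ℝ := fun l => if l = j then 0 else avoidProb P j (t + 1) l with hf
    have hf1 : ∀ l, f l ≤ 1 := by
      intro l
      simp only [hf]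
      split_ifs
      · exact zero_le_one
      · exact avoidProb_le_one h0 h1 _ _
    have hf2 : f (d (a + 1)) ≤ 1 - δ ^ (t + 1) := by
      refine le_trans ?_ ih'
      simp only [hf]
      split_ifs
      · exact avoidProb_nonneg h0 _ _
      · exact le_rfl
    have e : avoidProb P j (t + 1 + 1) (d a) = 1 - ∑ l, P (d a) l * (1 - f l) := by
      rw [avoidProb]
      simp only [mul_sub, mul_one, Finset.sum_sub_distrib, h1]
      simp [hf]
    rw [e]
    have h3 : P (d a) (d (a + 1)) * (1 - f (d (a + 1))) ≤ ∑ l, P (d a) l * (1 - f l) :=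
      Finset.single_le_sum (f := fun l => P (d a) l * (1 - f l))
        (fun l _ => mul_nonneg (h0 _ _) (by linarith [hf1 l])) (Finset.mem_univ _)
    have h4 : δ * δ ^ (t + 1) ≤ P (d a) (d (a + 1)) * (1 - f (d (a + 1))) :=
      mul_le_mul (hd a) (by linarith) (by positivity) (h0 _ _)
    rw [pow_succ' δ (t + 1)]
    linarith

lemma avoidProb_ring (h0 : ∀ i l, 0 ≤ P i l) (h1 : ∀ i, ∑ l, P i l = 1)
    {δ : ℝ} (hδ : 0 ≤ δ) (hδ1 : δ ≤ 1) {N : ℕ} (hN : 0 < N) {c : ℕ → Fin m} (hring : c N = c 0)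
    (hall : ∀ i : Fin m, ∃ k ≤ N, c k = i) (hc : ∀ k < N, δ ≤ P (c k) (c (k + 1))) (i : Fin m) :
    avoidProb P j N i ≤ 1 - δ ^ N := by
  have hall' : ∀ i : Fin m, ∃ k < N, c k = i := by
    intro i
    obtain ⟨k, hk, rfl⟩ := hall i
    rcases hk.lt_or_eq with h | h
    · exact ⟨k, h, rfl⟩
    · exact ⟨0, hN, by rw [h, hring]⟩
  obtain ⟨a, ha, rfl⟩ := hall' i
  obtain ⟨b, hb, hbj⟩ := hall' j
  have hd : ∀ t, δ ≤ P (c (t % N)) (c ((t + 1) % N)) := by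
    intro t
    have ht := Nat.mod_lt t hN
    have := hc _ ht
    rcases (Nat.succ_le_of_lt ht).lt_or_eq with h | h
    · have e : (t + 1) % N = t % N + 1 := by
        rw [Nat.add_mod, Nat.mod_eq_of_lt (a := 1) (by omega), Nat.mod_eq_of_lt h]
      rw [e]; exact this
    · have e : (t + 1) % N = 0 := by
        rw [← Nat.mod_add_mod]
        simp only [Nat.succ_eq_add_one] at h
        rw [h, Nat.mod_self]
      simp only [Nat.succ_eq_add_one] at h
      rw [e, ← hring]; rwa [h] at this
  obtain ⟨t, htN, ht⟩ : ∃ t, t + 1 ≤ N ∧ (a + (t + 1)) % N = b := by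
    by_cases hab : a < b
    · exact ⟨b - a - 1, by omega, by
        rw [show a + (b - a - 1 + 1) = b by omega, Nat.mod_eq_of_lt hb]⟩
    · exact ⟨N + b - a - 1, by omega, by
        rw [show a + (N + b - a - 1 + 1) = N + b by omega, Nat.add_mod_left, Nat.mod_eq_of_lt hb]⟩
  have := avoidProb_path (j := j) h0 h1 hδ (d := fun t => c (t % N)) hd t a (by rw [ht, hbj])
  simp only [Nat.mod_eq_of_lt ha] at this
  have h2 := avoidProb_anti (j := j) h0 h1 (c a) htN
  have h3 : δ ^ N ≤ δ ^ (t + 1) := pow_le_pow_of_le_one hδ hδ1 htN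
  simp only at h2
  linarith

end avoid

lemma chain_avoid_aux {m : ℕ} {Ω : Type} [MeasurableSpace Ω] (η : ℕ → Ω → Fin m)
    (μ : Fin m → Measure Ω) (P : Fin m → Fin m → ℝ) (h0 : ∀ i l, 0 ≤ P i l)
    (hMC : ∀ n : ℕ, ∀ I : ℕ → Fin m,
      μ (I 0) {ω | ∀ k ≤ n, η k ω = I k}
        = ENNReal.ofReal (∏ k ∈ Finset.Icc 1 n, P (I (k - 1)) (I k))) (j : Fin m) (n : ℕ) :
    ∀ (s : ℕ) (I : ℕ → Fin m),
      μ (I 0) {ω | (∀ k ≤ s, η k ω = I k) ∧ ∀ k, s < k → k ≤ s + n → η k ω ≠ j}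
        ≤ ENNReal.ofReal ((∏ k ∈ Finset.Icc 1 s, P (I (k - 1)) (I k)) * avoidProb P j n (I s)) := by
  induction n with
  | zero =>
    intro s I
    rw [avoidProb, mul_one, ← hMC]
    exact measure_mono fun ω h => h.1
  | succ n ih =>
    intro s I
    set J : Fin m → ℕ → Fin m := fun l k => if k ≤ s then I k else l with hJ
    have hJ0 : ∀ l, J l 0 = I 0 := fun l => by simp [hJ]
    have hJs : ∀ l, J l (s + 1) = l := fun l => by simp [hJ]
    have hprod : ∀ l, ∏ k ∈ Finset.Icc 1 (s + 1), P (J l (k - 1)) (J l k)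
        = (∏ k ∈ Finset.Icc 1 s, P (I (k - 1)) (I k)) * P (I s) l := by
      intro l
      rw [Finset.prod_Icc_succ_top (by omega)]
      congr 1
      · refine Finset.prod_congr rfl fun k hk => ?_
        have := Finset.mem_Icc.1 hk
        simp only [hJ]
        rw [if_pos (by omega), if_pos (by omega)]
      · simp [hJ]
    have hpp : 0 ≤ ∏ k ∈ Finset.Icc 1 s, P (I (k - 1)) (I k) :=
      Finset.prod_nonneg fun k _ => h0 _ _
    have hsub : {ω | (∀ k ≤ s, η k ω = I k) ∧ ∀ k, s < k → k ≤ s + (n + 1) → η k ω ≠ j} ⊆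
        ⋃ l ∈ Finset.univ.filter (fun l => l ≠ j),
          {ω | (∀ k ≤ s + 1, η k ω = J l k) ∧ ∀ k, s + 1 < k → k ≤ s + 1 + n → η k ω ≠ j} := by
      rintro ω ⟨ha, hb⟩
      simp only [mem_iUnion]
      refine ⟨η (s + 1) ω, by simpa using hb (s + 1) (by omega) (by omega), ?_, ?_⟩
      · intro k hk
        simp only [hJ]
        split_ifs with h
        · exact ha k h
        · rw [show k = s + 1 by omega]
      · intro k hk hk'
        exact hb k (by omega) (by omega)
    refine (measure_mono hsub).trans ((measure_biUnion_finset_le _ _).trans ?_)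
    calc ∑ l ∈ Finset.univ.filter (fun l => l ≠ j), μ (I 0)
            {ω | (∀ k ≤ s + 1, η k ω = J l k) ∧ ∀ k, s + 1 < k → k ≤ s + 1 + n → η k ω ≠ j}
        ≤ ∑ l ∈ Finset.univ.filter (fun l => l ≠ j), ENNReal.ofReal
            ((∏ k ∈ Finset.Icc 1 s, P (I (k - 1)) (I k)) * P (I s) l * avoidProb P j n l) := by
          refine Finset.sum_le_sum fun l _ => ?_
          have := ih (s + 1) (J l)
          rwa [hprod, hJ0, hJs] at this
      _ = ENNReal.ofReal (∑ l ∈ Finset.univ.filter (fun l => l ≠ j),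
            ((∏ k ∈ Finset.Icc 1 s, P (I (k - 1)) (I k)) * P (I s) l * avoidProb P j n l)) := by
          rw [ENNReal.ofReal_sum_of_nonneg]
          intro l _
          exact mul_nonneg (mul_nonneg hpp (h0 _ _)) (avoidProb_nonneg h0 _ _)
      _ = _ := by
          congr 1
          rw [avoidProb, Finset.mul_sum, Finset.sum_filter]
          refine Finset.sum_congr rfl fun l _ => ?_
          by_cases h : l = j
          · simp [h]
          · simp [h, mul_assoc]

lemma chain_avoid {m : ℕ} {Ω : Type} [MeasurableSpace Ω] (η : ℕ → Ω → Fin m)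
    (hη : ∀ n, Measurable (η n))
    (μ : Fin m → Measure Ω) (hμ : ∀ i, IsProbabilityMeasure (μ i))
    (P : Fin m → Fin m → ℝ) (h0 : ∀ i l, 0 ≤ P i l)
    (hMC : ∀ n : ℕ, ∀ I : ℕ → Fin m,
      μ (I 0) {ω | ∀ k ≤ n, η k ω = I k}
        = ENNReal.ofReal (∏ k ∈ Finset.Icc 1 n, P (I (k - 1)) (I k))) (i j : Fin m) (n : ℕ) :
    μ i {ω | ∀ k : ℕ, 1 ≤ k → k ≤ n → η k ω ≠ j} ≤ ENNReal.ofReal (avoidProb P j n i) := by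
  have h := chain_avoid_aux η μ P h0 hMC j n 0 (fun _ => i)
  have h2 := hMC 0 (fun _ => i)
  simp only [Nat.le_zero, forall_eq] at h2
  have h3 : μ i {ω | η 0 ω = i}ᶜ = 0 := by
    rw [prob_compl_eq_zero_iff]
    · simpa using h2
    · exact hη 0 (measurableSet_singleton i)
  have hsub : {ω | ∀ k : ℕ, 1 ≤ k → k ≤ n → η k ω ≠ j} ⊆
      {ω | (∀ k ≤ 0, η k ω = i) ∧ ∀ k, 0 < k → k ≤ 0 + n → η k ω ≠ j} ∪ {ω | η 0 ω = i}ᶜ := by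
    intro ω hω
    by_cases hi : η 0 ω = i
    · left
      refine ⟨fun k hk => by rwa [Nat.le_zero.1 hk], fun k hk hk' => hω k hk (by omega)⟩
    · right; exact hi
  refine (measure_mono hsub).trans ((measure_union_le _ _).trans ?_)
  rw [h3, add_zero]
  simpa using h

lemma summable_tail {N : ℕ} (hN : 0 < N) {r : ℝ} (hr0 : 0 < r) (hr1 : r < 1) :
    Summable (fun n : ℕ => (2 * n + 1 : ℝ) * r ^ (n / N)) := by
  have hN' : (N : ℝ) ≠ 0 := by positivity
  set s : ℝ := r ^ ((N : ℝ)⁻¹) with hs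
  have hs0 : 0 < s := Real.rpow_pos_of_pos hr0 _
  have hs1 : s < 1 := Real.rpow_lt_one hr0.le hr1 (by positivity)
  have hsN : s ^ N = r := Real.rpow_inv_natCast_pow hr0.le hN.ne'
  have hn : ‖s‖ < 1 := by rwa [Real.norm_of_nonneg hs0.le]
  have S1 := summable_pow_mul_geometric_of_norm_lt_one 1 hn
  have S0 := summable_pow_mul_geometric_of_norm_lt_one 0 hn
  have S := ((S1.mul_left 2).add S0).mul_left r⁻¹
  refine Summable.of_nonneg_of_le (fun n => by positivity) (fun n => ?_) S
  have hk : r ^ (n / N) ≤ r⁻¹ * s ^ n := by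
    rw [← div_eq_inv_mul, le_div_iff₀ hr0, ← pow_succ, ← hsN, ← pow_mul]
    exact pow_le_pow_of_le_one hs0.le hs1.le (Nat.lt_mul_div_succ n hN).le
  calc (2 * n + 1 : ℝ) * r ^ (n / N) ≤ (2 * n + 1 : ℝ) * (r⁻¹ * s ^ n) :=
        mul_le_mul_of_nonneg_left hk (by positivity)
    _ = _ := by ring

/-- under condition B (given here by an explicit ring chain
`c 0, c 1, …, c N = c 0` containing all states, with
`liminf_{ε→0+} p ε (c (k-1)) (c k) > 0` for `k = 1, …, N`), there exist `p ∈ (0,1)` and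
`ε_p ∈ (0, ε₀]` such that the first hitting times `α_{ε,j}` satisfy the geometric tail
bound `P_i(α_{ε,j} > kN) ≤ (1 − p)^k`, and consequently the second moments
`E_i α_{ε,j}² = Σ_{n≥0} (2n+1) P_i(α_{ε,j} > n)` are bounded by a finite constant `K_p`,
uniformly in `ε ∈ (0, ε_p]` and `i, j ∈ X`.  Here `{α_{ε,j} > n}` is the event that the
chain does not visit `j` at any of the times `1, …, n`. -/
theorem stmt17 {m : ℕ} (hm : 0 < m) (ε₀ : ℝ) (hε₀ : 0 < ε₀)
    {Ω : Type} [MeasurableSpace Ω]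
    (η : ℝ → ℕ → Ω → Fin m)
    (Pstart : ℝ → Fin m → Measure Ω)
    (hprob : ∀ ε i, IsProbabilityMeasure (Pstart ε i))
    (hmeas : ∀ ε n, Measurable (η ε n))
    (p : ℝ → Fin m → Fin m → ℝ)
    (hpnn : ∀ ε ∈ Ioc (0:ℝ) ε₀, (∀ i j, 0 ≤ p ε i j) ∧ ∀ i, ∑ j, p ε i j = 1)
    -- Markov chain structure with transition probabilities p_{ε,ij}
    (hMC : ∀ ε ∈ Ioc (0:ℝ) ε₀, ∀ n : ℕ, ∀ I : ℕ → Fin m,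
      Pstart ε (I 0) {ω | ∀ k ≤ n, η ε k ω = I k}
        = ENNReal.ofReal (∏ k ∈ Finset.Icc 1 n, p ε (I (k - 1)) (I k)))
    -- condition B, with an explicit ring chain c 0, …, c N = c 0
    (N : ℕ) (hN : 0 < N) (c : ℕ → Fin m) (hring : c N = c 0)
    (hall : ∀ i : Fin m, ∃ k ≤ N, c k = i)
    (hliminf : ∀ k < N,
      0 < Filter.liminf (fun ε => p ε (c k) (c (k + 1))) (𝓝[>] (0 : ℝ))) :
    ∃ pr : ℝ, 0 < pr ∧ pr < 1 ∧ ∃ εp ∈ Ioc (0:ℝ) ε₀,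
      -- geometric tail bound for the first hitting times
      (∀ ε ∈ Ioc (0:ℝ) εp, ∀ i j : Fin m, ∀ k : ℕ, 1 ≤ k →
        Pstart ε i {ω | ∀ n : ℕ, 1 ≤ n → n ≤ k * N → η ε n ω ≠ j}
          ≤ ENNReal.ofReal ((1 - pr) ^ k)) ∧
      -- uniformly bounded second moments of the first hitting times
      ∃ Kp : ℝ≥0∞, Kp < ⊤ ∧ ∀ ε ∈ Ioc (0:ℝ) εp, ∀ i j : Fin m,
        ∑' n : ℕ, ((2 * n + 1 : ℕ) : ℝ≥0∞) *
          Pstart ε i {ω | ∀ k : ℕ, 1 ≤ k → k ≤ n → η ε k ω ≠ j} ≤ Kp := by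
  obtain ⟨δ, hδ0, hδ2, hδ⟩ : ∃ δ : ℝ, 0 < δ ∧ δ ≤ 1 / 2 ∧
      ∀ᶠ ε in 𝓝[>] (0 : ℝ), ∀ k < N, δ ≤ p ε (c k) (c (k + 1)) := by
    have hIoc : ∀ᶠ ε in 𝓝[>] (0 : ℝ), ε ∈ Ioc (0:ℝ) ε₀ := Ioc_mem_nhdsGT hε₀
    suffices H : ∀ M ≤ N, ∃ δ : ℝ, 0 < δ ∧ δ ≤ 1 / 2 ∧
        ∀ᶠ ε in 𝓝[>] (0 : ℝ), ∀ k < M, δ ≤ p ε (c k) (c (k + 1)) from H N le_rfl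
    intro M
    induction M with
    | zero => intro _; exact ⟨1 / 2, by norm_num, le_rfl, by simp⟩
    | succ M ih =>
      intro hM
      obtain ⟨δ, h1, h2, h3⟩ := ih (by omega)
      have hl := hliminf M (by omega)
      obtain ⟨a, ha0, ha⟩ := exists_between hl
      have hev := Filter.eventually_lt_of_lt_liminf ha
        (isBoundedUnder_of_eventually_ge (a := 0)
          (hIoc.mono fun ε hε => (hpnn ε hε).1 _ _))
      refine ⟨min δ a, lt_min h1 ha0, (min_le_left _ _).trans h2, ?_⟩
      filter_upwards [h3, hev] with ε h4 h5 k hk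
      rcases Nat.lt_succ_iff_lt_or_eq.1 hk with h | h
      · exact (min_le_left _ _).trans (h4 k h)
      · rw [h]; exact (min_le_right _ _).trans h5.le
  obtain ⟨u, hu, hsub⟩ := mem_nhdsGT_iff_exists_Ioc_subset.1 hδ
  have hu : 0 < u := hu
  have hpr0 : 0 < δ ^ N := by positivity
  have hpr1 : δ ^ N ≤ 1 / 2 :=
    (pow_le_of_le_one hδ0.le (by linarith) hN.ne').trans hδ2
  have main : ∀ ε ∈ Ioc (0:ℝ) (min u ε₀), ∀ i j : Fin m, ∀ k : ℕ,
        Pstart ε i {ω | ∀ n : ℕ, 1 ≤ n → n ≤ k * N → η ε n ω ≠ j}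
          ≤ ENNReal.ofReal ((1 - δ ^ N) ^ k) := by
    intro ε hε i j k
    have hε0 : ε ∈ Ioc (0:ℝ) ε₀ := ⟨hε.1, hε.2.trans (min_le_right _ _)⟩
    have hεu : ∀ k < N, δ ≤ p ε (c k) (c (k + 1)) := hsub ⟨hε.1, hε.2.trans (min_le_left _ _)⟩
    obtain ⟨h0, h1⟩ := hpnn ε hε0
    refine (chain_avoid (η ε) (hmeas ε) (Pstart ε) (hprob ε) (p ε) h0 (hMC ε hε0) i j _).trans ?_
    refine ENNReal.ofReal_le_ofReal (avoidProb_mul_le h0 (by linarith) ?_ k i)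
    exact avoidProb_ring h0 h1 hδ0.le (by linarith) hN hring hall hεu
  refine ⟨δ ^ N, hpr0, by linarith, min u ε₀, ⟨lt_min hu hε₀, min_le_right _ _⟩,
    fun ε hε i j k _ => main ε hε i j k,
    ∑' n : ℕ, ENNReal.ofReal ((2 * n + 1 : ℝ) * (1 - δ ^ N) ^ (n / N)), ?_, ?_⟩
  · exact (summable_tail hN (by linarith) (by linarith)).tsum_ofReal_lt_top
  · intro ε hε i j
    refine ENNReal.tsum_le_tsum fun n => ?_
    rw [ENNReal.ofReal_mul (by positivity)]
    refine mul_le_mul' ?_ ?_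
    · rw [← ENNReal.ofReal_natCast]; push_cast; exact le_rfl
    · refine (measure_mono ?_).trans (main ε hε i j (n / N))
      intro ω hω k hk hk'
      exact hω k hk (hk'.trans (Nat.div_mul_le_self n N))
end
end

section
/- Fix ε ∈ (0, ε₀] such that p_{ε,i} < 1 for all i ∈ X. Define p̃_{ε,ij} = P_i(η_{ε,1} = j, ζ_{ε,1} = 0)/(1 − p_{ε,i}), which is a stochastic matrix, and let η̃_{ε,n} be a homogeneous Markov chain on X with transition matrix ‖p̃_{ε,ij}‖ and the same initial distribution q̄_ε as η_{ε,n}. Then: (a) for every nonnegative integer n, P(ν_ε > n) = E ∏_{k=1}^n (1 − p_{ε, η̃_{ε,k−1}}); and (b) |p_{ε,ij} − p̃_{ε,ij}| ≤ 2p_{ε,i}/(1 − p_{ε,i}) for all i, j ∈ X. -/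
open MeasureTheory Filter Set
open scoped Topology ENNReal

noncomputable section

/-- decomposition of an event over the values of a finite-valued random variable -/
lemma real_eq_sum_fiber {Ω T : Type} [MeasurableSpace Ω] [Fintype T] [MeasurableSpace T]
    [MeasurableSingletonClass T] (μ : Measure Ω) [IsFiniteMeasure μ] (f : Ω → T)
    (hf : Measurable f) (A : Set Ω) :
    μ.real A = ∑ v, μ.real (A ∩ f ⁻¹' {v}) := by
  have h := sum_measureReal_preimage_singleton (μ := μ.restrict A) (f := f) Finset.univ
    (fun y _ => hf (measurableSet_singleton y))
  have h2 : ∀ v, (μ.restrict A).real (f ⁻¹' {v}) = μ.real (A ∩ f ⁻¹' {v}) := by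
    intro v
    rw [measureReal_restrict_apply (hf (measurableSet_singleton v)), Set.inter_comm]
  simp only [h2] at h
  rw [h]
  simp

/-- for a fixed Markov renewal process `(η_n, ζ_n)` with transition kernel
`R i j ι = P(η_{n+1} = j, ζ_{n+1} = ι | η_n = i)` and rare-event probabilities
`p_i = Σ_j R i j 1 < 1`, the matrix `p̃ i j = R i j 0 / (1 − p_i)` is stochastic, and if
`η̃_n` is a Markov chain with transition matrix `p̃` and the same initial distribution `q`,
then `P(ν > n) = E ∏_{k=1}^n (1 − p_{η̃_{k−1}})` and
`|p i j − p̃ i j| ≤ 2 p_i / (1 − p_i)`.  Here `{ν > n}` is the event that no rare event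
occurs during the first `n` steps, and `p i j = R i j 0 + R i j 1` are the transition
probabilities of the embedded chain `η_n`. -/
theorem stmt18 {m : ℕ} (hm : 0 < m)
    {Ω : Type} [MeasurableSpace Ω]
    -- the Markov renewal process (η_n, ζ_n), with laws P_i given η_0 = i
    (η : ℕ → Ω → Fin m) (ζ : ℕ → Ω → Bool)
    (Pstart : Fin m → Measure Ω)
    (hprob : ∀ i, IsProbabilityMeasure (Pstart i))
    (hmeas : ∀ n, Measurable (η n) ∧ Measurable (ζ n))
    (R : Fin m → Fin m → Bool → ℝ)
    (hRnn : ∀ i j ι, 0 ≤ R i j ι)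
    (hRsum : ∀ i, ∑ j, (R i j false + R i j true) = 1)
    (hMRP : ∀ n : ℕ, ∀ I : ℕ → Fin m, ∀ Z : ℕ → Bool,
      Pstart (I 0) {ω | ∀ k ≤ n, (η k ω = I k ∧ (1 ≤ k → ζ k ω = Z k))}
        = ENNReal.ofReal (∏ k ∈ Finset.Icc 1 n, R (I (k - 1)) (I k) (Z k)))
    -- the rare-event probabilities p_i = P_i(ζ_1 = 1) are < 1
    (hpe : ∀ i : Fin m, (∑ j, R i j true) < 1)
    -- the initial distribution q̄ and the law P of the process with initial distribution q̄
    (q : Fin m → ℝ) (hq : (∀ i, 0 ≤ q i) ∧ ∑ i, q i = 1)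
    (P : Measure Ω) (hmix : P = ∑ i, ENNReal.ofReal (q i) • Pstart i)
    -- the auxiliary Markov chain η̃ with transition matrix p̃ and initial distribution q̄
    {Ω' : Type} [MeasurableSpace Ω']
    (η' : ℕ → Ω' → Fin m) (P' : Measure Ω')
    (hprob' : IsProbabilityMeasure P')
    (hmeas' : ∀ n, Measurable (η' n))
    (hMC' : ∀ n : ℕ, ∀ I : ℕ → Fin m,
      P' {ω | ∀ k ≤ n, η' k ω = I k}
        = ENNReal.ofReal (q (I 0) *
            ∏ k ∈ Finset.Icc 1 n, R (I (k - 1)) (I k) false / (1 - ∑ j, R (I (k - 1)) j true))) :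
    -- p̃ is a stochastic matrix
    ((∀ i j : Fin m, 0 ≤ R i j false / (1 - ∑ j', R i j' true)) ∧
      ∀ i : Fin m, ∑ j, R i j false / (1 - ∑ j', R i j' true) = 1) ∧
    -- (a) P(ν > n) = E ∏_{k=1}^n (1 − p_{η̃_{k−1}})
    (∀ n : ℕ,
      (P {ω | ∀ k : ℕ, 1 ≤ k → k ≤ n → ζ k ω = false}).toReal
        = ∫ ω, ∏ k ∈ Finset.Icc 1 n, (1 - ∑ j, R (η' (k - 1) ω) j true) ∂P') ∧
    -- (b) |p_{ij} − p̃_{ij}| ≤ 2 p_i / (1 − p_i)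
    (∀ i j : Fin m,
      |(R i j false + R i j true) - R i j false / (1 - ∑ j', R i j' true)|
        ≤ 2 * (∑ j', R i j' true) / (1 - ∑ j', R i j' true)) := by
  have hp : ∀ i, 0 < 1 - ∑ j, R i j true := fun i => by linarith [hpe i]
  have hs : ∀ i, ∑ j, R i j false = 1 - ∑ j, R i j true := fun i => by
    have := hRsum i
    rw [Finset.sum_add_distrib] at this
    linarith
  refine ⟨⟨fun i j => div_nonneg (hRnn i j false) (hp i).le, fun i => ?_⟩, fun n => ?_,
    fun i j => ?_⟩
  · rw [← Finset.sum_div, hs, div_self (hp i).ne']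
  · have htriv : True := trivial
    let e : (Fin (n + 1) → Fin m) → ℕ → Fin m :=
      fun v k => v ⟨min k n, by omega⟩
    let f : Ω → (Fin (n + 1) → Fin m) := fun ω k => η k ω
    let f' : Ω' → (Fin (n + 1) → Fin m) := fun ω k => η' k ω
    have hf : Measurable f := measurable_pi_lambda _ fun k => (hmeas k).1
    have hf' : Measurable f' := measurable_pi_lambda _ fun k => hmeas' k
    have hfe : ∀ (g : ℕ → Fin m) (v : Fin (n + 1) → Fin m),
        (fun k : Fin (n + 1) => g k) = v ↔ ∀ k ≤ n, g k = e v k := by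
      intro g v
      constructor
      · rintro rfl k hk
        simp [e, hk]
      · intro h
        funext k
        have hk : (k : ℕ) ≤ n := by omega
        rw [h k hk]
        simp [e, hk]
    set A : Set Ω := {ω | ∀ k : ℕ, 1 ≤ k → k ≤ n → ζ k ω = false} with hA
    have hL : (P A).toReal
        = ∑ v, q (e v 0) * ∏ k ∈ Finset.Icc 1 n, R (e v (k - 1)) (e v k) false := by
      have h1 : ∀ i, (Pstart i).real A
          = ∑ v, if e v 0 = i then ∏ k ∈ Finset.Icc 1 n, R (e v (k - 1)) (e v k) false
              else 0 := by
        intro i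
        have := hprob i
        rw [real_eq_sum_fiber (Pstart i) f hf A]
        refine Finset.sum_congr rfl fun v _ => ?_
        split_ifs with hv
        · subst hv
          have : A ∩ f ⁻¹' {v}
              = {ω | ∀ k ≤ n, (η k ω = e v k ∧ (1 ≤ k → ζ k ω = (fun _ => false) k))} := by
            ext ω
            have := hfe (fun k => η k ω) v
            simp only [hA, f, Set.mem_inter_iff, Set.mem_ofPred_eq, Set.mem_preimage,
              Set.mem_singleton_iff, this]
            grind
          rw [this, Measure.real, hMRP n (e v) (fun _ => false), ENNReal.toReal_ofReal]
          exact Finset.prod_nonneg fun k _ => hRnn _ _ _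
        · have h0 : Pstart i {ω | η 0 ω = i} = 1 := by
            have := hMRP 0 (fun _ => i) (fun _ => false)
            simp only [nonpos_iff_eq_zero] at this
            simpa using this
          have hc : Pstart i {ω | η 0 ω = i}ᶜ = 0 := by
            have hms : MeasurableSet {ω | η 0 ω = i} :=
              (hmeas 0).1 (measurableSet_singleton i)
            exact (prob_compl_eq_zero_iff hms).2 h0
          rw [Measure.real, measure_mono_null _ hc, ENNReal.toReal_zero]
          rintro ω ⟨_, hω⟩
          have := (hfe (fun k => η k ω) v).1 hω 0 (Nat.zero_le _)
          simp only [Set.mem_compl_iff, Set.mem_ofPred_eq]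
          rw [this]
          exact hv
      have h2 : (P A).toReal = ∑ i, q i * (Pstart i).real A := by
        rw [hmix, Measure.finsetSum_apply, ENNReal.toReal_sum]
        · refine Finset.sum_congr rfl fun i _ => ?_
          rw [Measure.smul_apply, smul_eq_mul, ENNReal.toReal_mul,
            ENNReal.toReal_ofReal (hq.1 i), Measure.real]
        · intro i _
          have := hprob i
          rw [Measure.smul_apply, smul_eq_mul]
          exact ENNReal.mul_ne_top ENNReal.ofReal_ne_top (measure_ne_top _ _)
      rw [h2]
      simp only [h1, Finset.mul_sum]
      rw [Finset.sum_comm]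
      refine Finset.sum_congr rfl fun v _ => ?_
      simp
    have hR : ∫ ω, ∏ k ∈ Finset.Icc 1 n, (1 - ∑ j, R (η' (k - 1) ω) j true) ∂P'
        = ∑ v, P'.real (f' ⁻¹' {v}) *
            ∏ k ∈ Finset.Icc 1 n, (1 - ∑ j, R (e v (k - 1)) j true) := by
      let F : (Fin (n + 1) → Fin m) → ℝ :=
        fun v => ∏ k ∈ Finset.Icc 1 n, (1 - ∑ j, R (e v (k - 1)) j true)
      have h1 : ∀ ω, ∏ k ∈ Finset.Icc 1 n, (1 - ∑ j, R (η' (k - 1) ω) j true) = F (f' ω) := by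
        intro ω
        refine Finset.prod_congr rfl fun k hk => ?_
        have hk' := Finset.mem_Icc.1 hk
        rw [(hfe (fun k => η' k ω) (f' ω)).1 rfl (k - 1) (by omega)]
      simp only [h1]
      have hFm : Measurable F := measurable_of_countable F
      have := Measure.isProbabilityMeasure_map (μ := P') hf'.aemeasurable
      rw [← integral_map hf'.aemeasurable hFm.aestronglyMeasurable,
        integral_fintype (Integrable.of_finite)]
      refine Finset.sum_congr rfl fun v _ => ?_
      rw [map_measureReal_apply hf' (measurableSet_singleton v), smul_eq_mul]
    rw [hL, hR]
    refine Finset.sum_congr rfl fun v _ => ?_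
    have h3 : f' ⁻¹' {v} = {ω | ∀ k ≤ n, η' k ω = e v k} := by
      ext ω
      exact hfe (fun k => η' k ω) v
    rw [h3, Measure.real, hMC' n (e v), ENNReal.toReal_ofReal, mul_assoc,
      ← Finset.prod_mul_distrib]
    · congr 1
      refine Finset.prod_congr rfl fun k _ => ?_
      rw [div_mul_cancel₀ _ (hp _).ne']
    · exact mul_nonneg (hq.1 _)
        (Finset.prod_nonneg fun k _ => div_nonneg (hRnn _ _ _) (hp _).le)
  · have h1 : R i j true ≤ ∑ j', R i j' true :=
      Finset.single_le_sum (f := fun j => R i j true) (fun j _ => hRnn i j true)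
        (Finset.mem_univ j)
    have h2 : R i j false ≤ 1 - ∑ j', R i j' true := by
      rw [← hs i]
      exact Finset.single_le_sum (f := fun j => R i j false) (fun j _ => hRnn i j false)
        (Finset.mem_univ j)
    have h3 := hp i
    have h4 := hRnn i j true
    have h5 := hRnn i j false
    generalize (∑ j', R i j' true) = p at *
    have h6 : R i j false + R i j true - R i j false / (1 - p)
        = ((R i j true) * (1 - p) - R i j false * p) / (1 - p) := by
      field_simp
      ring
    rw [h6, abs_div, abs_of_pos h3]
    apply div_le_div_of_nonneg_right _ h3.le
    rw [abs_le]
    constructor <;> nlinarith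
end
end

section
/- Let conditions A and B hold. Suppose that for some family of initial distributions q̄_ε the first-rare-event times ξ_ε converge in distribution as ε → 0 to a proper (almost surely finite) nonnegative random variable. Then for every i ∈ X and every δ > 0, P_i(κ_{ε,1} > δ) → 0 as ε → 0; equivalently, φ_{ε,i}(s) = E_i e^{−sκ_{ε,1}} → 1 as ε → 0 for every s ≥ 0 and i ∈ X. -/
open MeasureTheory Filter Set
open scoped Topology ENNReal

noncomputable section

lemma ring_lemma {m : ℕ} (p a : Fin m → Fin m → ℝ) (u : Fin m → ℝ) (r C : ℝ)
    (N : ℕ) (hN : 0 < N) (c : ℕ → Fin m) (hc0 : c N = c 0)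
    (hcov : ∀ i, ∃ k ≤ N, c k = i)
    (hC : 0 < C) (hring : ∀ k < N, C ≤ p (c k) (c (k+1)))
    (hp1 : ∀ i, ∑ j, p i j = 1) (ha0 : ∀ i j, 0 ≤ a i j) (hap : ∀ i j, a i j ≤ p i j)
    (hu0 : ∀ i, 0 ≤ u i) (hr : 0 ≤ r)
    (hu : ∀ i, u i ≤ r + ∑ j, a i j * u j) (i₀ j₀ : Fin m) :
    C ^ (2 * N) * (1 - ∑ j, a i₀ j) * u j₀ ≤ (2 * N + 1) * r := by
  have : Nonempty (Fin m) := ⟨i₀⟩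
  obtain ⟨jm, hjm⟩ := Finite.exists_max u
  set M := u jm with hM
  have hM0 : 0 ≤ M := hu0 jm
  have hp0 : ∀ i j, 0 ≤ p i j := fun i j => (ha0 i j).trans (hap i j)
  have hC1 : C ≤ 1 := by
    refine (hring 0 hN).trans ?_
    rw [← hp1 (c 0)]
    exact Finset.single_le_sum (f := fun j => p (c 0) j) (fun j _ => hp0 _ j) (Finset.mem_univ _)
  set θ := 1 - ∑ j, a i₀ j with hθ
  have hθ0 : 0 ≤ θ := by
    have : ∑ j, a i₀ j ≤ ∑ j, p i₀ j := Finset.sum_le_sum fun j _ => hap _ _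
    rw [hp1] at this; linarith
  -- periodic extension
  let c' : ℕ → Fin m := fun k => c (k % N)
  have hc' : ∀ k, C ≤ p (c' k) (c' (k+1)) := by
    intro k
    have hk : k % N < N := Nat.mod_lt _ hN
    have h := hring (k % N) hk
    have : c' (k+1) = c (k % N + 1) := by
      show c ((k+1) % N) = _
      rw [Nat.add_mod]
      rcases Nat.lt_or_ge (k % N + 1) N with h1 | h1
      · have h1N : 1 < N := by omega
        rw [Nat.mod_eq_of_lt h1N, Nat.mod_eq_of_lt h1]
      · have h2 : k % N + 1 = N := by omega
        rw [h2, hc0]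
        congr 1
        rcases Nat.lt_or_ge 1 N with h3 | h3
        · rw [Nat.mod_eq_of_lt h3, h2, Nat.mod_self]
        · have : N = 1 := by omega
          subst this; simp [Nat.mod_one]
    rw [this]; exact h
  have hcov' : ∀ i, ∃ k < N, c' k = i := by
    intro i
    obtain ⟨k, hk, rfl⟩ := hcov i
    rcases hk.lt_or_eq with h | h
    · exact ⟨k, h, by simp [c', Nat.mod_eq_of_lt h]⟩
    · exact ⟨0, hN, by simp [c', h, hc0]⟩
  have hper : ∀ k, c' (k + N) = c' k := fun k => by simp [c']
  obtain ⟨k₀, hk₀, hk₀'⟩ := hcov' i₀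
  obtain ⟨k₁, hk₁, hk₁'⟩ := hcov' jm
  have key : ∀ l ≤ k₀ + N, u (c' (k₀ + N - l)) ≤ (l + 1) * r + (1 - C ^ l * θ) * M := by
    intro l
    induction l with
    | zero =>
      intro _
      simp only [Nat.sub_zero, hper, hk₀']
      have h1 : ∑ j, a i₀ j * u j ≤ (∑ j, a i₀ j) * M := by
        rw [Finset.sum_mul]
        exact Finset.sum_le_sum fun j _ => mul_le_mul_of_nonneg_left (hjm j) (ha0 _ _)
      have := hu i₀
      have h2 : ∑ j, a i₀ j = 1 - θ := by rw [hθ]; ring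
      rw [h2] at h1
      simp; linarith
    | succ l ih =>
      intro hl
      have ih := ih (by omega)
      set x := c' (k₀ + N - (l+1)) with hx
      set y := c' (k₀ + N - l) with hy
      have hxy : C ≤ p x y := by
        have := hc' (k₀ + N - (l+1))
        rwa [show k₀ + N - (l+1) + 1 = k₀ + N - l by omega] at this
      have h1 : ∑ j, a x j * u j ≤ ∑ j, p x j * u j :=
        Finset.sum_le_sum fun j _ => mul_le_mul_of_nonneg_right (hap _ _) (hu0 _)
      have h2 : ∑ j, p x j * (M - u j) ≥ p x y * (M - u y) :=
        Finset.single_le_sum (f := fun j => p x j * (M - u j))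
          (fun j _ => mul_nonneg (hp0 _ _) (sub_nonneg.2 (hjm j))) (Finset.mem_univ y)
      have h3 : ∑ j, p x j * (M - u j) = M - ∑ j, p x j * u j := by
        simp only [mul_sub, Finset.sum_sub_distrib, ← Finset.sum_mul, hp1, one_mul]
      have h4 : C * (M - u y) ≤ p x y * (M - u y) :=
        mul_le_mul_of_nonneg_right hxy (sub_nonneg.2 (hjm y))
      have h5 := hu x
      have h6 : C * (C ^ l * θ * M - (l+1) * r) ≤ C * (M - u y) :=
        mul_le_mul_of_nonneg_left (by linarith) hC.le
      have h7 : C * ((l+1) * r) ≤ (l+1) * r :=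
        mul_le_of_le_one_left (by positivity) hC1
      push_cast
      have : C ^ (l+1) = C * C ^ l := by ring
      rw [this]
      nlinarith
  have hfin := key (k₀ + N - k₁) (by omega)
  rw [show k₀ + N - (k₀ + N - k₁) = k₁ by omega, hk₁'] at hfin
  set l := k₀ + N - k₁ with hl
  have hl2 : l ≤ 2 * N := by omega
  have e1 : C ^ (2*N) ≤ C ^ l := pow_le_pow_of_le_one hC.le hC1 hl2
  have e2 : C ^ (2*N) * θ * u j₀ ≤ C ^ l * θ * M :=
    mul_le_mul (mul_le_mul_of_nonneg_right e1 hθ0) (hjm _) (hu0 _) (by positivity)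
  have e3 : ((l:ℝ) + 1) * r ≤ (2 * N + 1) * r := by
    apply mul_le_mul_of_nonneg_right _ hr
    have : (l:ℝ) ≤ ((2 * N : ℕ) : ℝ) := by exact_mod_cast hl2
    push_cast at this; linarith
  have e4 : C ^ l * θ * M ≤ (l+1) * r := by
    change M ≤ _ at hfin
    linarith
  linarith

/-- Markov renewal hypothesis for a fixed parameter. -/
def MRP {m : ℕ} {Ω : Type} [MeasurableSpace Ω] (η : ℕ → Ω → Fin m) (κ : ℕ → Ω → ℝ)
    (ζ : ℕ → Ω → Bool) (P : Fin m → Measure Ω) (Q : Fin m → Fin m → ℝ → Bool → ℝ) : Prop :=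
  ∀ n : ℕ, ∀ I : ℕ → Fin m, ∀ T : ℕ → ℝ, ∀ Z : ℕ → Bool,
      P (I 0)
          {ω | ∀ k ≤ n, (η k ω = I k ∧ (1 ≤ k → (κ k ω ≤ T k ∧ ζ k ω = Z k)))}
        = ENNReal.ofReal (∏ k ∈ Finset.Icc 1 n, Q (I (k - 1)) (I k) (T k) (Z k))

lemma MRP.prod {m : ℕ} {Ω : Type} [MeasurableSpace Ω] {η : ℕ → Ω → Fin m} {κ : ℕ → Ω → ℝ}
    {ζ : ℕ → Ω → Bool} {P : Fin m → Measure Ω} {Q : Fin m → Fin m → ℝ → Bool → ℝ}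
    (h : MRP η κ ζ P Q) (n : ℕ) (I : ℕ → Fin m) (T : ℕ → ℝ) (Z : ℕ → Bool) :
    P (I 0)
          {ω | ∀ k ≤ n, (η k ω = I k ∧ (1 ≤ k → (κ k ω ≤ T k ∧ ζ k ω = Z k)))}
        = ∏ k ∈ Finset.range n, ENNReal.ofReal (Q (I k) (I (k+1)) (T (k+1)) (Z (k+1))) := by
  have hrange : ∀ n, ∏ k ∈ Finset.Icc 1 n, Q (I (k - 1)) (I k) (T k) (Z k)
      = ∏ k ∈ Finset.range n, Q (I k) (I (k+1)) (T (k+1)) (Z (k+1)) := by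
    intro n
    induction n with
    | zero => simp
    | succ n ih =>
      rw [Finset.prod_Icc_succ_top (by omega), ih, Finset.prod_range_succ]; simp
  induction n with
  | zero => rw [h]; simp
  | succ n ih =>
    have h1 := h n I T Z
    rw [ih, hrange] at h1
    rw [Finset.prod_range_succ]
    by_cases h0 : ∏ k ∈ Finset.range n, ENNReal.ofReal (Q (I k) (I (k+1)) (T (k+1)) (Z (k+1))) = 0
    · rw [h0, zero_mul]
      rw [h0] at ih
      refine measure_mono_null ?_ ih
      intro ω hω k hk
      exact hω k (by omega)
    · rw [h, hrange, Finset.prod_range_succ, h1, ENNReal.ofReal_mul]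
      rw [h1] at h0
      simp at h0
      exact h0.le

/-- one-step kernel measure on sojourn times -/
def Ker {m : ℕ} {Ω : Type} [MeasurableSpace Ω] (η : ℕ → Ω → Fin m) (κ : ℕ → Ω → ℝ)
    (ζ : ℕ → Ω → Bool) (P : Fin m → Measure Ω) (i j : Fin m) (z : Bool) : Measure ℝ :=
  Measure.map (κ 1) ((P i).restrict {ω | η 0 ω = i ∧ η 1 ω = j ∧ ζ 1 ω = z})

lemma Ker_Iic {m : ℕ} {Ω : Type} [MeasurableSpace Ω] {η : ℕ → Ω → Fin m} {κ : ℕ → Ω → ℝ}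
    {ζ : ℕ → Ω → Bool} {P : Fin m → Measure Ω} {Q : Fin m → Fin m → ℝ → Bool → ℝ}
    (h : MRP η κ ζ P Q) (hmeas : ∀ n, Measurable (η n) ∧ Measurable (κ n) ∧ Measurable (ζ n))
    (i j : Fin m) (z : Bool) (t : ℝ) :
    Ker η κ ζ P i j z (Iic t) = ENNReal.ofReal (Q i j t z) := by
  have h1 := h.prod 1 (fun k => if k = 0 then i else j) (fun _ => t) (fun _ => z)
  simp at h1
  rw [← h1, Ker, Measure.map_apply (hmeas 1).2.1 measurableSet_Iic,
    Measure.restrict_apply ((hmeas 1).2.1 measurableSet_Iic)]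
  congr 1
  ext ω
  simp only [mem_inter_iff, mem_preimage, mem_Iic, mem_ofPred_eq]
  constructor
  · rintro ⟨a, b, c, d⟩ k hk
    interval_cases k <;> simp_all
  · intro H
    have h0 := H 0 (by omega)
    have h1 := H 1 (by omega)
    simp_all

lemma measurableSet_path {m : ℕ} {Ω : Type} [MeasurableSpace Ω] {η : ℕ → Ω → Fin m} {κ : ℕ → Ω → ℝ}
    {ζ : ℕ → Ω → Bool} (hmeas : ∀ n, Measurable (η n) ∧ Measurable (κ n) ∧ Measurable (ζ n))
    (n : ℕ) (I : ℕ → Fin m) (Z : ℕ → Bool) :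
    MeasurableSet {ω | ∀ k ≤ n, η k ω = I k ∧ (1 ≤ k → ζ k ω = Z k)} := by
  have : {ω | ∀ k ≤ n, η k ω = I k ∧ (1 ≤ k → ζ k ω = Z k)} =
    ⋂ k, ⋂ (_ : k ≤ n), ((η k ⁻¹' {I k}) ∩ ⋂ (_ : 1 ≤ k), ζ k ⁻¹' {Z k}) := by
    ext ω; simp
  rw [this]
  exact MeasurableSet.iInter fun k => MeasurableSet.iInter fun _ =>
    ((hmeas k).1 (measurableSet_singleton _)).inter
      (MeasurableSet.iInter fun _ => (hmeas k).2.2 (measurableSet_singleton _))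

lemma law_path {m : ℕ} {Ω : Type} [MeasurableSpace Ω] {η : ℕ → Ω → Fin m} {κ : ℕ → Ω → ℝ}
    {ζ : ℕ → Ω → Bool} {P : Fin m → Measure Ω} {Q : Fin m → Fin m → ℝ → Bool → ℝ}
    (hprob : ∀ i, IsProbabilityMeasure (P i))
    (h : MRP η κ ζ P Q) (hmeas : ∀ n, Measurable (η n) ∧ Measurable (κ n) ∧ Measurable (ζ n))
    (n : ℕ) (I : ℕ → Fin m) (Z : ℕ → Bool) :
    Measure.pi (fun k : Fin n => Ker η κ ζ P (I k) (I (k+1)) (Z (k+1))) =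
    Measure.map (fun ω (k : Fin n) => κ (k+1) ω)
      ((P (I 0)).restrict {ω | ∀ k ≤ n, η k ω = I k ∧ (1 ≤ k → ζ k ω = Z k)}) := by
  have hfin : ∀ k : Fin n, IsFiniteMeasure (Ker η κ ζ P (I k) (I (k+1)) (Z (k+1))) := by
    intro k; unfold Ker; infer_instance
  have hmp : Measurable (fun ω (k : Fin n) => κ (k+1) ω) :=
    measurable_pi_lambda _ fun k => (hmeas _).2.1
  refine Measure.pi_eq_generateFrom (C := fun _ => range Iic) (fun _ => (borel_eq_generateFrom_Iic ℝ).symm.trans (BorelSpace.measurable_eq (α := ℝ)).symm)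
    (fun _ => isPiSystem_Iic) (fun k => ⟨fun n : ℕ => Iic (n:ℝ), fun n => ⟨_, rfl⟩, fun n => measure_lt_top _ _, ?_⟩) ?_
  · exact iUnion_eq_univ_iff.2 fun x => exists_nat_ge x
  · intro s hs
    choose t ht using hs
    obtain rfl : s = fun k => Iic (t k) := by ext1 k; exact (ht k).symm
    simp only [Ker_Iic h hmeas]
    rw [Measure.map_apply hmp (MeasurableSet.univ_pi fun k => measurableSet_Iic)]
    rw [Measure.restrict_apply (hmp (MeasurableSet.univ_pi fun k => measurableSet_Iic))]
    have h1 := h.prod n I (fun k => if hk : k - 1 < n then t ⟨k-1, hk⟩ else 0) Z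
    rw [← Fin.prod_univ_eq_prod_range (fun k => ENNReal.ofReal (Q (I k) (I (k+1)) (if hk : k + 1 - 1 < n then t ⟨k+1-1, hk⟩ else 0) (Z (k+1))))] at h1
    simp at h1
    rw [← h1]
    congr 1
    ext ω
    simp only [mem_inter_iff, mem_preimage, mem_univ_pi, mem_Iic, mem_ofPred_eq]
    constructor
    · rintro ⟨H1, H2⟩ k hk
      refine ⟨(H2 k hk).1, fun hk1 => ⟨?_, (H2 k hk).2 hk1⟩⟩
      have hk' : k - 1 < n := by omega
      rw [dif_pos hk']
      have := H1 ⟨k-1, hk'⟩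
      simpa [Nat.sub_add_cancel hk1] using this
    · intro H
      refine ⟨fun k => ?_, fun k hk => ⟨(H k hk).1, fun hk1 => ((H k hk).2 hk1).2⟩⟩
      have := ((H (k+1) (by omega)).2 (by omega)).1
      simpa using this

/-- one-step transforms -/
def alp {m : ℕ} {Ω : Type} [MeasurableSpace Ω] (η : ℕ → Ω → Fin m) (κ : ℕ → Ω → ℝ)
    (ζ : ℕ → Ω → Bool) (P : Fin m → Measure Ω) (f : ℝ → ℝ) (i j : Fin m) (z : Bool) : ℝ :=
  ∫ ω in {ω | η 0 ω = i ∧ η 1 ω = j ∧ ζ 1 ω = z}, f (κ 1 ω) ∂(P i)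

lemma int_path {m : ℕ} {Ω : Type} [MeasurableSpace Ω] {η : ℕ → Ω → Fin m} {κ : ℕ → Ω → ℝ}
    {ζ : ℕ → Ω → Bool} {P : Fin m → Measure Ω} {Q : Fin m → Fin m → ℝ → Bool → ℝ}
    (hprob : ∀ i, IsProbabilityMeasure (P i))
    (h : MRP η κ ζ P Q) (hmeas : ∀ n, Measurable (η n) ∧ Measurable (κ n) ∧ Measurable (ζ n))
    (f : ℝ → ℝ) (hf : Measurable f)
    (n : ℕ) (I : ℕ → Fin m) (Z : ℕ → Bool) :
    ∫ ω in {ω | ∀ k ≤ n, η k ω = I k ∧ (1 ≤ k → ζ k ω = Z k)}, ∏ k : Fin n, f (κ (k+1) ω) ∂(P (I 0))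
     = ∏ k : Fin n, alp η κ ζ P f (I k) (I (k+1)) (Z (k+1)) := by
  have hmp : Measurable (fun ω (k : Fin n) => κ (k+1) ω) :=
    measurable_pi_lambda _ fun k => (hmeas _).2.1
  have hfin : ∀ k : Fin n, IsFiniteMeasure (Ker η κ ζ P (I k) (I (k+1)) (Z (k+1))) := by
    intro k; unfold Ker; infer_instance
  have h1 := integral_fintype_prod_eq_prod (ι := Fin n) (𝕜 := ℝ) (fun _ => f)
    (μ := fun k : Fin n => Ker η κ ζ P (I k) (I (k+1)) (Z (k+1)))
  rw [law_path hprob h hmeas, integral_map hmp.aemeasurable] at h1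
  · rw [h1]
    refine Finset.prod_congr rfl fun k _ => ?_
    rw [Ker, integral_map (hmeas 1).2.1.aemeasurable hf.aestronglyMeasurable, alp]
  · exact (Finset.measurable_prod _ fun k _ => hf.comp (measurable_pi_apply k)).aestronglyMeasurable

/-- multi-step transforms -/
def HH {m : ℕ} {Ω : Type} [MeasurableSpace Ω] (κ : ℕ → Ω → ℝ)
    (ζ : ℕ → Ω → Bool) (P : Fin m → Measure Ω) (f : ℝ → ℝ) (n : ℕ) (i : Fin m) (Z : ℕ → Bool) : ℝ :=
  ∫ ω in {ω | ∀ k < n, ζ (k+1) ω = Z k}, ∏ k : Fin n, f (κ (k+1) ω) ∂(P i)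

/-- path from a tuple -/
def pth {m n : ℕ} (i : Fin m) (J : Fin n → Fin m) : ℕ → Fin m
  | 0 => i
  | k + 1 => if hk : k < n then J ⟨k, hk⟩ else i

lemma ae_start {m : ℕ} {Ω : Type} [MeasurableSpace Ω] {η : ℕ → Ω → Fin m} {κ : ℕ → Ω → ℝ}
    {ζ : ℕ → Ω → Bool} {P : Fin m → Measure Ω} {Q : Fin m → Fin m → ℝ → Bool → ℝ}
    (hprob : ∀ i, IsProbabilityMeasure (P i))
    (h : MRP η κ ζ P Q) (hmeas : ∀ n, Measurable (η n) ∧ Measurable (κ n) ∧ Measurable (ζ n))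
    (i : Fin m) : ∀ᵐ ω ∂(P i), η 0 ω = i := by
  have h1 := h.prod 0 (fun _ => i) (fun _ => 0) (fun _ => false)
  simp at h1
  have hs : MeasurableSet {ω | η 0 ω = i} := (hmeas 0).1 (measurableSet_singleton i)
  exact (prob_compl_eq_zero_iff hs).2 h1

lemma HH_eq {m : ℕ} {Ω : Type} [MeasurableSpace Ω] {η : ℕ → Ω → Fin m} {κ : ℕ → Ω → ℝ}
    {ζ : ℕ → Ω → Bool} {P : Fin m → Measure Ω} {Q : Fin m → Fin m → ℝ → Bool → ℝ}
    (hprob : ∀ i, IsProbabilityMeasure (P i))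
    (h : MRP η κ ζ P Q) (hmeas : ∀ n, Measurable (η n) ∧ Measurable (κ n) ∧ Measurable (ζ n))
    (hκ : ∀ n ω, 0 ≤ κ n ω)
    (f : ℝ → ℝ) (hf : Measurable f) (hf1 : ∀ x, 0 ≤ x → |f x| ≤ 1)
    (n : ℕ) (i : Fin m) (Z : ℕ → Bool) :
    HH κ ζ P f n i Z = ∑ J : Fin n → Fin m, ∏ k : Fin n,
      alp η κ ζ P f (pth i J k) (pth i J (k+1)) (Z k) := by
  have hint : Integrable (fun ω => ∏ k : Fin n, f (κ (k+1) ω)) (P i) := by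
    refine Integrable.of_bound (C := 1) (Finset.measurable_prod _ fun k _ => hf.comp (hmeas _).2.1).aestronglyMeasurable ?_
    refine ae_of_all _ fun ω => ?_
    rw [Real.norm_eq_abs, Finset.abs_prod]
    exact Finset.prod_le_one (fun _ _ => abs_nonneg _) fun k _ => hf1 _ (hκ _ _)
  have hset : {ω | ∀ k < n, ζ (k+1) ω = Z k} =ᵐ[P i]
      ⋃ J : Fin n → Fin m, {ω | ∀ k ≤ n, η k ω = pth i J k ∧ (1 ≤ k → ζ k ω = Z (k-1))} := by
    refine Filter.eventuallyEq_set.2 ?_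
    filter_upwards [ae_start hprob h hmeas i] with ω hω
    simp only [mem_ofPred_eq, mem_iUnion]
    constructor
    · intro H
      refine ⟨fun k => η (k+1) ω, fun k hk => ?_⟩
      cases k with
      | zero => simpa [pth] using hω
      | succ k =>
        have : k < n := by omega
        simp [pth, this, H k this]
    · rintro ⟨J, H⟩ k hk
      simpa using (H (k+1) hk).2 (by omega)
  rw [HH, setIntegral_congr_set hset, integral_iUnion_fintype]
  · refine Finset.sum_congr rfl fun J _ => ?_
    have := int_path hprob h hmeas f hf n (pth i J) (fun k => Z (k-1))
    simpa [pth] using this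
  · intro J
    exact measurableSet_path (κ := κ) hmeas n (pth i J) (fun k => Z (k-1))
  · intro J J' hJ
    refine Set.disjoint_left.2 fun ω h1 h2 => hJ ?_
    ext1 k
    have a := (h1 (k+1) (by omega)).1
    have b := (h2 (k+1) (by omega)).1
    rw [a] at b
    simpa [pth] using b
  · intro J; exact hint.integrableOn

lemma HH_succ {m : ℕ} {Ω : Type} [MeasurableSpace Ω] {η : ℕ → Ω → Fin m} {κ : ℕ → Ω → ℝ}
    {ζ : ℕ → Ω → Bool} {P : Fin m → Measure Ω} {Q : Fin m → Fin m → ℝ → Bool → ℝ}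
    (hprob : ∀ i, IsProbabilityMeasure (P i))
    (h : MRP η κ ζ P Q) (hmeas : ∀ n, Measurable (η n) ∧ Measurable (κ n) ∧ Measurable (ζ n))
    (hκ : ∀ n ω, 0 ≤ κ n ω)
    (f : ℝ → ℝ) (hf : Measurable f) (hf1 : ∀ x, 0 ≤ x → |f x| ≤ 1)
    (n : ℕ) (i : Fin m) (Z : ℕ → Bool) :
    HH κ ζ P f (n+1) i Z = ∑ j, alp η κ ζ P f i j (Z 0) * HH κ ζ P f n j (fun k => Z (k+1)) := by
  simp only [HH_eq hprob h hmeas hκ f hf hf1]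
  rw [← (Fin.consEquiv (fun _ : Fin (n+1) => Fin m)).sum_comp, Fintype.sum_prod_type]
  refine Finset.sum_congr rfl fun j _ => ?_
  rw [Finset.mul_sum]
  refine Finset.sum_congr rfl fun J _ => ?_
  rw [Fin.prod_univ_succ]
  congr 1
  refine Finset.prod_congr rfl fun k _ => ?_
  have e : ∀ l : ℕ, l ≤ n → pth i (Fin.cons j J : Fin (n+1) → Fin m) (l + 1) = pth j J l := by
    intro l hl
    cases l with
    | zero => simp [pth]
    | succ l =>
      have h1 : l < n := hl
      have h2 : l + 1 < n + 1 := by omega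
      simp only [pth, h1, h2, dif_pos]
      exact Fin.cons_succ (α := fun _ : Fin (n+1) => Fin m) j J ⟨l, h1⟩
  have e1 := e k (by omega)
  have e2 := e (k+1) (by omega)
  simp only [Fin.val_succ]
  change alp η κ ζ P f (pth i (Fin.cons j J : Fin (n+1) → Fin m) (k + 1))
    (pth i (Fin.cons j J : Fin (n+1) → Fin m) (k + 1 + 1)) _ = _
  rw [e1, e2]

lemma sum_p {m : ℕ} {Ω : Type} [MeasurableSpace Ω] (P : Measure Ω) [IsProbabilityMeasure P]
    (X : Ω → Fin m) (hX : Measurable X) : ∑ j, (P {ω | X ω = j}).toReal = 1 := by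
  have h1 := sum_measure_preimage_singleton (μ := P) (Finset.univ : Finset (Fin m)) (f := X)
    (fun y _ => hX (measurableSet_singleton y))
  simp only [Finset.coe_univ, preimage_univ, measure_univ] at h1
  rw [← ENNReal.toReal_sum (fun j _ => measure_ne_top _ _)]
  change (∑ j, P (X ⁻¹' {j})).toReal = 1
  rw [h1]; simp

lemma measurableSet_pat {Ω : Type} [MeasurableSpace Ω]
    {ζ : ℕ → Ω → Bool} (hζ : ∀ n, Measurable (ζ n)) (n : ℕ) (Z : ℕ → Bool) :
    MeasurableSet {ω | ∀ k < n, ζ (k+1) ω = Z k} := by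
  have : {ω | ∀ k < n, ζ (k+1) ω = Z k} = ⋂ k, ⋂ (_ : k < n), (ζ (k+1) ⁻¹' {Z k}) := by
    ext ω; simp
  rw [this]
  exact MeasurableSet.iInter fun k => MeasurableSet.iInter fun _ =>
    (hζ _) (measurableSet_singleton _)

/-- dominating function -/
def gdom {Ω : Type} (κ : ℕ → Ω → ℝ) (ζ : ℕ → Ω → Bool) (f : ℝ → ℝ) (n : ℕ) (ω : Ω) : ℝ :=
  indicator {ω | ∀ k < n, ζ (k+1) ω = false} (fun ω => ∏ k : Fin n, (fun _ : ℝ => (1:ℝ)) (κ (k+1) ω)) ω +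
  ∑ k ∈ Finset.range n, indicator {ω | ∀ l < k+1, ζ (l+1) ω = decide (l = k)}
    (fun ω => ∏ l : Fin (k+1), f (κ (l+1) ω)) ω

lemma le_gdom {Ω : Type} (κ : ℝ → ℕ → Ω → ℝ) (ζ : ℝ → ℕ → Ω → Bool) (ε s : ℝ) (hs : 0 ≤ s)
    (hκ : ∀ n ω, 0 ≤ κ ε n ω) (n : ℕ) (ω : Ω) :
    Real.exp (-(s * xiRE κ ζ ε ω)) ≤ gdom (κ ε) (ζ ε) (fun x => Real.exp (-(s * x))) n ω := by
  have hnn : ∀ k ∈ Finset.range n, 0 ≤ indicator {ω | ∀ l < k+1, ζ ε (l+1) ω = decide (l = k)}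
    (fun ω => ∏ l : Fin (k+1), Real.exp (-(s * (κ ε (l+1) ω)))) ω := fun k _ =>
      indicator_nonneg (fun _ _ => Finset.prod_nonneg fun _ _ => (Real.exp_pos _).le) _
  unfold gdom
  by_cases hω : ∀ k < n, ζ ε (k+1) ω = false
  · rw [indicator_of_mem (by exact hω)]
    have h1 : Real.exp (-(s * xiRE κ ζ ε ω)) ≤ 1 := by
      rw [Real.exp_le_one_iff]
      have : 0 ≤ xiRE κ ζ ε ω := Finset.sum_nonneg fun _ _ => hκ _ _
      have := mul_nonneg hs this
      linarith
    have h2 := Finset.sum_nonneg hnn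
    simp only [Finset.prod_const_one]
    linarith
  · rw [indicator_of_notMem (by exact hω), zero_add]
    push Not at hω
    obtain ⟨k, hk, hζk⟩ := hω
    have hne : {n : ℕ | 1 ≤ n ∧ ζ ε n ω = true}.Nonempty := ⟨k+1, by omega, by simpa using hζk⟩
    have hmem := Nat.sInf_mem hne
    have hle : sInf {n : ℕ | 1 ≤ n ∧ ζ ε n ω = true} ≤ k + 1 :=
      Nat.sInf_le ⟨by omega, by simpa using hζk⟩
    obtain ⟨k', hk'⟩ : ∃ k', sInf {n : ℕ | 1 ≤ n ∧ ζ ε n ω = true} = k' + 1 :=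
      ⟨_, (Nat.sub_add_cancel hmem.1).symm⟩
    refine le_trans ?_ (Finset.single_le_sum hnn (Finset.mem_range.2 (show k' < n by omega)))
    rw [indicator_of_mem]
    · rw [← Real.exp_sum]
      refine le_of_eq ?_
      congr 1
      rw [Finset.sum_neg_distrib, ← Finset.mul_sum]
      congr 2
      rw [xiRE, nuRE, hk', Fin.sum_univ_eq_sum_range (fun l => κ ε (l+1) ω),
        Finset.range_eq_Ico, Finset.sum_Ico_add' (fun l => κ ε l ω)]
      rfl
    · show ∀ l < k'+1, ζ ε (l+1) ω = decide (l = k')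
      intro l hl
      by_cases hlk : l = k'
      · subst hlk
        rw [hk'] at hmem
        simpa using hmem.2
      · simp only [hlk, decide_false]
        by_contra hcon
        have : sInf {n : ℕ | 1 ≤ n ∧ ζ ε n ω = true} ≤ l + 1 :=
          Nat.sInf_le ⟨by omega, by simpa using hcon⟩
        omega

section
variable {m : ℕ} {Ω : Type} [MeasurableSpace Ω] {η : ℕ → Ω → Fin m} {κ : ℕ → Ω → ℝ}
    {ζ : ℕ → Ω → Bool} {P : Fin m → Measure Ω} {Q : Fin m → Fin m → ℝ → Bool → ℝ}

lemma integrable_prod (μ : Measure Ω) [IsFiniteMeasure μ]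
    (hmeas : ∀ n, Measurable (κ n)) (hκ : ∀ n ω, 0 ≤ κ n ω)
    (f : ℝ → ℝ) (hf : Measurable f) (hf1 : ∀ x, 0 ≤ x → |f x| ≤ 1) (n : ℕ) :
    Integrable (fun ω => ∏ k : Fin n, f (κ (k+1) ω)) μ := by
  refine Integrable.of_bound (C := 1)
    (Finset.measurable_prod _ fun k _ => hf.comp (hmeas _)).aestronglyMeasurable ?_
  refine ae_of_all _ fun ω => ?_
  rw [Real.norm_eq_abs, Finset.abs_prod]
  exact Finset.prod_le_one (fun _ _ => abs_nonneg _) fun k _ => hf1 _ (hκ _ _)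

lemma integrable_gdom (μ : Measure Ω) [IsFiniteMeasure μ]
    (hmeas : ∀ n, Measurable (η n) ∧ Measurable (κ n) ∧ Measurable (ζ n)) (hκ : ∀ n ω, 0 ≤ κ n ω)
    (f : ℝ → ℝ) (hf : Measurable f) (hf1 : ∀ x, 0 ≤ x → |f x| ≤ 1) (n : ℕ) :
    Integrable (gdom κ ζ f n) μ := by
  refine Integrable.add ?_ (integrable_finsetSum _ fun k _ => ?_)
  · exact (integrable_prod μ (fun n => (hmeas n).2.1) hκ (fun _ => 1) measurable_const (by simp) n).indicator
      (measurableSet_pat (fun n => (hmeas n).2.2) n (fun _ => false))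
  · exact (integrable_prod μ (fun n => (hmeas n).2.1) hκ f hf hf1 (k+1)).indicator
      (measurableSet_pat (fun n => (hmeas n).2.2) (k+1) (fun l => decide (l = k)))

lemma integral_gdom (hprob : ∀ i, IsProbabilityMeasure (P i))
    (hmeas : ∀ n, Measurable (η n) ∧ Measurable (κ n) ∧ Measurable (ζ n)) (hκ : ∀ n ω, 0 ≤ κ n ω)
    (f : ℝ → ℝ) (hf : Measurable f) (hf1 : ∀ x, 0 ≤ x → |f x| ≤ 1) (n : ℕ) (i : Fin m) :
    ∫ ω, gdom κ ζ f n ω ∂(P i) = HH κ ζ P (fun _ => 1) n i (fun _ => false) +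
      ∑ k ∈ Finset.range n, HH κ ζ P f (k+1) i (fun l => decide (l = k)) := by
  unfold gdom
  have A := (integrable_prod (P i) (fun n => (hmeas n).2.1) hκ (fun _ => 1) measurable_const (by simp) n).indicator
      (measurableSet_pat (fun n => (hmeas n).2.2) n (fun _ => false))
  have B := fun k => (integrable_prod (P i) (fun n => (hmeas n).2.1) hκ f hf hf1 (k+1)).indicator
      (measurableSet_pat (fun n => (hmeas n).2.2) (k+1) (fun l => decide (l = k)))
  rw [integral_add A (integrable_finsetSum _ fun k _ => B k), integral_finsetSum _ fun k _ => B k]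
  rw [integral_indicator (measurableSet_pat (fun n => (hmeas n).2.2) n (fun _ => false))]
  congr 1
  refine Finset.sum_congr rfl fun k _ => ?_
  rw [integral_indicator (measurableSet_pat (fun n => (hmeas n).2.2) (k+1) (fun l => decide (l = k)))]
  rfl

lemma key_bound (ζ' : ℝ → ℕ → Ω → Bool) (κ' : ℝ → ℕ → Ω → ℝ) (ε : ℝ)
    (hκe : κ' ε = κ) (hζe : ζ' ε = ζ)
    (hprob : ∀ i, IsProbabilityMeasure (P i))
    (h : MRP η κ ζ P Q) (hmeas : ∀ n, Measurable (η n) ∧ Measurable (κ n) ∧ Measurable (ζ n))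
    (hκ : ∀ n ω, 0 ≤ κ n ω) (s : ℝ) (hs : 0 ≤ s)
    (p : Fin m → Fin m → ℝ) (hp : ∀ i j, p i j = (P i {ω | η 1 ω = j}).toReal)
    (C r : ℝ) (N : ℕ) (hN : 0 < N) (c : ℕ → Fin m) (hc0 : c N = c 0)
    (hcov : ∀ i, ∃ k ≤ N, c k = i)
    (hC : 0 < C) (hring : ∀ k < N, C ≤ p (c k) (c (k+1)))
    (hpos : ∃ i, 0 < (P i {ω | ζ 1 ω = true}).toReal)
    (hr : ∀ i, (P i {ω | ζ 1 ω = true}).toReal ≤ r)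
    (q : Fin m → ℝ) (Pq : Measure Ω) (hq : (∀ i, 0 ≤ q i) ∧ ∑ i, q i = 1)
    (hmix : Pq = ∑ i, ENNReal.ofReal (q i) • P i) (i₀ : Fin m) :
    C ^ (2 * N) * (1 - ∫ ω, Real.exp (-(s * κ 1 ω)) ∂(P i₀)) *
      (∫ ω, Real.exp (-(s * xiRE κ' ζ' ε ω)) ∂Pq) ≤ (2 * N + 1) * r := by
  set f : ℝ → ℝ := fun x => Real.exp (-(s * x)) with hfdef
  have hf : Measurable f := by fun_prop
  have hf0 : ∀ x, 0 ≤ f x := fun x => (Real.exp_pos _).le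
  have hfle : ∀ x, 0 ≤ x → f x ≤ 1 := fun x hx => by
    rw [hfdef]; simp only [Real.exp_le_one_iff]
    have := mul_nonneg hs hx; linarith
  have hf1 : ∀ x, 0 ≤ x → |f x| ≤ 1 := fun x hx => by
    rw [abs_of_nonneg (hf0 x)]; exact hfle x hx
  have h11 : ∀ x : ℝ, 0 ≤ x → |(fun _ : ℝ => (1:ℝ)) x| ≤ 1 := by simp
  have hr0 : 0 ≤ r := ENNReal.toReal_nonneg.trans (hr i₀)
  have hp1 : ∀ i, ∑ j, p i j = 1 := fun i => by
    have := hprob i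
    simp only [hp]; exact sum_p (P i) (η 1) (hmeas 1).1
  have hmt : MeasurableSet {ω | ζ 1 ω = true} := (hmeas 1).2.2 (measurableSet_singleton true)
  have hI : ∀ (g : ℝ → ℝ), Measurable g → (∀ x, 0 ≤ x → |g x| ≤ 1) → ∀ i,
      Integrable (fun ω => g (κ 1 ω)) (P i) := by
    intro g hg hg1 i
    exact Integrable.of_bound (C := 1) (hg.comp (hmeas 1).2.1).aestronglyMeasurable
      (ae_of_all _ fun ω => hg1 _ (hκ _ _))
  -- facts about alp
  have alp0 : ∀ (g : ℝ → ℝ), (∀ x, 0 ≤ g x) → ∀ i j z, 0 ≤ alp η κ ζ P g i j z :=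
    fun g hg i j z => integral_nonneg fun _ => hg _
  have alple : ∀ (g : ℝ → ℝ), Measurable g → (∀ x, 0 ≤ g x) → (∀ x, 0 ≤ x → |g x| ≤ 1) →
      ∀ i j z, alp η κ ζ P g i j z ≤ p i j := by
    intro g hg hg0 hg1 i j z
    rw [alp, hp]
    have hset : MeasurableSet {ω | η 1 ω = j} := (hmeas 1).1 (measurableSet_singleton j)
    calc _ ≤ ∫ ω in {ω | η 0 ω = i ∧ η 1 ω = j ∧ ζ 1 ω = z}, (1:ℝ) ∂(P i) := by
          refine integral_mono (hI g hg hg1 i).integrableOn (integrable_const _) fun ω => ?_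
          exact (le_abs_self _).trans (hg1 _ (hκ _ _))
      _ = (P i {ω | η 0 ω = i ∧ η 1 ω = j ∧ ζ 1 ω = z}).toReal := by simp [Measure.real]
      _ ≤ _ := ENNReal.toReal_mono (measure_ne_top _ _) (measure_mono fun ω hω => hω.2.1)
  have HH0 : ∀ (g : ℝ → ℝ) i Z, HH κ ζ P g 0 i Z = 1 := by
    intro g i Z
    simp [HH]
  have HH1 : ∀ (g : ℝ → ℝ), Measurable g → (∀ x, 0 ≤ x → |g x| ≤ 1) →
      ∀ i Z, HH κ ζ P g 1 i Z = ∑ j, alp η κ ζ P g i j (Z 0) := by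
    intro g hg hg1 i Z
    rw [HH_succ hprob h hmeas hκ g hg hg1]
    simp [HH0]
  have HHnn : ∀ (g : ℝ → ℝ), (∀ x, 0 ≤ g x) → ∀ n i Z, 0 ≤ HH κ ζ P g n i Z :=
    fun g hg n i Z => integral_nonneg fun _ => Finset.prod_nonneg fun _ _ => hg _
  have HH1e : ∀ (g : ℝ → ℝ) i Z, HH κ ζ P g 1 i Z = ∫ ω in {ω | ζ 1 ω = Z 0}, g (κ 1 ω) ∂(P i) := by
    intro g i Z; simp [HH]
  -- d_n → 0
  set d : ℕ → Fin m → ℝ := fun n i => HH κ ζ P (fun _ => 1) n i (fun _ => false) with hd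
  have hd0 : ∀ n i, 0 ≤ d n i := fun n i => HHnn _ (by simp) n i _
  have hdrec : ∀ n i, d (n+1) i = ∑ j, alp η κ ζ P (fun _ => 1) i j false * d n j := fun n i =>
    HH_succ hprob h hmeas hκ _ measurable_const h11 n i _
  have hdeq : ∀ n i, d n i = (P i {ω | ∀ k < n, ζ (k+1) ω = false}).toReal := by
    intro n i; simp [hd, HH, Measure.real]
  have hdanti : ∀ i, Antitone fun n => d n i := by
    intro i n n' hn
    simp only [hdeq]
    exact ENNReal.toReal_mono (measure_ne_top _ _)
      (measure_mono fun ω hω k hk => hω k (lt_of_lt_of_le hk hn))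
  have hdlim : ∀ i, ∃ v, Tendsto (fun n => d n i) atTop (𝓝 v) := fun i =>
    ⟨_, tendsto_atTop_ciInf (hdanti i) ⟨0, by rintro _ ⟨n, rfl⟩; exact hd0 n i⟩⟩
  choose v hv using hdlim
  have hvrec : ∀ i, v i = ∑ j, alp η κ ζ P (fun _ => 1) i j false * v j := by
    intro i
    refine tendsto_nhds_unique ((tendsto_add_atTop_iff_nat 1).2 (hv i)) ?_
    simp only [hdrec]
    exact tendsto_finsetSum _ fun j _ => (hv j).const_mul _
  have hv0 : ∀ i, 0 ≤ v i := fun i => ge_of_tendsto' (hv i) fun n => hd0 n i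
  have hvz : ∀ i, v i = 0 := by
    intro j
    obtain ⟨i, hi⟩ := hpos
    have := ring_lemma p (fun i j => alp η κ ζ P (fun _ => 1) i j false) v 0 C N hN c hc0 hcov hC
      hring hp1 (fun i j => alp0 _ (by simp) i j _)
      (fun i j => alple _ measurable_const (by simp) h11 i j _) hv0 le_rfl
      (fun i => by rw [zero_add]; exact (hvrec i).le) i j
    rw [← HH1 _ measurable_const h11 i (fun _ => false), HH1e] at this
    have e : 1 - ∫ ω in {ω | ζ 1 ω = false}, (1:ℝ) ∂(P i) = (P i {ω | ζ 1 ω = true}).toReal := by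
      have hc : {ω | ζ 1 ω = false} = {ω | ζ 1 ω = true}ᶜ := by ext; simp
      rw [hc]
      simp only [integral_const, smul_eq_mul, mul_one, measureReal_restrict_apply MeasurableSet.univ, univ_inter]
      rw [probReal_compl_eq_one_sub hmt]
      simp [Measure.real]
    rw [e, mul_zero] at this
    have hCp : 0 < C ^ (2*N) * (P i {ω | ζ 1 ω = true}).toReal := by positivity
    exact le_antisymm (by
      by_contra hcon
      push Not at hcon
      exact absurd this (not_le.2 (mul_pos hCp hcon))) (hv0 j)
  -- w_n
  set w : ℕ → Fin m → ℝ := fun n i =>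
    ∑ k ∈ Finset.range n, HH κ ζ P f (k+1) i (fun l => decide (l = k)) with hw
  have hw0 : ∀ n i, 0 ≤ w n i := fun n i => Finset.sum_nonneg fun k _ => HHnn _ hf0 _ _ _
  have hwrec : ∀ n i, w n i ≤ r + ∑ j, alp η κ ζ P f i j false * w n j := by
    intro n i
    have h1 : w n i ≤ w (n+1) i := by
      simp only [hw]
      rw [Finset.sum_range_succ _ n]
      have := HHnn f hf0 (n+1) i (fun l => decide (l = n))
      linarith
    refine h1.trans ?_
    simp only [hw]
    rw [Finset.sum_range_succ', add_comm]
    refine add_le_add ?_ (le_of_eq ?_)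
    · rw [HH1e]
      refine le_trans ?_ (hr i)
      calc _ ≤ ∫ ω in {ω | ζ 1 ω = decide (0 = 0)}, (1:ℝ) ∂(P i) :=
            integral_mono (hI f hf hf1 i).integrableOn (integrable_const _) fun ω => hfle _ (hκ _ _)
        _ = _ := by simp [Measure.real]
    · simp only [Finset.mul_sum]
      rw [Finset.sum_comm]
      refine Finset.sum_congr rfl fun k _ => ?_
      rw [HH_succ hprob h hmeas hκ f hf hf1]
      simp
  set θ := 1 - ∫ ω, f (κ 1 ω) ∂(P i₀) with hθ
  have hθ0 : 0 ≤ θ := by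
    have : ∫ ω, f (κ 1 ω) ∂(P i₀) ≤ ∫ ω, (1:ℝ) ∂(P i₀) :=
      integral_mono (hI f hf hf1 i₀) (integrable_const _) fun ω => hfle _ (hκ _ _)
    simp at this
    linarith
  have hwb : ∀ n j, C ^ (2 * N) * θ * w n j ≤ (2 * N + 1) * r := by
    intro n j
    refine le_trans ?_ (ring_lemma p (fun i j => alp η κ ζ P f i j false) (w n) r C N hN c hc0 hcov hC
      hring hp1 (fun i j => alp0 _ hf0 i j _)
      (fun i j => alple _ hf hf0 hf1 i j _) (hw0 n) hr0 (hwrec n) i₀ j)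
    refine mul_le_mul_of_nonneg_right (mul_le_mul_of_nonneg_left ?_ (by positivity)) (hw0 n j)
    rw [← HH1 _ hf hf1 i₀ (fun _ => false), HH1e]
    have : ∫ ω in {ω | ζ 1 ω = false}, f (κ 1 ω) ∂(P i₀) ≤ ∫ ω, f (κ 1 ω) ∂(P i₀) :=
      setIntegral_le_integral (hI f hf hf1 i₀) (ae_of_all _ fun _ => hf0 _)
    linarith
  -- bound on the transform of ξ
  have hfinm : ∀ i, IsFiniteMeasure (ENNReal.ofReal (q i) • P i) := fun i =>
    Measure.smul_finite _ ENNReal.ofReal_ne_top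
  have hxi : ∀ n, ∫ ω, Real.exp (-(s * xiRE κ' ζ' ε ω)) ∂Pq ≤ ∑ i, q i * (d n i + w n i) := by
    intro n
    have hgi : ∀ i ∈ (Finset.univ : Finset (Fin m)),
        Integrable (gdom κ ζ f n) (ENNReal.ofReal (q i) • P i) := fun i _ =>
      integrable_gdom _ hmeas hκ f hf hf1 n
    calc _ ≤ ∫ ω, gdom κ ζ f n ω ∂Pq := by
          refine integral_mono_of_nonneg (ae_of_all _ fun _ => (Real.exp_pos _).le) ?_
            (ae_of_all _ fun ω => ?_)
          · rw [hmix]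
            exact integrable_finsetSum_measure.2 hgi
          · have := le_gdom κ' ζ' ε s hs (by rw [hκe]; exact hκ) n ω
            rwa [hκe, hζe] at this
      _ = _ := by
          rw [hmix, integral_finsetSum_measure hgi]
          refine Finset.sum_congr rfl fun i _ => ?_
          rw [integral_smul_measure, integral_gdom hprob hmeas hκ f hf hf1,
            ENNReal.toReal_ofReal (hq.1 i), smul_eq_mul]
  have hbn : ∀ n, C ^ (2 * N) * θ * (∫ ω, Real.exp (-(s * xiRE κ' ζ' ε ω)) ∂Pq) ≤
      C ^ (2 * N) * θ * (∑ i, q i * d n i) + (2 * N + 1) * r := by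
    intro n
    have hA : 0 ≤ C ^ (2 * N) * θ := by positivity
    refine (mul_le_mul_of_nonneg_left (hxi n) hA).trans ?_
    simp only [mul_add, Finset.sum_add_distrib]
    refine add_le_add le_rfl ?_
    calc _ = ∑ i, q i * (C ^ (2 * N) * θ * w n i) := by
          rw [Finset.mul_sum]; exact Finset.sum_congr rfl fun i _ => by ring
      _ ≤ ∑ i, q i * ((2 * N + 1) * r) :=
          Finset.sum_le_sum fun i _ => mul_le_mul_of_nonneg_left (hwb n i) (hq.1 i)
      _ = _ := by rw [← Finset.sum_mul, hq.2]; ring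
  have hlim : Tendsto (fun n => C ^ (2 * N) * θ * (∑ i, q i * d n i) + (2 * N + 1) * r) atTop
      (𝓝 (C ^ (2 * N) * θ * (∑ i, q i * v i) + (2 * N + 1) * r)) :=
    ((tendsto_finsetSum _ fun i _ => (hv i).const_mul (q i)).const_mul _).add_const _
  have := ge_of_tendsto' hlim hbn
  simpa [hvz] using this

end

/-- under conditions A and B, if the first-rare-event times `ξ_ε` converge
in distribution (for some family of initial distributions) to a proper nonnegative random
variable with law `μ`, then the sojourn times vanish asymptotically:
`P_i(κ_{ε,1} > δ) → 0` for every `δ > 0` and `i ∈ X`; equivalently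
`φ_{ε,i}(s) = E_i e^{−sκ_{ε,1}} → 1` for every `s ≥ 0` and `i ∈ X`. -/
theorem stmt19 {m : ℕ} (hm : 0 < m) (ε₀ : ℝ) (hε₀ : 0 < ε₀)
    {Ω : Type} [MeasurableSpace Ω]
    (η : ℝ → ℕ → Ω → Fin m) (κ : ℝ → ℕ → Ω → ℝ) (ζ : ℝ → ℕ → Ω → Bool)
    (Pstart : ℝ → Fin m → Measure Ω)
    (hprob : ∀ ε i, IsProbabilityMeasure (Pstart ε i))
    (hmeas : ∀ ε n, Measurable (η ε n) ∧ Measurable (κ ε n) ∧ Measurable (ζ ε n))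
    (hκnn : ∀ ε n ω, 0 ≤ κ ε n ω)
    (Q : ℝ → Fin m → Fin m → ℝ → Bool → ℝ)
    (hMRP : ∀ ε ∈ Ioc (0:ℝ) ε₀, ∀ n : ℕ, ∀ I : ℕ → Fin m, ∀ T : ℕ → ℝ, ∀ Z : ℕ → Bool,
      Pstart ε (I 0)
          {ω | ∀ k ≤ n, (η ε k ω = I k ∧ (1 ≤ k → (κ ε k ω ≤ T k ∧ ζ ε k ω = Z k)))}
        = ENNReal.ofReal (∏ k ∈ Finset.Icc 1 n, Q ε (I (k - 1)) (I k) (T k) (Z k)))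
    (p : ℝ → Fin m → Fin m → ℝ)
    (hp : ∀ ε ∈ Ioc (0:ℝ) ε₀, ∀ i j, p ε i j = (Pstart ε i {ω | η ε 1 ω = j}).toReal)
    (hB : CondB p)
    (π : ℝ → Fin m → ℝ)
    (hπ : ∀ᶠ ε in 𝓝[>] (0:ℝ), IsStationaryDist (fun i j => p ε i j) (π ε))
    -- condition A
    (hA1 : ∀ ε ∈ Ioc (0:ℝ) ε₀, ∃ i, 0 < rareP Pstart ζ ε i)
    (hA2 : ∀ i, Tendsto (fun ε => rareP Pstart ζ ε i) (𝓝[>] (0:ℝ)) (𝓝 0))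
    -- some family of initial distributions
    (q : ℝ → Fin m → ℝ) (Pq : ℝ → Measure Ω)
    (hq : ∀ ε ∈ Ioc (0:ℝ) ε₀, (∀ i, 0 ≤ q ε i) ∧ ∑ i, q ε i = 1)
    (hmix : ∀ ε ∈ Ioc (0:ℝ) ε₀, Pq ε = ∑ i, ENNReal.ofReal (q ε i) • Pstart ε i)
    -- ξ_ε converges in distribution to a proper nonnegative random variable with law μ
    (μ : Measure ℝ) (hμprob : IsProbabilityMeasure μ) (hμnn : μ (Iio 0) = 0)
    (hconv : ∀ s > 0, Tendsto (fun ε => ∫ ω, Real.exp (-(s * xiRE κ ζ ε ω)) ∂(Pq ε))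
      (𝓝[>] (0:ℝ)) (𝓝 (∫ x, Real.exp (-(s * x)) ∂μ))) :
    (∀ i : Fin m, ∀ δ > (0:ℝ),
      Tendsto (fun ε => (Pstart ε i {ω | δ < κ ε 1 ω}).toReal) (𝓝[>] (0:ℝ)) (𝓝 0)) ∧
    (∀ i : Fin m, ∀ s : ℝ, 0 ≤ s →
      Tendsto (fun ε => ∫ ω, Real.exp (-(s * κ ε 1 ω)) ∂(Pstart ε i))
        (𝓝[>] (0:ℝ)) (𝓝 1)) := by
  obtain ⟨N, hN, c, hc0, hcov, hlim⟩ := hB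
  have hev : ∀ᶠ ε in 𝓝[>] (0:ℝ), ε ∈ Ioc (0:ℝ) ε₀ := Ioc_mem_nhdsGT hε₀
  obtain ⟨C, hC, hring⟩ : ∃ C > (0:ℝ), ∀ᶠ ε in 𝓝[>] (0:ℝ), ∀ k < N, C ≤ p ε (c k) (c (k+1)) := by
    have : ∀ N' ≤ N, ∃ C > (0:ℝ), ∀ᶠ ε in 𝓝[>] (0:ℝ), ∀ k < N', C ≤ p ε (c k) (c (k+1)) := by
      intro N'
      induction N' with
      | zero => exact fun _ => ⟨1, one_pos, by simp⟩
      | succ n ih =>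
        intro hn
        obtain ⟨C, hC, h1⟩ := ih (by omega)
        have h2 := hlim n (by omega)
        have hbd : IsBoundedUnder (· ≥ ·) (𝓝[>] (0:ℝ)) (fun ε => p ε (c n) (c (n+1))) := by
          refine ⟨0, ?_⟩
          rw [eventually_map]
          filter_upwards [hev] with ε hε
          rw [hp ε hε]; exact ENNReal.toReal_nonneg
        obtain ⟨b, hb0, hb⟩ := exists_between h2
        have h3 := eventually_lt_of_lt_liminf hb hbd
        refine ⟨min C b, lt_min hC hb0, ?_⟩
        filter_upwards [h1, h3] with ε h4 h5 k hk
        rcases Nat.lt_succ_iff_lt_or_eq.1 hk with h6 | h6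
        · exact (min_le_left _ _).trans (h4 k h6)
        · subst h6; exact (min_le_right _ _).trans h5.le
    exact this N le_rfl
  have hIe : ∀ s : ℝ, 0 ≤ s → ∀ ε i, Integrable (fun ω => Real.exp (-(s * κ ε 1 ω))) (Pstart ε i) := by
    intro s hs ε i
    have := (hmeas ε 1).2.1
    refine Integrable.of_bound (C := 1) (by fun_prop) (ae_of_all _ fun ω => ?_)
    rw [Real.norm_eq_abs, abs_of_pos (Real.exp_pos _), Real.exp_le_one_iff]
    have := mul_nonneg hs (hκnn ε 1 ω)
    linarith
  have hphile : ∀ s : ℝ, 0 ≤ s → ∀ ε i, ∫ ω, Real.exp (-(s * κ ε 1 ω)) ∂(Pstart ε i) ≤ 1 := by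
    intro s hs ε i
    have : ∫ ω, Real.exp (-(s * κ ε 1 ω)) ∂(Pstart ε i) ≤ ∫ ω, (1:ℝ) ∂(Pstart ε i) := by
      refine integral_mono (hIe s hs ε i) (integrable_const _) fun ω => ?_
      have := mul_nonneg hs (hκnn ε 1 ω)
      simp only [Real.exp_le_one_iff]
      linarith
    simpa using this
  have hphi : ∀ i : Fin m, ∀ s : ℝ, 0 ≤ s →
      Tendsto (fun ε => ∫ ω, Real.exp (-(s * κ ε 1 ω)) ∂(Pstart ε i)) (𝓝[>] (0:ℝ)) (𝓝 1) := by
    intro i s hs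
    rcases hs.eq_or_lt with rfl | hs'
    · simp
    set L := ∫ x, Real.exp (-(s * x)) ∂μ with hL
    have hLpos : 0 < L := by
      refine integral_exp_pos ?_
      refine Integrable.of_bound (C := 1) (by fun_prop) ?_
      have : ∀ᵐ x ∂μ, 0 ≤ x := by
        rw [ae_iff]; simpa [Iio] using hμnn
      filter_upwards [this] with x hx
      rw [Real.norm_eq_abs, abs_of_pos (Real.exp_pos _), Real.exp_le_one_iff]
      have := mul_nonneg hs hx
      linarith
    have hLe := (hconv s hs').eventually (eventually_ge_nhds (show L / 2 < L by linarith))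
    set K : ℝ := (2 * N + 1) / (C ^ (2 * N) * (L / 2)) with hK
    have hrt : Tendsto (fun ε => 1 - K * ∑ i, rareP Pstart ζ ε i) (𝓝[>] (0:ℝ)) (𝓝 1) := by
      have := ((tendsto_finsetSum Finset.univ fun i _ => hA2 i).const_mul K).const_sub 1
      simpa using this
    refine tendsto_of_tendsto_of_tendsto_of_le_of_le' hrt tendsto_const_nhds ?_
      (Eventually.of_forall fun ε => hphile s hs ε i)
    filter_upwards [hev, hring, hLe] with ε hε hrg hLε
    have kb := key_bound (η := η ε) (κ := κ ε) (ζ := ζ ε) (P := Pstart ε) (Q := Q ε) ζ κ ε rfl rfl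
      (hprob ε) (hMRP ε hε) (hmeas ε) (hκnn ε) s hs (p ε) (hp ε hε) C (∑ i, rareP Pstart ζ ε i) N hN c
      hc0 hcov hC hrg (hA1 ε hε)
      (fun i => Finset.single_le_sum (f := fun i => rareP Pstart ζ ε i)
        (fun _ _ => ENNReal.toReal_nonneg) (Finset.mem_univ i))
      (q ε) (Pq ε) (hq ε hε) (hmix ε hε) i
    set θ := 1 - ∫ ω, Real.exp (-(s * κ ε 1 ω)) ∂(Pstart ε i) with hθ
    have hθ0 : 0 ≤ θ := sub_nonneg.2 (hphile s hs ε i)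
    have h1 : C ^ (2 * N) * θ * (L / 2) ≤ (2 * N + 1) * ∑ i, rareP Pstart ζ ε i :=
      (mul_le_mul_of_nonneg_left hLε (by positivity)).trans kb
    have h2 : θ ≤ K * ∑ i, rareP Pstart ζ ε i := by
      rw [hK, div_mul_eq_mul_div, le_div_iff₀ (by positivity)]
      linarith
    linarith
  refine ⟨fun i δ hδ => ?_, hphi⟩
  have hd : 0 < 1 - Real.exp (-δ) := by
    have : Real.exp (-δ) < 1 := by rw [Real.exp_lt_one_iff]; linarith
    linarith
  have ht : Tendsto (fun ε => (1 - ∫ ω, Real.exp (-(1 * κ ε 1 ω)) ∂(Pstart ε i)) / (1 - Real.exp (-δ)))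
      (𝓝[>] (0:ℝ)) (𝓝 0) := by
    have := ((hphi i 1 zero_le_one).const_sub 1).div_const (1 - Real.exp (-δ))
    simpa using this
  refine squeeze_zero (fun _ => ENNReal.toReal_nonneg) (fun ε => ?_) ht
  rw [le_div_iff₀ hd]
  have hset : MeasurableSet {ω | δ < κ ε 1 ω} := (hmeas ε 1).2.1 measurableSet_Ioi
  have hi := hIe 1 zero_le_one ε i
  have h1 : ∫ ω, Real.exp (-(1 * κ ε 1 ω)) ∂(Pstart ε i) ≤
      ∫ ω, (1 - indicator {ω | δ < κ ε 1 ω} (fun _ => 1 - Real.exp (-δ)) ω) ∂(Pstart ε i) := by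
    refine integral_mono hi
      ((integrable_const _).sub ((integrable_const _).indicator hset)) fun ω => ?_
    by_cases hω : δ < κ ε 1 ω
    · simp only [one_mul]
      rw [indicator_of_mem (by exact hω)]
      have : Real.exp (-(κ ε 1 ω)) ≤ Real.exp (-δ) := Real.exp_le_exp.2 (by linarith)
      linarith
    · simp only [one_mul]
      rw [indicator_of_notMem (by exact hω), sub_zero, Real.exp_le_one_iff]
      have := hκnn ε 1 ω
      linarith
  rw [integral_sub (integrable_const _) ((integrable_const _).indicator hset),
    integral_indicator hset] at h1
  simp only [integral_const, smul_eq_mul, mul_one, measureReal_restrict_apply MeasurableSet.univ,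
    univ_inter, probReal_univ] at h1
  change _ ≤ 1 - (Pstart ε i {ω | δ < κ ε 1 ω}).toReal * _ at h1
  linarith
end
end
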